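/- arXiv:2506.22667 — 2 statements merged into one kernel-verified Lean document; each statement's English description precedes it below -/
import Mathlib

section
/- Let C₁, C₂ > 0. There is a constant C = C(C₁, C₂) such that for all X ≥ 3, all q₀, q₁ ∈ (ℤ/8ℤ)^*, all odd integers 1 ≤ r₀, r₁ ≤ (log X)^{C₁}, and all integers 1 ≤ c₀, c₁ ≤ (log X)^{C₂}: | ∑∑_{‖n₀c₀, n₁c₁‖ ≤ X, gcd(n_i, r_i) = 1 and n_i ≡ q_i (mod 8) for i = 0,1} 1/(‖n₀c₀, n₁c₁‖² τ(n₀) τ(n₁)) − 𝔖₁(r₀, r₁) (log log X)/(c₀ c₁) | ≤ C · τ(r₀) τ(r₁) √(log log X)/(c₀ c₁), where 𝔖₁(r₀, r₁) := 2 f₀² / ( φ(8)² (∏_{p | 2r₀} f_p)(∏_{p | 2r₁} f_p) ) and φ(8) = 4. -/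
/-!
Write `α(n) = 1_{(n,r₀)=1, n ≡ q₀ (8)}/τ(n)` and `β` similarly. The sharply truncated sum is compared
with the smoothed sum `∑ α(n₀) β(n₁) max(n₀c₀, n₁c₁)^{-2σ}`, `σ = 1 + ε`.

Since `e^{-σ|u|}` is the Fourier transform of `(σ/π)/(σ²+t²)`, evaluation at
`u = log(n₀c₀/n₁c₁)` turns the smoothed sum into
`(σ/π) ∫ D_α(s) c₀^{-s} · conj(D_β(s) c₁^{-s}) |s|^{-2} dt` on the line `s = σ + it` (`hasSum_tm`),
where `D_α`, `D_β` are the Dirichlet series of `α`, `β`.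

Detecting the residue class by characters modulo `8`, each `D` becomes a combination of the series
`P(χ, r, s) = ∑_{(n,r)=1} χ(n) τ(n)⁻¹ n^{-s}`. Its Euler factors are `g(χ(p)p^{-s})` with
`g(z) = ∑ zᵉ/(e+1)`, and `g(z)²(1-z) = 1 + O(z²)`; hence `|P|² ≪ τ(r)|L(s,χ)|` (`norm_P_sq_le`), and
`L(s,χ) = O(|s|^{1/2})` up to the pole `1/(2(s-1))` of the principal character. The principal
character moreover satisfies `|Q(s)|² = π f₀²/|s-1| + O(1)` for the full series
`Q(s) = ∑ τ(n)⁻¹ n^{-s}` (`abs_Q_sq_sub_le`), and the factors removed at `2r` vary by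
`O(τ(r) |s-1| log 2r)`. Nonprincipal characters cost only `O(|s-1|^{-1/2})`.

Consequently, if `Λ` bounds `log 2rᵢ` and `log cᵢ`, then `c₀c₁σ` times the integrand is `M/|s-1|` plus an
acceptable error for `|t| ≤ 1/Λ`, is `O(τ(r₀)τ(r₁)/|t|)` for `1/Λ ≤ |t| ≤ 1`, and is
`O(τ(r₀)τ(r₁)|t|^{-3/2})` beyond. Integrating, the smoothed sum times `c₀c₁` equals
`𝔖₁ log(1/ε) + O(τ(r₀)τ(r₁)(1 + log Λ))` (`smoothed`).

Because the terms are nonnegative, Rankin's trick with `ε = 1/(Y log X)` for the upper bound and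
`ε = Y/log X` for the lower bound, `Y = 1 + log log X`, gives the same asymptotics with
`log(1/ε)` replaced by `log log X` for the truncated sum (`truncated`). Here `Λ ≍ 1 + log log X`
is admissible, so the error is `O(τ(r₀)τ(r₁)(1 + log(1 + log log X)))`, which is smaller than required.
-/

open Finset

/-- `f_p = 1 + ∑_{j ≥ 1} 1/((j+1) p^j)`. -/
noncomputable def fP (p : ℕ) : ℝ :=
  1 + ∑' j : ℕ, 1 / (((j : ℝ) + 2) * (p : ℝ) ^ (j + 1))

/-- `f₀ = (1/√π) ∏_p f_p (1 − 1/p)^{1/2}`. -/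
noncomputable def f0 : ℝ :=
  (1 / Real.sqrt Real.pi) * ∏' p : Nat.Primes, fP p * (1 - 1 / (p : ℝ)) ^ ((1:ℝ)/2)

/-- `𝔖₁(r₀, r₁) = 2 f₀² / (φ(8)² (∏_{p|2r₀} f_p)(∏_{p|2r₁} f_p))`. -/
noncomputable def S1 (r₀ r₁ : ℕ) : ℝ :=
  2 * f0 ^ 2 /
    ((Nat.totient 8 : ℝ) ^ 2 * (∏ p ∈ (2 * r₀).primeFactors, fP p) *
      (∏ p ∈ (2 * r₁).primeFactors, fP p))

namespace Sum9

/-! ### The local Euler factors -/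

/-- The local series `g(z) = ∑ zᵉ/(e+1) = -log(1-z)/z`, so that `g(1/p) = f_p`. -/
noncomputable def g (z : ℂ) : ℂ := ∑' e : ℕ, z ^ e / ((e : ℂ) + 1)

/-- The quadratic remainder of `g`: `g(z) = 1 + z/2 + z² u(z)`. -/
noncomputable def u (z : ℂ) : ℂ := ∑' e : ℕ, z ^ e / ((e : ℂ) + 3)

lemma norm_natCast_add (e m : ℕ) : ‖(e : ℂ) + (m : ℂ)‖ = (e : ℝ) + m := by
  rw [← Nat.cast_add, Complex.norm_natCast]; push_cast; ring

lemma norm_term_le {z : ℂ} (hz : ‖z‖ ≤ 1 / 2) (m : ℕ) (hm : 1 ≤ m) (e : ℕ) :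
    ‖z ^ e / ((e : ℂ) + (m : ℂ))‖ ≤ (1 / 2) ^ e := by
  have hm' : (1 : ℝ) ≤ m := by exact_mod_cast hm
  rw [norm_div, norm_natCast_add, norm_pow]
  have h1 : ‖z‖ ^ e ≤ (1 / 2) ^ e := by gcongr
  have h2 : (1 : ℝ) ≤ (e : ℝ) + m := by
    have : (0 : ℝ) ≤ e := by positivity
    linarith
  exact (div_le_self (by positivity) h2).trans h1

lemma summable_term {z : ℂ} (hz : ‖z‖ ≤ 1 / 2) (m : ℕ) (hm : 1 ≤ m) :
    Summable fun e : ℕ => z ^ e / ((e : ℂ) + (m : ℂ)) :=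
  Summable.of_norm_bounded summable_geometric_two (norm_term_le hz m hm)

lemma g_eq {z : ℂ} (hz : ‖z‖ ≤ 1 / 2) : g z = 1 + z / 2 + z ^ 2 * u z := by
  have hs := summable_term hz 1 le_rfl
  have h := hs.sum_add_tsum_nat_add 2
  simp only [Nat.cast_one] at h
  rw [g, ← h, u, ← tsum_mul_left]
  simp only [sum_range_succ, sum_range_zero]
  congr 1
  · norm_num
  · congr 1
    ext e
    push_cast
    rw [pow_add]
    ring

lemma norm_u_le {z : ℂ} (hz : ‖z‖ ≤ 1 / 2) : ‖u z‖ ≤ 2 := by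
  have := tsum_of_norm_bounded hasSum_geometric_two (norm_term_le hz 3 (by norm_num))
  simpa [u] using this

lemma norm_pow_sub_pow_le {z w : ℂ} (hz : ‖z‖ ≤ 1 / 2) (hw : ‖w‖ ≤ 1 / 2) (e : ℕ) :
    ‖z ^ e - w ^ e‖ ≤ (e : ℝ) * (2 * (1 / 2) ^ e * ‖z - w‖) := by
  induction e with
  | zero => simp
  | succ e ih =>
    have : z ^ (e + 1) - w ^ (e + 1) = z * (z ^ e - w ^ e) + (z - w) * w ^ e := by ring
    rw [this]
    have hwe : ‖w ^ e‖ ≤ (1 / 2) ^ e := by rw [norm_pow]; gcongr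
    calc _ ≤ ‖z * (z ^ e - w ^ e)‖ + ‖(z - w) * w ^ e‖ := norm_add_le _ _
      _ ≤ (1 / 2) * ((e : ℝ) * (2 * (1 / 2) ^ e * ‖z - w‖)) + ‖z - w‖ * (1 / 2) ^ e := by
        rw [norm_mul, norm_mul]; gcongr
      _ = _ := by push_cast; ring

lemma norm_tsum_sub_le {z w : ℂ} (hz : ‖z‖ ≤ 1 / 2) (hw : ‖w‖ ≤ 1 / 2) (m : ℕ) (hm : 1 ≤ m) :
    ‖∑' e : ℕ, z ^ e / ((e : ℂ) + (m : ℂ)) - ∑' e : ℕ, w ^ e / ((e : ℂ) + (m : ℂ))‖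
      ≤ 4 * ‖z - w‖ := by
  rw [← (summable_term hz m hm).tsum_sub (summable_term hw m hm)]
  have h : HasSum (fun e : ℕ => (1 / 2 : ℝ) ^ e * (2 * ‖z - w‖)) (2 * (2 * ‖z - w‖)) :=
    hasSum_geometric_two.mul_right _
  have := tsum_of_norm_bounded h (f := fun e : ℕ => z ^ e / ((e : ℂ) + (m : ℂ))
    - w ^ e / ((e : ℂ) + (m : ℂ))) ?_
  · linarith
  intro e
  have hm' : (1 : ℝ) ≤ m := by exact_mod_cast hm
  rw [← sub_div, norm_div, norm_natCast_add, div_le_iff₀ (by positivity)]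
  refine (norm_pow_sub_pow_le hz hw e).trans ?_
  have : (0 : ℝ) ≤ (1 / 2) ^ e * (2 * ‖z - w‖) * m := by positivity
  nlinarith

lemma norm_u_sub_le {z w : ℂ} (hz : ‖z‖ ≤ 1 / 2) (hw : ‖w‖ ≤ 1 / 2) :
    ‖u z - u w‖ ≤ 4 * ‖z - w‖ := by
  simpa [u] using norm_tsum_sub_le hz hw 3 (by norm_num)

lemma norm_g_sub_le {z w : ℂ} (hz : ‖z‖ ≤ 1 / 2) (hw : ‖w‖ ≤ 1 / 2) :
    ‖g z - g w‖ ≤ 4 * ‖z - w‖ := by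
  simpa [g] using norm_tsum_sub_le hz hw 1 (by norm_num)

lemma norm_g_sub_one_le {z : ℂ} (hz : ‖z‖ ≤ 1 / 2) : ‖g z - 1‖ ≤ 1 / 2 := by
  have hs := summable_term hz 1 le_rfl
  have h := hs.sum_add_tsum_nat_add 1
  simp only [Nat.cast_one, range_one, sum_singleton, pow_zero, Nat.cast_zero, zero_add, div_one]
    at h
  have h2 : g z - 1 = ∑' e : ℕ, z ^ (e + 1) / (((e + 1 : ℕ) : ℂ) + 1) := by
    rw [g, ← h]; ring
  rw [h2]
  have h3 : HasSum (fun e : ℕ => (1 / 2 : ℝ) ^ e * (1 / 4)) (2 * (1 / 4)) :=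
    hasSum_geometric_two.mul_right _
  have := tsum_of_norm_bounded h3 (f := fun e : ℕ => z ^ (e + 1) / (((e + 1 : ℕ) : ℂ) + 1)) ?_
  · linarith
  intro e
  have := norm_natCast_add (e + 1) 1
  rw [Nat.cast_one] at this
  rw [norm_div, this, norm_pow, div_le_iff₀ (by positivity)]
  have h1 : ‖z‖ ^ (e + 1) ≤ (1 / 2) ^ (e + 1) := by gcongr
  refine h1.trans ?_
  push_cast
  have : (0 : ℝ) ≤ (1 / 2) ^ e := by positivity
  rw [pow_succ]
  nlinarith [this, mul_nonneg this (Nat.cast_nonneg (α := ℝ) e)]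

lemma half_le_norm_g {z : ℂ} (hz : ‖z‖ ≤ 1 / 2) : 1 / 2 ≤ ‖g z‖ := by
  have h := norm_g_sub_one_le hz
  have h2 : ‖(1 : ℂ)‖ ≤ ‖g z‖ + ‖g z - 1‖ := by
    have := norm_sub_le (g z) (g z - 1)
    simpa using this
  rw [norm_one] at h2
  linarith

lemma g_ne_zero {z : ℂ} (hz : ‖z‖ ≤ 1 / 2) : g z ≠ 0 := by
  have := half_le_norm_g hz
  intro h
  rw [h, norm_zero] at this
  linarith

lemma norm_g_inv_le {z : ℂ} (hz : ‖z‖ ≤ 1 / 2) : ‖(g z)⁻¹‖ ≤ 2 := by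
  rw [norm_inv]
  have := half_le_norm_g hz
  rw [inv_le_comm₀ (by linarith) (by norm_num)]
  linarith

lemma norm_g_inv_sub_le {z w : ℂ} (hz : ‖z‖ ≤ 1 / 2) (hw : ‖w‖ ≤ 1 / 2) :
    ‖(g z)⁻¹ - (g w)⁻¹‖ ≤ 16 * ‖z - w‖ := by
  have h : (g z)⁻¹ - (g w)⁻¹ = (g z)⁻¹ * (g w - g z) * (g w)⁻¹ := by
    field_simp [g_ne_zero hz, g_ne_zero hw]
  rw [h, norm_mul, norm_mul]
  calc _ ≤ 2 * (4 * ‖w - z‖) * 2 := by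
        gcongr
        · exact norm_g_inv_le hz
        · exact norm_g_sub_le hw hz
        · exact norm_g_inv_le hw
    _ = _ := by rw [norm_sub_rev]; ring

/-- The local factor `k(z) = g(z)² (1 - z)`; it is `1 + O(z²)`, which makes the
products over primes below converge absolutely up to and on the line `Re s = 1`. -/
noncomputable def k (z : ℂ) : ℂ := g z ^ 2 * (1 - z)

/-- The cofactor in `k(z) = 1 + z² m(z)`. -/
noncomputable def m (z : ℂ) : ℂ := -1 + (1 - z) * (1 / 4 + 2 * u z + z * u z + z ^ 2 * u z ^ 2)

lemma k_eq {z : ℂ} (hz : ‖z‖ ≤ 1 / 2) : k z = 1 + z ^ 2 * m z := by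
  rw [k, g_eq hz, m]; ring

lemma norm_m_le {z : ℂ} (hz : ‖z‖ ≤ 1 / 2) : ‖m z‖ ≤ 12 := by
  have hu := norm_u_le hz
  have h1 : ‖1 - z‖ ≤ 3 / 2 := (norm_sub_le _ _).trans (by rw [norm_one]; linarith)
  have h2 : ‖1 / 4 + 2 * u z + z * u z + z ^ 2 * u z ^ 2‖ ≤ 1 / 4 + 2 * 2 + 1 / 2 * 2
      + (1 / 2) ^ 2 * 2 ^ 2 := by
    refine (norm_add₄_le).trans ?_
    rw [norm_mul, norm_mul, norm_mul, norm_pow, norm_pow]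
    have : ‖(1 / 4 : ℂ)‖ = 1 / 4 := by norm_num
    rw [this, Complex.norm_two]
    gcongr
  rw [m]
  refine (norm_add_le _ _).trans ?_
  rw [norm_mul, norm_neg, norm_one]
  have : ‖1 - z‖ * ‖1 / 4 + 2 * u z + z * u z + z ^ 2 * u z ^ 2‖ ≤ 3 / 2 * (1 / 4 + 2 * 2 + 1 / 2 * 2
      + (1 / 2) ^ 2 * 2 ^ 2) := by gcongr
  norm_num at this ⊢
  linarith

/-- Lipschitz estimate for a product of two bounded quantities. -/
lemma norm_mul_sub_mul_le {R : Type*} [NormedRing R] {a b a₁ b₁ : R} {A B α β : ℝ}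
    (ha : ‖a₁‖ ≤ A) (hb : ‖b‖ ≤ B) (hα : ‖a - a₁‖ ≤ α) (hβ : ‖b - b₁‖ ≤ β) :
    ‖a * b - a₁ * b₁‖ ≤ α * B + A * β := by
  have h : a * b - a₁ * b₁ = (a - a₁) * b + a₁ * (b - b₁) := by noncomm_ring
  rw [h]
  refine (norm_add_le _ _).trans ?_
  have hA : 0 ≤ A := (norm_nonneg _).trans ha
  have hα0 : 0 ≤ α := (norm_nonneg _).trans hα
  exact add_le_add ((norm_mul_le _ _).trans (by gcongr)) ((norm_mul_le _ _).trans (by gcongr))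

lemma norm_m_sub_le {z w : ℂ} (hz : ‖z‖ ≤ 1 / 2) (hw : ‖w‖ ≤ 1 / 2) :
    ‖m z - m w‖ ≤ 60 * ‖z - w‖ := by
  set d := ‖z - w‖ with hd
  have hd0 : 0 ≤ d := norm_nonneg _
  have huz := norm_u_le hz
  have huw := norm_u_le hw
  have hul := norm_u_sub_le hz hw
  rw [← hd] at hul
  have hzd : ‖z - w‖ ≤ d := le_rfl
  have h1 : ‖z * u z - w * u w‖ ≤ d * 2 + 1 / 2 * (4 * d) := norm_mul_sub_mul_le hw huz hzd hul
  have hzu : ‖z * u z‖ ≤ 1 / 2 * 2 := by rw [norm_mul]; gcongr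
  have hwu : ‖w * u w‖ ≤ 1 / 2 * 2 := by rw [norm_mul]; gcongr
  have h2 := norm_mul_sub_mul_le hwu hzu h1 h1
  set X := fun y : ℂ => 1 / 4 + 2 * u y + y * u y + y ^ 2 * u y ^ 2 with hX
  have hXz : ‖X z‖ ≤ 7 := by
    refine (norm_add₄_le).trans ?_
    rw [norm_mul, norm_mul, norm_mul, norm_pow, norm_pow]
    have : ‖(1 / 4 : ℂ)‖ = 1 / 4 := by norm_num
    rw [this, Complex.norm_two]
    calc _ ≤ 1 / 4 + 2 * 2 + 1 / 2 * 2 + (1 / 2) ^ 2 * 2 ^ 2 := by gcongr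
      _ ≤ (7 : ℝ) := by norm_num
  have hXl : ‖X z - X w‖ ≤ 20 * d := by
    have : X z - X w = 2 * (u z - u w) + (z * u z - w * u w)
        + (z * u z * (z * u z) - w * u w * (w * u w)) := by simp only [hX]; ring
    rw [this]
    refine (norm_add₃_le).trans ?_
    rw [norm_mul, Complex.norm_two]
    linarith
  have h3 : ‖(1 : ℂ) - w‖ ≤ 3 / 2 := (norm_sub_le _ _).trans (by rw [norm_one]; linarith)
  have h4 : ‖(1 - z) - (1 - w)‖ ≤ d := by
    rw [hd, ← norm_neg]; apply le_of_eq; congr 1; ring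
  have h5 := norm_mul_sub_mul_le h3 hXz h4 hXl
  have : m z - m w = (1 - z) * X z - (1 - w) * X w := by simp only [m, hX]; ring
  rw [this]
  linarith

lemma norm_k_le {z : ℂ} (hz : ‖z‖ ≤ 1 / 2) : ‖k z‖ ≤ 1 + 12 * ‖z‖ ^ 2 := by
  rw [k_eq hz]
  refine (norm_add_le _ _).trans ?_
  rw [norm_one, norm_mul, norm_pow]
  nlinarith [norm_m_le hz, sq_nonneg ‖z‖]

lemma norm_k_sub_one_le {z : ℂ} (hz : ‖z‖ ≤ 1 / 2) : ‖k z - 1‖ ≤ 12 * ‖z‖ ^ 2 := by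
  rw [k_eq hz, add_sub_cancel_left, norm_mul, norm_pow]
  nlinarith [norm_m_le hz, sq_nonneg ‖z‖]

lemma norm_k_sub_le {z w : ℂ} (hz : ‖z‖ ≤ 1 / 2) (hw : ‖w‖ ≤ 1 / 2) :
    ‖k z - k w‖ ≤ 42 * (‖z‖ + ‖w‖) * ‖z - w‖ := by
  have h : k z - k w = (z ^ 2 * m z - w ^ 2 * m w) := by rw [k_eq hz, k_eq hw]; ring
  have h1 : ‖z ^ 2 - w ^ 2‖ ≤ (‖z‖ + ‖w‖) * ‖z - w‖ := by
    rw [sq_sub_sq, norm_mul]; gcongr; exact norm_add_le _ _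
  have h2 : ‖w ^ 2‖ ≤ 1 / 2 * ‖w‖ := by rw [norm_pow, sq]; gcongr
  rw [h]
  refine (norm_mul_sub_mul_le h2 (norm_m_le hz) h1 (norm_m_sub_le hz hw)).trans ?_
  have : 0 ≤ ‖z‖ * ‖z - w‖ := by positivity
  nlinarith

/-! ### `L`-series modulo `8` near `Re s = 1` -/

lemma norm_exp_neg_sub_one_le {w : ℂ} (hw : 0 ≤ w.re) : ‖Complex.exp (-w) - 1‖ ≤ ‖w‖ := by
  have hconv : Convex ℝ {z : ℂ | 0 ≤ z.re} := convex_halfSpace_re_ge 0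
  have h := hconv.norm_image_sub_le_of_norm_hasDerivWithin_le (f := fun z : ℂ => Complex.exp (-z))
    (f' := fun z => Complex.exp (-z) * (-1)) (C := 1) (x := 0) (y := w)
    (fun z _ => ((hasDerivAt_id z).neg.cexp).hasDerivWithinAt)
    (fun z hz => by
      rw [norm_mul, norm_neg, norm_one, mul_one, Complex.norm_exp, Real.exp_le_one_iff]
      simpa using hz) (by simp) hw
  simpa using h

lemma norm_cpow_neg_sub_one_le {x : ℝ} (hx : 1 ≤ x) {z : ℂ} (hz : 0 ≤ z.re) :
    ‖(x : ℂ) ^ (-z) - 1‖ ≤ ‖z‖ * Real.log x := by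
  have hx0 : (x : ℂ) ≠ 0 := by exact_mod_cast (by linarith : x ≠ 0)
  have hl : 0 ≤ Real.log x := Real.log_nonneg hx
  rw [Complex.cpow_def_of_ne_zero hx0, ← Complex.ofReal_log (by linarith), mul_neg]
  refine (norm_exp_neg_sub_one_le ?_).trans_eq ?_
  · rw [Complex.re_ofReal_mul]; positivity
  · rw [norm_mul, Complex.norm_real, Real.norm_of_nonneg hl, mul_comm]

/-- The trivial bound and the derivative bound for the variation of `x^{-s}`. -/
lemma norm_cpow_sub_cpow_le {n x : ℝ} (hn : 1 ≤ n) (hx : n ≤ x) {s : ℂ} (hs : 1 < s.re) :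
    ‖(n : ℂ) ^ (-s) - (x : ℂ) ^ (-s)‖ ≤ 2 / n ∧
    ‖(n : ℂ) ^ (-s) - (x : ℂ) ^ (-s)‖ ≤ ‖s‖ * (x - n) / n ^ 2 := by
  have hn0 : 0 < n := by linarith
  have hx0 : 0 < x := by linarith
  have key : ∀ y : ℝ, n ≤ y → ‖(y : ℂ) ^ (-s)‖ ≤ 1 / n := by
    intro y hy
    rw [Complex.norm_cpow_eq_rpow_re_of_pos (by linarith), Complex.neg_re,
      Real.rpow_neg (by linarith), one_div]
    apply inv_anti₀ hn0
    calc n ≤ y := hy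
      _ = y ^ (1 : ℝ) := (Real.rpow_one y).symm
      _ ≤ y ^ s.re := Real.rpow_le_rpow_of_exponent_le (by linarith) hs.le
  constructor
  · refine (norm_sub_le _ _).trans ?_
    have h1 := key n le_rfl
    have h2 := key x hx
    calc _ ≤ 1 / n + 1 / n := add_le_add h1 h2
      _ = _ := by ring
  · have h1 : (x : ℂ) ^ (-s) = (n : ℂ) ^ (-s) * ((x / n : ℝ) : ℂ) ^ (-s) := by
      rw [← Complex.mul_cpow_ofReal_nonneg hn0.le (by positivity), ← Complex.ofReal_mul]
      congr 2
      field_simp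
    have hxn : 1 ≤ x / n := by rw [le_div_iff₀ hn0]; linarith
    have h2 := norm_cpow_neg_sub_one_le hxn (z := s) (by linarith)
    have h3 : Real.log (x / n) ≤ x / n - 1 := Real.log_le_sub_one_of_pos (by positivity)
    have h4 : (n : ℂ) ^ (-s) - (x : ℂ) ^ (-s)
        = - ((n : ℂ) ^ (-s) * (((x / n : ℝ) : ℂ) ^ (-s) - 1)) := by rw [h1]; ring
    rw [h4, norm_neg, norm_mul]
    calc _ ≤ 1 / n * (‖s‖ * (x / n - 1)) := by
          gcongr
          · exact key n le_rfl
          · exact h2.trans (by gcongr)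
      _ = _ := by field_simp

/-- Comparison of `n^{-s}` with the mean of `x^{-s}` over `[n, n+8]`. The exponent `1/2` of `|s|`
comes from taking the geometric mean of the trivial bound and the derivative bound; any exponent
below `1` suffices for the application. -/
lemma norm_cpow_sub_mean_le {n : ℝ} (hn : 1 ≤ n) {s : ℂ} (hs : 1 < s.re) :
    ‖(n : ℂ) ^ (-s) - ((n : ℂ) ^ (1 - s) - ((n + 8 : ℝ) : ℂ) ^ (1 - s)) / (8 * (s - 1))‖
      ≤ 4 * √‖s‖ * n ^ (-(3 / 2) : ℝ) := by
  have hn0 : 0 < n := by linarith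
  have hs1 : s - 1 ≠ 0 := by
    intro h
    have := congrArg Complex.re h
    simp at this
    linarith
  have h0 : (0 : ℝ) ∉ Set.uIcc n (n + 8) := by
    rw [Set.uIcc_of_le (by linarith)]; intro h; linarith [h.1]
  have hinteg : ∫ x in n..(n + 8), (x : ℂ) ^ (-s)
      = ((n : ℂ) ^ (1 - s) - ((n + 8 : ℝ) : ℂ) ^ (1 - s)) / (s - 1) := by
    rw [integral_cpow (Or.inr ⟨fun h => hs1 (by linear_combination -h), h0⟩)]
    rw [show -s + 1 = 1 - s by ring, ← neg_sub s 1, div_neg, ← neg_div, neg_sub]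
  have hii : IntervalIntegrable (fun x : ℝ => (x : ℂ) ^ (-s)) MeasureTheory.volume n (n + 8) :=
    intervalIntegral.intervalIntegrable_cpow (Or.inr h0)
  have heq : (n : ℂ) ^ (-s) - ((n : ℂ) ^ (1 - s) - ((n + 8 : ℝ) : ℂ) ^ (1 - s)) / (8 * (s - 1))
      = (1 / 8 : ℂ) * ∫ x in n..(n + 8), ((n : ℂ) ^ (-s) - (x : ℂ) ^ (-s)) := by
    rw [intervalIntegral.integral_sub (by simp) hii, hinteg, intervalIntegral.integral_const]
    rw [add_sub_cancel_left, Complex.real_smul]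
    push_cast
    field_simp
  rw [heq, norm_mul]
  have hb : ∀ x ∈ Set.uIoc n (n + 8), ‖(n : ℂ) ^ (-s) - (x : ℂ) ^ (-s)‖
      ≤ 4 * √‖s‖ * n ^ (-(3 / 2) : ℝ) := by
    intro x hx
    rw [Set.uIoc_of_le (by linarith)] at hx
    obtain ⟨h1, h2⟩ := norm_cpow_sub_cpow_le hn hx.1.le hs
    have h3 : ‖(n : ℂ) ^ (-s) - (x : ℂ) ^ (-s)‖ ≤ 8 * ‖s‖ / n ^ 2 := by
      refine h2.trans ?_
      gcongr ?_ / _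
      nlinarith [hx.2, norm_nonneg s]
    have hr : 4 * √‖s‖ * n ^ (-(3 / 2) : ℝ) = √(16 * ‖s‖ / n ^ 3) := by
      rw [Real.sqrt_div' _ (by positivity), Real.sqrt_mul (by norm_num),
        show (16 : ℝ) = 4 ^ 2 by norm_num, Real.sqrt_sq (by norm_num), Real.rpow_neg hn0.le,
        div_eq_mul_inv, Real.sqrt_eq_rpow (n ^ 3), ← Real.rpow_natCast_mul hn0.le]
      norm_num [div_eq_mul_inv]
    rw [hr]
    apply Real.le_sqrt_of_sq_le
    rw [sq]
    calc _ ≤ (2 / n) * (8 * ‖s‖ / n ^ 2) := by gcongr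
      _ = _ := by ring
  have := intervalIntegral.norm_integral_le_of_norm_le_const hb
  rw [add_sub_cancel_left] at this
  norm_num at this ⊢
  linarith

/-- The value of `∑ n^{-3/2}`, the constant in the bounds for `L`-series near `Re s = 1`. -/
noncomputable def Z32 : ℝ := ∑' n : ℕ, ((n : ℝ) + 1) ^ (-(3 / 2) : ℝ)

lemma summable_Z32 : Summable fun n : ℕ => ((n : ℝ) + 1) ^ (-(3 / 2) : ℝ) := by
  have := (summable_nat_add_iff 1).mpr (Real.summable_nat_rpow.mpr (by norm_num : (-(3 / 2) : ℝ) < -1))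
  simpa using this

lemma Z32_nonneg : 0 ≤ Z32 := tsum_nonneg fun n => by positivity

lemma summable_progression {s : ℂ} (hs : 1 < s.re) (b : ℕ) :
    Summable fun j : ℕ => ((b + 8 * j : ℕ) : ℂ) ^ (-s) := by
  have h : Summable fun n : ℕ => (n : ℂ) ^ (-s) := by
    have := Complex.summable_one_div_nat_cpow.mpr hs
    simpa [Complex.cpow_neg] using this
  exact h.comp_injective (i := fun j : ℕ => b + 8 * j) (fun x y hxy => by simp at hxy; omega)

/-- `∑_{n ≡ b (8)} n^{-s} = 1/(8(s-1)) + O(|s|^{1/2})`. -/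
lemma norm_progression_le {s : ℂ} (hs : 1 < s.re) (b : ℕ) (hb : 1 ≤ b) (hb8 : b ≤ 8) :
    ‖∑' j : ℕ, ((b + 8 * j : ℕ) : ℂ) ^ (-s) - 1 / (8 * (s - 1))‖ ≤ (4 * Z32 + 1) * √‖s‖ := by
  have hs1 : s - 1 ≠ 0 := by
    intro h
    have := congrArg Complex.re h
    simp at this
    linarith
  have hns : 1 ≤ ‖s‖ := by
    have := Complex.re_le_norm s; linarith
  have hsq : 1 ≤ √‖s‖ := Real.one_le_sqrt.mpr hns
  set N : ℕ → ℝ := fun j => (b : ℝ) + 8 * j with hN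
  have hN1 : ∀ j, 1 ≤ N j := fun j => by
    have : (1 : ℝ) ≤ b := by exact_mod_cast hb
    have : (0 : ℝ) ≤ j := by positivity
    simp only [hN]; linarith
  have hNs : ∀ j, N (j + 1) = N j + 8 := fun j => by simp only [hN]; push_cast; ring
  set v : ℕ → ℂ := fun j => (N j : ℂ) ^ (1 - s) / (8 * (s - 1)) with hv
  have hv0 : Filter.Tendsto v Filter.atTop (nhds 0) := by
    have h1 : Filter.Tendsto N Filter.atTop Filter.atTop := by
      apply Filter.tendsto_atTop_add_const_left
      exact (tendsto_natCast_atTop_atTop).const_mul_atTop (by norm_num)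
    have h2 : Filter.Tendsto (fun j => ‖(N j : ℂ) ^ (1 - s)‖) Filter.atTop (nhds 0) := by
      have : (fun j => ‖(N j : ℂ) ^ (1 - s)‖) = fun j => (N j) ^ (-(s.re - 1)) := by
        ext j
        rw [Complex.norm_cpow_eq_rpow_re_of_pos (by linarith [hN1 j])]
        congr 1; simp
      rw [this]
      exact (tendsto_rpow_neg_atTop (by linarith)).comp h1
    have h3 := (tendsto_zero_iff_norm_tendsto_zero.mpr h2).div_const (8 * (s - 1))
    simpa using h3
  have hsum := summable_progression hs b
  have hD : ∀ j, ‖((b + 8 * j : ℕ) : ℂ) ^ (-s) - (v j - v (j + 1))‖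
      ≤ 4 * √‖s‖ * ((j : ℝ) + 1) ^ (-(3 / 2) : ℝ) := by
    intro j
    have h := norm_cpow_sub_mean_le (hN1 j) hs
    have e1 : ((b + 8 * j : ℕ) : ℂ) = (N j : ℂ) := by simp [hN]
    have e2 : v j - v (j + 1) = ((N j : ℂ) ^ (1 - s) - ((N j + 8 : ℝ) : ℂ) ^ (1 - s))
        / (8 * (s - 1)) := by simp only [hv, hNs]; rw [sub_div]
    rw [e1, e2]
    refine h.trans ?_
    gcongr 4 * √‖s‖ * ?_
    apply Real.rpow_le_rpow_of_nonpos (by positivity) _ (by norm_num)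
    have : (1 : ℝ) ≤ b := by exact_mod_cast hb
    have : (0 : ℝ) ≤ j := by positivity
    simp only [hN]; linarith
  have htel : HasSum (fun j => v j - v (j + 1)) (v 0) := by
    have hsD : Summable fun j : ℕ => ((b + 8 * j : ℕ) : ℂ) ^ (-s) - (v j - v (j + 1)) :=
      Summable.of_norm_bounded (summable_Z32.mul_left (4 * √‖s‖)) hD
    have hs' : Summable fun j => v j - v (j + 1) := by
      have := hsum.sub hsD
      simpa using this
    have h1 := hs'.hasSum.tendsto_sum_nat
    simp only [sum_range_sub'] at h1
    have h2 : Filter.Tendsto (fun n => v 0 - v n) Filter.atTop (nhds (v 0)) := by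
      simpa using hv0.const_sub (v 0)
    rw [← tendsto_nhds_unique h1 h2]
    exact hs'.hasSum
  have h1 : ‖∑' j : ℕ, ((b + 8 * j : ℕ) : ℂ) ^ (-s) - v 0‖ ≤ 4 * √‖s‖ * Z32 := by
    rw [← htel.tsum_eq, ← hsum.tsum_sub htel.summable]
    exact tsum_of_norm_bounded (summable_Z32.hasSum.mul_left (4 * √‖s‖)) hD
  have hb1 : (1 : ℝ) ≤ b := by exact_mod_cast hb
  have h2 : ‖v 0 - 1 / (8 * (s - 1))‖ ≤ 1 := by
    have e : v 0 - 1 / (8 * (s - 1)) = ((b : ℝ) ^ (-(s - 1)) - 1) / (8 * (s - 1)) := by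
      simp only [hv, hN, neg_sub]; push_cast; rw [sub_div]; simp
    have h := norm_cpow_neg_sub_one_le hb1 (z := s - 1) (by simp; linarith)
    have hlog : Real.log b ≤ 8 := by
      have := Real.log_le_sub_one_of_pos (by linarith : (0 : ℝ) < b)
      have : (b : ℝ) ≤ 8 := by exact_mod_cast hb8
      linarith
    rw [e, norm_div, norm_mul, div_le_one (mul_pos (by norm_num) (norm_pos_iff.mpr hs1))]
    have : ‖(8 : ℂ)‖ = 8 := by norm_num
    rw [this]
    nlinarith [norm_nonneg (s - 1)]
  calc _ ≤ ‖∑' j : ℕ, ((b + 8 * j : ℕ) : ℂ) ^ (-s) - v 0‖ + ‖v 0 - 1 / (8 * (s - 1))‖ := by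
        have := norm_add_le (∑' j : ℕ, ((b + 8 * j : ℕ) : ℂ) ^ (-s) - v 0) (v 0 - 1 / (8 * (s - 1)))
        simpa using this
    _ ≤ 4 * √‖s‖ * Z32 + 1 := add_le_add h1 h2
    _ ≤ _ := by nlinarith

/-- The constant in the bounds for `L`-series modulo `8` near `Re s = 1`. -/
noncomputable def CL : ℝ := 8 * (4 * Z32 + 1)

lemma one_le_CL : 1 ≤ CL := by have := Z32_nonneg; unfold CL; linarith

/-- Splitting into residue classes, the Dirichlet series of an `8`-periodic function has residue at
`s = 1` equal to its mean. -/
lemma norm_periodic_le {s : ℂ} (hs : 1 < s.re) (f : ℕ → ℂ) (hf : ∀ n j, f (n + 8 * j) = f n)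
    (hf1 : ∀ n, ‖f n‖ ≤ 1) :
    ‖∑' n : ℕ, f (n + 1) * ((n + 1 : ℕ) : ℂ) ^ (-s)
      - (∑ j : ZMod 8, f (j.val + 1)) / (8 * (s - 1))‖ ≤ CL * √‖s‖ := by
  have hsum : Summable fun n : ℕ => f (n + 1) * ((n + 1 : ℕ) : ℂ) ^ (-s) := by
    have h : Summable fun n : ℕ => (n : ℂ) ^ (-s) := by
      have := Complex.summable_one_div_nat_cpow.mpr hs
      simpa [Complex.cpow_neg] using this
    refine Summable.of_norm_bounded ((summable_nat_add_iff 1).mpr h).norm fun n => ?_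
    rw [norm_mul]
    exact mul_le_of_le_one_left (norm_nonneg _) (hf1 _)
  rw [Nat.sumByResidueClasses hsum 8, sum_div, ← sum_sub_distrib]
  have : ∀ j : ZMod 8, ∑' i : ℕ, f (j.val + 8 * i + 1) * ((j.val + 8 * i + 1 : ℕ) : ℂ) ^ (-s)
      - f (j.val + 1) / (8 * (s - 1)) = f (j.val + 1) *
      (∑' i : ℕ, ((j.val + 1 + 8 * i : ℕ) : ℂ) ^ (-s) - 1 / (8 * (s - 1))) := by
    intro j
    rw [mul_sub (f (j.val + 1)), mul_one_div, ← tsum_mul_left]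
    congr 2
    ext i
    rw [add_right_comm, hf]
  simp_rw [this]
  refine (norm_sum_le _ _).trans ?_
  have hj : ∀ j : ZMod 8, ‖f (j.val + 1) *
      (∑' i : ℕ, ((j.val + 1 + 8 * i : ℕ) : ℂ) ^ (-s) - 1 / (8 * (s - 1)))‖
      ≤ (4 * Z32 + 1) * √‖s‖ := by
    intro j
    rw [norm_mul]
    refine (mul_le_of_le_one_left (norm_nonneg _) (hf1 _)).trans ?_
    have := j.val_lt
    exact norm_progression_le hs _ (by omega) (by omega)
  refine (sum_le_sum fun j _ => hj j).trans_eq ?_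
  rw [sum_const, card_univ, ZMod.card, CL]
  simp
  ring

lemma norm_zeta_sub_le {s : ℂ} (hs : 1 < s.re) :
    ‖riemannZeta s - 1 / (s - 1)‖ ≤ CL * √‖s‖ := by
  have h := norm_periodic_le hs (fun _ => 1) (by simp) (by simp)
  rw [zeta_eq_tsum_one_div_nat_add_one_cpow hs]
  simp only [sum_const, card_univ, ZMod.card, one_mul] at h
  convert h using 3
  · congr 1; ext n; push_cast; rw [Complex.cpow_neg, one_div]
  · simp [div_mul_eq_div_div]

lemma LSeries_char_eq {s : ℂ} (hs : 1 < s.re) (χ : DirichletCharacter ℂ 8) :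
    LSeries (fun n : ℕ => χ n) s = ∑' n : ℕ, χ ((n + 1 : ℕ) : ZMod 8) * ((n + 1 : ℕ) : ℂ) ^ (-s) := by
  have hsum := ZMod.LSeriesSummable_of_one_lt_re χ hs
  rw [LSeries, hsum.tsum_eq_zero_add, LSeries.term_zero, zero_add]
  congr 1; ext n
  rw [LSeries.term_of_ne_zero (by omega), Complex.cpow_neg, div_eq_mul_inv]

lemma norm_LSeries_char_sub_le {s : ℂ} (hs : 1 < s.re) (χ : DirichletCharacter ℂ 8) :
    ‖LSeries (fun n : ℕ => χ n) s - (∑ j : ZMod 8, χ j) / (8 * (s - 1))‖ ≤ CL * √‖s‖ := by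
  rw [LSeries_char_eq hs]
  have h := norm_periodic_le hs (fun n => χ n) (fun n j => by
    congr 1; push_cast; rw [show (8 : ZMod 8) = 0 from rfl]; simp)
    (fun n => DirichletCharacter.norm_le_one χ _)
  convert h using 4
  rw [← Equiv.sum_comp (Equiv.addRight (1 : ZMod 8)) (fun j => χ j)]
  apply sum_congr rfl
  intro j _
  simp

lemma norm_LSeries_le_of_ne_one {s : ℂ} (hs : 1 < s.re) (χ : DirichletCharacter ℂ 8) (hχ : χ ≠ 1) :
    ‖LSeries (fun n : ℕ => χ n) s‖ ≤ CL * √‖s‖ := by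
  have := norm_LSeries_char_sub_le hs χ
  rwa [MulChar.sum_eq_zero_of_ne_one hχ, zero_div, sub_zero] at this

lemma norm_LSeries_le {s : ℂ} (hs : 1 < s.re) (χ : DirichletCharacter ℂ 8) :
    ‖LSeries (fun n : ℕ => χ n) s‖ ≤ CL * √‖s‖ + 1 / ‖s - 1‖ := by
  have h1 := norm_LSeries_char_sub_le hs χ
  have h2 : ‖(∑ j : ZMod 8, χ j) / (8 * (s - 1))‖ ≤ 1 / ‖s - 1‖ := by
    rw [norm_div, norm_mul]
    have : ‖∑ j : ZMod 8, χ j‖ ≤ 8 := by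
      refine (norm_sum_le_of_le _ fun j _ => DirichletCharacter.norm_le_one χ j).trans_eq ?_
      simp
    have h8 : ‖(8 : ℂ)‖ = 8 := by norm_num
    rw [h8, div_mul_eq_div_div]
    gcongr
    linarith
  have := norm_add_le (LSeries (fun n : ℕ => χ n) s - (∑ j : ZMod 8, χ j) / (8 * (s - 1)))
    ((∑ j : ZMod 8, χ j) / (8 * (s - 1)))
  rw [sub_add_cancel] at this
  linarith

/-! ### Euler products for `∑ χ(n) τ(n)⁻¹ n^{-s}` -/

lemma hasProd_of_eq {ι α : Type*} [CommMonoid α] [TopologicalSpace α] {f h : ι → α} {a : α}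
    (hfh : ∀ i, f i = h i) (hf : HasProd f a) : HasProd h a := by
  rwa [show h = f from (funext hfh).symm]

/-- The coefficient `χ(n) 1_{(n,r)=1} / τ(n)`. -/
noncomputable def cf {N : ℕ} (χ : DirichletCharacter ℂ N) (r n : ℕ) : ℂ :=
  if n.Coprime r then χ n / (n.divisors.card : ℂ) else 0

/-- The Dirichlet series `∑ χ(n) 1_{(n,r)=1} τ(n)⁻¹ n^{-s}`. -/
noncomputable def P {N : ℕ} (χ : DirichletCharacter ℂ N) (r : ℕ) (s : ℂ) : ℂ :=
  ∑' n : ℕ, cf χ r n * (n : ℂ) ^ (-s)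

lemma norm_cf_le {N : ℕ} (χ : DirichletCharacter ℂ N) (r n : ℕ) : ‖cf χ r n‖ ≤ 1 := by
  unfold cf
  split_ifs
  · rw [norm_div, Complex.norm_natCast]
    rcases Nat.eq_zero_or_pos n.divisors.card with h | h
    · simp [h]
    · have : (1 : ℝ) ≤ n.divisors.card := by exact_mod_cast h
      exact (div_le_self (norm_nonneg _) this).trans (DirichletCharacter.norm_le_one χ _)
  · simp

lemma summable_cpow {s : ℂ} (hs : 1 < s.re) : Summable fun n : ℕ => ‖(n : ℂ) ^ (-s)‖ := by
  have := (Complex.summable_one_div_nat_cpow.mpr hs).norm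
  simpa [Complex.cpow_neg] using this

lemma summable_cf {N : ℕ} (χ : DirichletCharacter ℂ N) (r : ℕ) {s : ℂ} (hs : 1 < s.re) :
    Summable fun n : ℕ => ‖cf χ r n * (n : ℂ) ^ (-s)‖ := by
  refine Summable.of_nonneg_of_le (fun _ => norm_nonneg _) (fun n => ?_) (summable_cpow hs)
  rw [norm_mul]
  exact mul_le_of_le_one_left (norm_nonneg _) (norm_cf_le _ _ _)

lemma hasProd_P {N : ℕ} (χ : DirichletCharacter ℂ N) (r : ℕ) {s : ℂ} (hs : 1 < s.re) :
    HasProd (fun p : Nat.Primes => if (p : ℕ) ∣ r then (1 : ℂ) else g (χ (p : ℕ) * (p : ℂ) ^ (-s)))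
      (P χ r s) := by
  have h := EulerProduct.eulerProduct_hasProd (f := fun n : ℕ => cf χ r n * (n : ℂ) ^ (-s))
    (by simp [cf]) (fun {a b} hab => ?_) (summable_cf χ r hs) (by simp [cf])
  · refine hasProd_of_eq (fun p => ?_) h
    have hp := p.prop
    split_ifs with hpr
    · rw [tsum_eq_single 0]
      · simp [cf]
      · intro e he
        have : ¬ Nat.Coprime ((p : ℕ) ^ e) r := by
          intro hc
          have := (Nat.coprime_pow_left_iff (Nat.pos_of_ne_zero he) _ _).mp hc
          exact (Nat.Prime.coprime_iff_not_dvd hp).mp this hpr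
        simp [cf, this]
    · rw [g]
      congr 1; ext e
      have hc : Nat.Coprime ((p : ℕ) ^ e) r :=
        Nat.Coprime.pow_left _ ((Nat.Prime.coprime_iff_not_dvd hp).mpr hpr)
      have hd : ((p : ℕ) ^ e).divisors.card = e + 1 := by
        rw [Nat.divisors_prime_pow hp, card_map, card_range]
      rw [cf, if_pos hc, hd, mul_pow, Nat.cast_pow, map_pow, Nat.cast_pow,
        ← Complex.natCast_cpow_natCast_mul, mul_comm (e : ℂ), Complex.cpow_mul_nat]
      push_cast
      ring
  · have hcp : (a * b).Coprime r ↔ a.Coprime r ∧ b.Coprime r := Nat.coprime_mul_iff_left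
    simp only [cf]
    by_cases ha : a.Coprime r
    · by_cases hb : b.Coprime r
      · rw [if_pos (hcp.mpr ⟨ha, hb⟩), if_pos ha, if_pos hb, hab.card_divisors_mul]
        push_cast
        rw [map_mul, Complex.natCast_mul_natCast_cpow]
        ring
      · rw [if_neg (fun h => hb (hcp.mp h).2), if_neg hb]
        ring
    · rw [if_neg (fun h => ha (hcp.mp h).1), if_neg ha]
      ring

/-- `2^{ω(n)} ≤ τ(n)`. -/
lemma two_pow_card_le {n : ℕ} (hn : n ≠ 0) :
    (2 : ℝ) ^ n.primeFactors.card ≤ (n.divisors.card : ℝ) := by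
  have : 2 ^ n.primeFactors.card ≤ n.divisors.card := by
    rw [Nat.card_divisors hn, ← prod_const]
    refine prod_le_prod' fun p hp => ?_
    have := (Nat.prime_of_mem_primeFactors hp).factorization_pos_of_dvd hn
      (Nat.dvd_of_mem_primeFactors hp)
    omega
  exact_mod_cast this

lemma summable_primes_sq : Summable fun p : Nat.Primes => 12 * ((p : ℝ) ^ 2)⁻¹ :=
  ((Real.summable_nat_pow_inv.mpr (by norm_num : 1 < 2)).comp_injective
    Nat.Primes.coe_nat_injective).mul_left 12

/-- A bound for the partial products of `∏_p (1 + 12/p²)`. -/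
noncomputable def W : ℝ := Real.exp (∑' p : Nat.Primes, 12 * ((p : ℝ) ^ 2)⁻¹)

lemma W_pos : 0 < W := Real.exp_pos _

lemma one_le_W : 1 ≤ W := Real.one_le_exp (tsum_nonneg fun p => by positivity)

lemma prod_W_le (S : Finset Nat.Primes) : ∏ p ∈ S, (1 + 12 * ((p : ℝ) ^ 2)⁻¹) ≤ W := by
  calc _ ≤ ∏ p ∈ S, Real.exp (12 * ((p : ℝ) ^ 2)⁻¹) := by
        refine prod_le_prod (fun p _ => by positivity) fun p _ => ?_
        rw [add_comm]; exact Real.add_one_le_exp _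
    _ = Real.exp (∑ p ∈ S, 12 * ((p : ℝ) ^ 2)⁻¹) := (Real.exp_sum _ _).symm
    _ ≤ _ := Real.exp_le_exp.mpr (summable_primes_sq.sum_le_tsum _ fun p _ => by positivity)

lemma prod_two_le {r : ℕ} (hr : r ≠ 0) (S : Finset Nat.Primes) :
    ∏ p ∈ S, (if (p : ℕ) ∣ r then (2 : ℝ) else 1) ≤ r.divisors.card := by
  refine le_trans ?_ (two_pow_card_le hr)
  rw [← prod_filter, prod_const]
  apply pow_le_pow_right₀ (by norm_num)
  apply card_le_card_of_injOn (fun p : Nat.Primes => (p : ℕ))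
  · intro p hp
    simp only [coe_filter, Set.mem_ofPred_eq] at hp
    exact Nat.mem_primeFactors.mpr ⟨p.prop, hp.2, hr⟩
  · intro a _ b _ h
    exact Nat.Primes.coe_nat_injective h

lemma norm_prime_cpow_le (p : Nat.Primes) {s : ℂ} (hs : 1 ≤ s.re) :
    ‖(p : ℂ) ^ (-s)‖ ≤ (p : ℝ)⁻¹ := by
  have hp : (1 : ℝ) < p := by exact_mod_cast p.prop.one_lt
  have h := Complex.norm_natCast_cpow_of_pos p.prop.pos (-s)
  rw [h, ← Real.rpow_neg_one]
  apply Real.rpow_le_rpow_of_exponent_le hp.le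
  simpa using hs

lemma prime_inv_le_half (p : Nat.Primes) : (p : ℝ)⁻¹ ≤ 1 / 2 := by
  have hp : (2 : ℝ) ≤ p := by exact_mod_cast p.prop.two_le
  rw [one_div]
  exact inv_anti₀ (by norm_num) hp

/-- `|P|²` compared factor by factor with the Euler product of `L(s,χ)`: the quotient at `p ∤ r` is
`|k(χ(p)p^{-s})| ≤ 1 + 12/p²`, and at `p ∣ r` it is at most `2`. -/
lemma norm_P_sq_le {N : ℕ} (χ : DirichletCharacter ℂ N) {r : ℕ} (hr : r ≠ 0) {s : ℂ}
    (hs : 1 < s.re) :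
    ‖P χ r s‖ ^ 2 ≤ W * r.divisors.card * ‖LSeries (fun n : ℕ => χ n) s‖ := by
  have h1 := (hasProd_P χ r hs).norm
  have h2 := (DirichletCharacter.LSeries_eulerProduct_hasProd χ hs).norm
  have h3 := h1.mul h1
  have h4 : Filter.Tendsto (fun S : Finset Nat.Primes => (W * (r.divisors.card : ℝ)) *
      ∏ p ∈ S, ‖(1 - χ (p : ℕ) * (p : ℂ) ^ (-s))⁻¹‖) Filter.atTop
      (nhds (W * (r.divisors.card : ℝ) * ‖LSeries (fun n : ℕ => χ n) s‖)) :=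
    Filter.Tendsto.const_mul _ h2
  rw [sq]
  refine le_of_tendsto_of_tendsto' h3 h4 fun S => ?_
  have hfac : ∀ p ∈ S, ‖if (p : ℕ) ∣ r then (1 : ℂ) else g (χ (p : ℕ) * (p : ℂ) ^ (-s))‖ *
      ‖if (p : ℕ) ∣ r then (1 : ℂ) else g (χ (p : ℕ) * (p : ℂ) ^ (-s))‖ ≤
      (1 + 12 * ((p : ℝ) ^ 2)⁻¹) * (if (p : ℕ) ∣ r then (2 : ℝ) else 1) *
        ‖(1 - χ (p : ℕ) * (p : ℂ) ^ (-s))⁻¹‖ := by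
    intro p _
    set z := χ (p : ℕ) * (p : ℂ) ^ (-s) with hz
    have hzn : ‖z‖ ≤ (p : ℝ)⁻¹ := by
      rw [hz, norm_mul]
      exact (mul_le_of_le_one_left (norm_nonneg _) (DirichletCharacter.norm_le_one χ _)).trans
        (norm_prime_cpow_le p hs.le)
    have hz2 : ‖z‖ ≤ 1 / 2 := hzn.trans (prime_inv_le_half p)
    have hne : 0 < ‖1 - z‖ := by
      have := norm_sub_norm_le (1 : ℂ) z
      rw [norm_one] at this; linarith
    rw [norm_inv, ← div_eq_mul_inv, le_div_iff₀ hne]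
    split_ifs with hpr
    · have : ‖1 - z‖ ≤ 2 := (norm_sub_le _ _).trans (by rw [norm_one]; linarith)
      have h12 : 0 ≤ 12 * ((p : ℝ) ^ 2)⁻¹ := by positivity
      rw [norm_one]
      nlinarith
    · have hk := norm_k_le hz2
      rw [k, norm_mul, norm_pow, sq] at hk
      refine hk.trans ?_
      rw [mul_one]
      gcongr
      rw [← inv_pow]
      gcongr
  calc _ ≤ ∏ p ∈ S, ((1 + 12 * ((p : ℝ) ^ 2)⁻¹) * (if (p : ℕ) ∣ r then (2 : ℝ) else 1) *
        ‖(1 - χ (p : ℕ) * (p : ℂ) ^ (-s))⁻¹‖) :=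
        prod_le_prod (fun p _ => mul_nonneg (norm_nonneg _) (norm_nonneg _)) hfac
    _ = (∏ p ∈ S, (1 + 12 * ((p : ℝ) ^ 2)⁻¹)) * (∏ p ∈ S, (if (p : ℕ) ∣ r then (2 : ℝ) else 1)) *
        ∏ p ∈ S, ‖(1 - χ (p : ℕ) * (p : ℂ) ^ (-s))⁻¹‖ := by rw [prod_mul_distrib, prod_mul_distrib]
    _ ≤ _ := by
        gcongr
        · exact W_pos.le
        · exact prod_W_le S
        · exact prod_two_le hr S

/-- The full Dirichlet series `∑ τ(n)⁻¹ n^{-s}`. -/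
noncomputable def Q (s : ℂ) : ℂ := P (1 : DirichletCharacter ℂ 1) 1 s

lemma hasProd_Q {s : ℂ} (hs : 1 < s.re) :
    HasProd (fun p : Nat.Primes => g ((p : ℂ) ^ (-s))) (Q s) := by
  refine hasProd_of_eq (fun p => ?_) (hasProd_P (1 : DirichletCharacter ℂ 1) 1 hs)
  rw [if_neg (fun h => p.prop.one_lt.ne' (Nat.dvd_one.mp h)),
    MulChar.one_apply (isUnit_of_subsingleton _), one_mul]

/-- The comparison of `Q²` with `ζ`: `|Q(s)|²/|ζ(s)| = ∏_p |k(p^{-s})|`. -/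
lemma hasProd_norm_k {s : ℂ} (hs : 1 < s.re) :
    HasProd (fun p : Nat.Primes => ‖k ((p : ℂ) ^ (-s))‖) (‖Q s‖ ^ 2 / ‖riemannZeta s‖) := by
  have hz : ‖riemannZeta s‖ ≠ 0 := by
    rw [norm_ne_zero_iff]; exact riemannZeta_ne_zero_of_one_lt_re hs
  have h1 := (hasProd_Q hs).norm
  have h2 := ((riemannZeta_eulerProduct_hasProd hs).norm).inv₀ hz
  have h3 := (h1.mul h1).mul h2
  rw [sq, div_eq_mul_inv]
  refine hasProd_of_eq (fun p => ?_) h3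
  rw [k, norm_mul, norm_pow, sq, norm_inv, inv_inv]

lemma summable_fP {p : ℕ} (hp : p.Prime) :
    Summable fun j : ℕ => 1 / (((j : ℝ) + 2) * (p : ℝ) ^ (j + 1)) := by
  have hp' : (2 : ℝ) ≤ p := by exact_mod_cast hp.two_le
  refine Summable.of_nonneg_of_le (fun j => by positivity) (fun j => ?_) summable_geometric_two
  rw [one_div, one_div, inv_pow]
  apply inv_anti₀ (by positivity)
  calc (2 : ℝ) ^ j ≤ p ^ j := by gcongr
    _ ≤ p ^ (j + 1) := pow_le_pow_right₀ (by linarith) (by omega)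
    _ ≤ _ := by
      apply le_mul_of_one_le_left (by positivity)
      have : (0 : ℝ) ≤ j := by positivity
      linarith

lemma one_le_fP {p : ℕ} : 1 ≤ fP p := by
  unfold fP
  have : 0 ≤ ∑' j : ℕ, 1 / (((j : ℝ) + 2) * (p : ℝ) ^ (j + 1)) :=
    tsum_nonneg fun j => by positivity
  linarith

lemma g_inv_prime (p : Nat.Primes) : g ((p : ℂ)⁻¹) = (fP p : ℂ) := by
  have hz : ‖((p : ℂ)⁻¹)‖ ≤ 1 / 2 := by
    rw [norm_inv, Complex.norm_natCast]; exact prime_inv_le_half p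
  have h := (summable_term hz 1 le_rfl).sum_add_tsum_nat_add 1
  simp only [Nat.cast_one, range_one, sum_singleton, pow_zero, Nat.cast_zero, zero_add, div_one]
    at h
  rw [g, ← h, fP, Complex.ofReal_add, Complex.ofReal_tsum, Complex.ofReal_one]
  congr 2
  ext j
  push_cast
  rw [inv_pow]
  field_simp
  ring

lemma norm_k_inv_prime (p : Nat.Primes) :
    ‖k ((p : ℂ)⁻¹)‖ = fP p ^ 2 * (1 - 1 / (p : ℝ)) := by
  have hp : (2 : ℝ) ≤ p := by exact_mod_cast p.prop.two_le
  have h1 : 0 ≤ 1 - 1 / (p : ℝ) := by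
    rw [sub_nonneg, div_le_one (by linarith)]; linarith
  rw [k, g_inv_prime]
  have : (fP p : ℂ) ^ 2 * (1 - (p : ℂ)⁻¹) = ((fP p ^ 2 * (1 - 1 / (p : ℝ)) : ℝ) : ℂ) := by
    push_cast; rw [one_div]
  rw [this, Complex.norm_real, Real.norm_of_nonneg (by positivity)]

/-- The value of the previous product at `s = 1`. -/
lemma hasProd_f0 :
    HasProd (fun p : Nat.Primes => ‖k ((p : ℂ)⁻¹)‖) (Real.pi * f0 ^ 2) := by
  set x : Nat.Primes → ℝ := fun p => fP p * (1 - 1 / (p : ℝ)) ^ ((1 : ℝ) / 2) with hx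
  have hxx : ∀ p, x p * x p = ‖k ((p : ℂ)⁻¹)‖ := by
    intro p
    have hp : (2 : ℝ) ≤ p := by exact_mod_cast p.prop.two_le
    have h1 : 0 ≤ 1 - 1 / (p : ℝ) := by
      rw [sub_nonneg, div_le_one (by linarith)]; linarith
    rw [norm_k_inv_prime, hx]
    simp only
    rw [← Real.sqrt_eq_rpow, mul_mul_mul_comm, Real.mul_self_sqrt h1, sq]
  have hx0 : ∀ p, 0 ≤ x p := by
    intro p
    have hp : (2 : ℝ) ≤ p := by exact_mod_cast p.prop.two_le
    have h1 : 0 ≤ 1 - 1 / (p : ℝ) := by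
      rw [sub_nonneg, div_le_one (by linarith)]; linarith
    have := one_le_fP (p := p)
    simp only [hx]; positivity
  have hm : Multipliable x := by
    have hs : Summable fun p => |x p - 1| := by
      refine Summable.of_nonneg_of_le (fun _ => abs_nonneg _) (fun p => ?_) summable_primes_sq
      have hz : ‖((p : ℂ)⁻¹)‖ = (p : ℝ)⁻¹ := by rw [norm_inv, Complex.norm_natCast]
      have h := norm_k_sub_one_le (hz.trans_le (prime_inv_le_half p))
      have h2 := (abs_norm_sub_norm_le (k ((p : ℂ)⁻¹)) 1).trans h
      rw [norm_one, ← hxx, hz, inv_pow] at h2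
      refine le_trans ?_ h2
      have : x p * x p - 1 = (x p - 1) * (x p + 1) := by ring
      rw [this, abs_mul, abs_of_nonneg (by linarith [hx0 p] : 0 ≤ x p + 1)]
      exact le_mul_of_one_le_right (abs_nonneg _) (by linarith [hx0 p])
    have := multipliable_one_add_of_summable (f := fun p => x p - 1) (by simpa using hs)
    simpa using this
  have h := hm.hasProd.mul hm.hasProd
  simp only [hxx] at h
  convert h using 1
  rw [f0, mul_pow, div_pow, Real.sq_sqrt Real.pi_pos.le, one_pow, sq]
  field_simp
  rfl

/-- Two finite products with factors bounded by `M i ≥ 1` differ by at most `∏ M` times the sum of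
the differences of their factors. -/
lemma norm_prod_sub_prod_le {ι R : Type*} [NormedCommRing R] [NormOneClass R] (S : Finset ι)
    (a b : ι → R) (M : ι → ℝ) (hM : ∀ i ∈ S, 1 ≤ M i) (ha : ∀ i ∈ S, ‖a i‖ ≤ M i)
    (hb : ∀ i ∈ S, ‖b i‖ ≤ M i) :
    ‖∏ i ∈ S, a i - ∏ i ∈ S, b i‖ ≤ (∏ i ∈ S, M i) * ∑ i ∈ S, ‖a i - b i‖ := by
  classical
  induction S using Finset.induction_on with
  | empty => simp
  | insert j S hj ih =>
    have hS : ∀ i ∈ S, i ∈ insert j S := fun i hi => mem_insert_of_mem hi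
    rw [prod_insert hj, prod_insert hj, prod_insert hj, sum_insert hj]
    have ih' := ih (fun i hi => hM i (hS i hi)) (fun i hi => ha i (hS i hi))
      (fun i hi => hb i (hS i hi))
    have hA : ‖∏ i ∈ S, a i‖ ≤ ∏ i ∈ S, M i :=
      (Finset.norm_prod_le _ _).trans (prod_le_prod (fun i _ => norm_nonneg _) fun i hi => ha i (hS i hi))
    have hMj := hM j (mem_insert_self _ _)
    have h0 : 0 ≤ ∏ i ∈ S, M i := (norm_nonneg _).trans hA
    have := norm_mul_sub_mul_le (hb j (mem_insert_self _ _)) hA (le_refl ‖a j - b j‖) ih'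
    refine this.trans ?_
    have h2 : ‖a j - b j‖ * ∏ i ∈ S, M i ≤ M j * (‖a j - b j‖ * ∏ i ∈ S, M i) :=
      le_mul_of_one_le_left (by positivity) hMj
    nlinarith

lemma norm_prime_cpow_sub_le (p : Nat.Primes) {s : ℂ} (hs : 1 ≤ s.re) :
    ‖(p : ℂ) ^ (-s) - (p : ℂ)⁻¹‖ ≤ ‖s - 1‖ * (Real.log p * (p : ℝ)⁻¹) := by
  have hp : (1 : ℝ) ≤ p := by exact_mod_cast p.prop.one_lt.le
  have hp0 : (p : ℂ) ≠ 0 := by exact_mod_cast p.prop.ne_zero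
  have h := norm_cpow_neg_sub_one_le hp (z := s - 1) (by simpa using hs)
  have e : (p : ℂ) ^ (-s) - (p : ℂ)⁻¹ = ((p : ℂ) ^ (-(s - 1)) - 1) * (p : ℂ)⁻¹ := by
    rw [sub_mul, one_mul, show -s = -(s - 1) + (-1) by ring, Complex.cpow_add _ _ hp0,
      Complex.cpow_neg_one]
  rw [e, norm_mul, norm_inv, Complex.norm_natCast, ← mul_assoc]
  gcongr
  simpa using h

lemma summable_log_sq : Summable fun p : Nat.Primes => 84 * (Real.log p * ((p : ℝ) ^ 2)⁻¹) := by
  apply Summable.mul_left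
  have h : Summable fun n : ℕ => 2 * (n : ℝ) ^ (-(3 / 2) : ℝ) :=
    (Real.summable_nat_rpow.mpr (by norm_num)).mul_left 2
  have h2 := h.comp_injective Nat.Primes.coe_nat_injective
  refine Summable.of_nonneg_of_le (fun p => ?_) (fun p => ?_) h2
  · have : (1 : ℝ) ≤ p := by exact_mod_cast p.prop.one_lt.le
    have := Real.log_nonneg this
    positivity
  · have hp : (0 : ℝ) < p := by exact_mod_cast p.prop.pos
    have h3 := Real.log_le_rpow_div hp.le (by norm_num : (0 : ℝ) < 1 / 2)
    simp only [Function.comp]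
    rw [← Real.rpow_natCast, ← Real.rpow_neg hp.le]
    calc _ ≤ (p : ℝ) ^ (1 / 2 : ℝ) / (1 / 2) * (p : ℝ) ^ (-(2 : ℕ) : ℝ) := by gcongr
      _ = 2 * ((p : ℝ) ^ (1 / 2 : ℝ) * (p : ℝ) ^ (-(2 : ℕ) : ℝ)) := by ring
      _ = _ := by rw [← Real.rpow_add hp]; norm_num

/-- The Lipschitz constant at `s = 1` of `∏_p |k(p^{-s})|`. -/
noncomputable def CH : ℝ := W * ∑' p : Nat.Primes, 84 * (Real.log p * ((p : ℝ) ^ 2)⁻¹)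

lemma CH_nonneg : 0 ≤ CH := by
  refine mul_nonneg W_pos.le (tsum_nonneg fun p => ?_)
  have : (1 : ℝ) ≤ p := by exact_mod_cast p.prop.one_lt.le
  have := Real.log_nonneg this
  positivity

/-- Lipschitz continuity at `s = 1` of `∏_p |k(p^{-s})|`. -/
lemma abs_H_sub_le {s : ℂ} (hs : 1 < s.re) :
    |‖Q s‖ ^ 2 / ‖riemannZeta s‖ - Real.pi * f0 ^ 2| ≤ CH * ‖s - 1‖ := by
  have h1 := hasProd_norm_k hs
  have h2 := hasProd_f0
  have h3 : Filter.Tendsto (fun S : Finset Nat.Primes => |∏ p ∈ S, ‖k ((p : ℂ) ^ (-s))‖ -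
      ∏ p ∈ S, ‖k ((p : ℂ)⁻¹)‖|) Filter.atTop
      (nhds |‖Q s‖ ^ 2 / ‖riemannZeta s‖ - Real.pi * f0 ^ 2|) :=
    (Filter.Tendsto.sub h1 h2).abs
  refine le_of_tendsto' h3 fun S => ?_
  have hw : ∀ p : Nat.Primes, ‖((p : ℂ)⁻¹)‖ = (p : ℝ)⁻¹ := fun p => by
    rw [norm_inv, Complex.norm_natCast]
  have hM : ∀ p : Nat.Primes, ∀ z : ℂ, ‖z‖ ≤ (p : ℝ)⁻¹ → ‖‖k z‖‖ ≤ 1 + 12 * ((p : ℝ) ^ 2)⁻¹ := by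
    intro p z hz
    rw [norm_norm]
    refine (norm_k_le (hz.trans (prime_inv_le_half p))).trans ?_
    rw [← inv_pow]
    gcongr
  have h4 := norm_prod_sub_prod_le S (fun p => ‖k ((p : ℂ) ^ (-s))‖) (fun p => ‖k ((p : ℂ)⁻¹)‖)
    (fun p => 1 + 12 * ((p : ℝ) ^ 2)⁻¹) (fun p _ => by
      have : 0 ≤ 12 * ((p : ℝ) ^ 2)⁻¹ := by positivity
      linarith) (fun p _ => hM p _ (norm_prime_cpow_le p hs.le)) (fun p _ => hM p _ (hw p).le)
  rw [Real.norm_eq_abs] at h4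
  refine h4.trans ?_
  have h5 : ∑ p ∈ S, ‖‖k ((p : ℂ) ^ (-s))‖ - ‖k ((p : ℂ)⁻¹)‖‖ ≤
      (∑' p : Nat.Primes, 84 * (Real.log p * ((p : ℝ) ^ 2)⁻¹)) * ‖s - 1‖ := by
    calc _ ≤ ∑ p ∈ S, 84 * (Real.log p * ((p : ℝ) ^ 2)⁻¹) * ‖s - 1‖ := by
          refine sum_le_sum fun p _ => ?_
          rw [Real.norm_eq_abs]
          refine (abs_norm_sub_norm_le _ _).trans ?_
          have hz := norm_prime_cpow_le p hs.le
          refine (norm_k_sub_le (hz.trans (prime_inv_le_half p))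
            ((hw p).trans_le (prime_inv_le_half p))).trans ?_
          calc _ ≤ 42 * ((p : ℝ)⁻¹ + (p : ℝ)⁻¹) * (‖s - 1‖ * (Real.log p * (p : ℝ)⁻¹)) := by
                gcongr
                · exact (hw p).le
                · exact norm_prime_cpow_sub_le p hs.le
            _ = _ := by rw [sq, mul_inv]; ring
      _ = (∑ p ∈ S, 84 * (Real.log p * ((p : ℝ) ^ 2)⁻¹)) * ‖s - 1‖ := by rw [sum_mul]
      _ ≤ _ := by
          gcongr
          refine summable_log_sq.sum_le_tsum _ fun p _ => ?_
          have : (1 : ℝ) ≤ p := by exact_mod_cast p.prop.one_lt.le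
          have := Real.log_nonneg this
          positivity
  rw [CH, mul_assoc]
  refine mul_le_mul (prod_W_le S) h5 (sum_nonneg fun _ _ => norm_nonneg _) W_pos.le

/-- The finite product `∏_{p ∣ 2r} g(p^{-s})⁻¹` removing the Euler factors at `2r`. -/
noncomputable def R (r : ℕ) (s : ℂ) : ℂ := ∏ p ∈ (2 * r).primeFactors, (g ((p : ℂ) ^ (-s)))⁻¹

lemma P_one_eq {r : ℕ} (hr : r ≠ 0) {s : ℂ} (hs : 1 < s.re) :
    P (1 : DirichletCharacter ℂ 8) r s = Q s * R r s := by
  classical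
  have hQ := hasProd_Q hs
  set S : Finset Nat.Primes := (2 * r).primeFactors.subtype Nat.Prime with hS
  have hR : HasProd (fun p : Nat.Primes => if (p : ℕ) ∣ 2 * r then (g ((p : ℂ) ^ (-s)))⁻¹ else 1)
      (R r s) := by
    have hmem : ∀ p : Nat.Primes, p ∈ S ↔ (p : ℕ) ∣ 2 * r := by
      intro p
      refine mem_subtype.trans (Nat.mem_primeFactors.trans ?_)
      exact ⟨fun h => h.2.1, fun h => ⟨p.prop, h, by omega⟩⟩
    have e : R r s = ∏ p ∈ S, if (p : ℕ) ∣ 2 * r then (g ((p : ℂ) ^ (-s)))⁻¹ else 1 := by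
      rw [prod_congr rfl fun p hp => if_pos ((hmem p).mp hp), R, hS]
      exact (prod_subtype_of_mem (fun p : ℕ => (g ((p : ℂ) ^ (-s)))⁻¹)
        fun p hp => Nat.prime_of_mem_primeFactors hp).symm
    rw [e]
    exact hasProd_prod_of_ne_finset_one fun p hp => if_neg (fun h => hp ((hmem p).mpr h))
  have h := hasProd_P (1 : DirichletCharacter ℂ 8) r hs
  refine h.unique (hasProd_of_eq (fun p => ?_) (hQ.mul hR))
  have hz := (norm_prime_cpow_le p hs.le).trans (prime_inv_le_half p)
  have hp2 : (p : ℕ) ∣ 2 * r ↔ (p : ℕ) ∣ 2 ∨ (p : ℕ) ∣ r := p.prop.dvd_mul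
  by_cases hpr : (p : ℕ) ∣ r
  · rw [if_pos (hp2.mpr (Or.inr hpr)), if_pos hpr, mul_inv_cancel₀ (g_ne_zero hz)]
  · rw [if_neg hpr]
    by_cases h2 : (p : ℕ) ∣ 2
    · rw [if_pos (hp2.mpr (Or.inl h2)), mul_inv_cancel₀ (g_ne_zero hz)]
      have : (p : ℕ) = 2 := (Nat.prime_dvd_prime_iff_eq p.prop Nat.prime_two).mp h2
      have hu : ¬ IsUnit (((p : ℕ) : ZMod 8)) := by rw [this]; decide
      rw [MulChar.map_nonunit _ hu, zero_mul, g, tsum_eq_single 0]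
      · simp
      · intro e he; simp [he]
    · rw [if_neg (fun h => (hp2.mp h).elim h2 hpr), mul_one]
      have hu : IsUnit (((p : ℕ) : ZMod 8)) := by
        rw [ZMod.isUnit_iff_coprime]
        have : Nat.Coprime (p : ℕ) 2 := (Nat.Prime.coprime_iff_not_dvd p.prop).mpr h2
        exact Nat.Coprime.pow_right 3 this
      rw [MulChar.one_apply hu, one_mul]

lemma two_pow_card_two_mul_le {r : ℕ} (hr : r ≠ 0) :
    (2 : ℝ) ^ (2 * r).primeFactors.card ≤ 2 * r.divisors.card := by
  have h : (2 * r).primeFactors.card ≤ 1 + r.primeFactors.card := by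
    rw [Nat.primeFactors_mul (by norm_num) hr, Nat.Prime.primeFactors Nat.prime_two]
    exact (card_union_le _ _).trans (by simp)
  calc (2 : ℝ) ^ (2 * r).primeFactors.card ≤ 2 ^ (1 + r.primeFactors.card) :=
        pow_le_pow_right₀ (by norm_num) h
    _ = 2 * 2 ^ r.primeFactors.card := by rw [pow_add, pow_one]
    _ ≤ _ := by gcongr; exact two_pow_card_le hr

lemma norm_R_le {r : ℕ} (hr : r ≠ 0) {s : ℂ} (hs : 1 ≤ s.re) : ‖R r s‖ ≤ 2 * r.divisors.card := by
  refine le_trans ?_ (two_pow_card_two_mul_le hr)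
  rw [R, ← prod_const, norm_prod]
  refine prod_le_prod (fun _ _ => norm_nonneg _) fun p hp => ?_
  have hp' := Nat.prime_of_mem_primeFactors hp
  exact norm_g_inv_le ((norm_prime_cpow_le ⟨p, hp'⟩ hs).trans (prime_inv_le_half ⟨p, hp'⟩))

/-- The factor at `2r` varies slowly: each prime `p ∣ 2r` contributes `O(|s-1| log p)`, and these
logarithms sum to at most `log 2r`. -/
lemma norm_R_sub_le {r : ℕ} (hr : r ≠ 0) {s : ℂ} (hs : 1 ≤ s.re) :
    ‖R r s - R r 1‖ ≤ 2 * r.divisors.card * (16 * ‖s - 1‖ * Real.log (2 * r)) := by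
  have hb : ∀ p ∈ (2 * r).primeFactors, ∀ s : ℂ, 1 ≤ s.re → ‖(p : ℂ) ^ (-s)‖ ≤ 1 / 2 := by
    intro p hp s hs
    have hp' := Nat.prime_of_mem_primeFactors hp
    exact (norm_prime_cpow_le ⟨p, hp'⟩ hs).trans (prime_inv_le_half ⟨p, hp'⟩)
  have h := norm_prod_sub_prod_le (2 * r).primeFactors (fun p : ℕ => (g ((p : ℂ) ^ (-s)))⁻¹)
    (fun p : ℕ => (g ((p : ℂ) ^ (-(1 : ℂ))))⁻¹) (fun _ => 2) (fun _ _ => by norm_num)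
    (fun p hp => norm_g_inv_le (hb p hp s hs))
    (fun p hp => norm_g_inv_le (hb p hp 1 (by simp)))
  refine h.trans ?_
  rw [prod_const]
  have hlog : ∑ p ∈ (2 * r).primeFactors, Real.log p ≤ Real.log (2 * r) := by
    rw [← Real.log_prod (fun p hp => by
      exact_mod_cast (Nat.prime_of_mem_primeFactors hp).ne_zero)]
    apply Real.log_le_log
    · exact prod_pos fun p hp => by exact_mod_cast (Nat.prime_of_mem_primeFactors hp).pos
    · have := Nat.le_of_dvd (by omega) (Nat.prod_primeFactors_dvd (2 * r))
      have h3 : ((∏ p ∈ (2 * r).primeFactors, p : ℕ) : ℝ) ≤ ((2 * r : ℕ) : ℝ) := Nat.cast_le.mpr this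
      rw [Nat.cast_prod, Nat.cast_mul] at h3
      exact h3
  have h2 : ∑ p ∈ (2 * r).primeFactors, ‖(g ((p : ℂ) ^ (-s)))⁻¹ - (g ((p : ℂ) ^ (-(1 : ℂ))))⁻¹‖
      ≤ 16 * ‖s - 1‖ * Real.log (2 * r) := by
    calc _ ≤ ∑ p ∈ (2 * r).primeFactors, 16 * ‖s - 1‖ * Real.log p := by
          refine sum_le_sum fun p hp => ?_
          have hp' := Nat.prime_of_mem_primeFactors hp
          refine (norm_g_inv_sub_le (hb p hp s hs) (hb p hp 1 (by simp))).trans ?_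
          have h3 := norm_prime_cpow_sub_le ⟨p, hp'⟩ hs
          simp only at h3
          rw [Complex.cpow_neg_one, mul_assoc]
          have hp1 : (1 : ℝ) ≤ p := by exact_mod_cast hp'.one_lt.le
          have hl := Real.log_nonneg hp1
          have : Real.log p * (p : ℝ)⁻¹ ≤ Real.log p :=
            mul_le_of_le_one_right hl (inv_le_one_of_one_le₀ hp1)
          gcongr
          exact h3.trans (by gcongr)
      _ = 16 * ‖s - 1‖ * ∑ p ∈ (2 * r).primeFactors, Real.log p := by rw [mul_sum]
      _ ≤ _ := by gcongr
  exact mul_le_mul (two_pow_card_two_mul_le hr) h2 (sum_nonneg fun _ _ => norm_nonneg _)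
    (by positivity)

lemma R_one_eq (r : ℕ) : R r 1 = ((∏ p ∈ (2 * r).primeFactors, fP p)⁻¹ : ℝ) := by
  rw [R, ← prod_inv_distrib]
  push_cast
  refine prod_congr rfl fun p hp => ?_
  have := g_inv_prime ⟨p, Nat.prime_of_mem_primeFactors hp⟩
  rw [Complex.cpow_neg_one, ← this]

lemma norm_R_one_le (r : ℕ) : ‖R r 1‖ ≤ 1 := by
  have h : 1 ≤ ∏ p ∈ (2 * r).primeFactors, fP p := by
    have := prod_le_prod (s := (2 * r).primeFactors) (f := fun _ => (1 : ℝ)) (g := fP)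
      (fun _ _ => zero_le_one) fun p _ => one_le_fP
    simpa using this
  rw [R_one_eq, Complex.norm_real, Real.norm_of_nonneg (by positivity)]
  exact inv_le_one_of_one_le₀ h

/-! ### Mellin–Plancherel formula for the smoothed sum -/

open MeasureTheory Complex in
/-- The Fourier transform of `e^{-2πσ|x|}`. -/
lemma fourier_exp_neg_abs {σ : ℝ} (hσ : 0 < σ) (w : ℝ) :
    FourierTransform.fourier (fun x : ℝ => ((Real.exp (-(2 * Real.pi * σ * |x|)) : ℝ) : ℂ)) w =
      ((σ / Real.pi * (σ ^ 2 + w ^ 2)⁻¹ : ℝ) : ℂ) := by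
  have hpi := Real.pi_pos
  set a : ℂ := -2 * Real.pi * (σ + w * I) with ha
  set b : ℂ := 2 * Real.pi * (σ - w * I) with hb
  have hare : a.re < 0 := by
    simp [ha]; positivity
  have hbre : 0 < b.re := by
    simp [hb]; positivity
  rw [Real.fourier_real_eq_integral_exp_smul]
  set f : ℝ → ℂ := fun v => cexp (↑(-2 * Real.pi * v * w) * I) •
    ((Real.exp (-(2 * Real.pi * σ * |v|)) : ℝ) : ℂ) with hf
  have h1 : ∀ x ∈ Set.Ioi (0 : ℝ), f x = cexp (a * x) := by
    intro x hx
    simp only [hf, smul_eq_mul]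
    rw [abs_of_pos hx, ofReal_exp, ← Complex.exp_add]
    congr 1; simp only [ha]; push_cast; ring
  have h2 : ∀ x ∈ Set.Iic (0 : ℝ), f x = cexp (b * x) := by
    intro x hx
    simp only [hf, smul_eq_mul]
    rw [abs_of_nonpos hx, ofReal_exp, ← Complex.exp_add]
    congr 1; simp only [hb]; push_cast; ring
  have i1 : IntegrableOn f (Set.Ioi 0) :=
    (integrableOn_exp_mul_complex_Ioi hare 0).congr_fun (fun x hx => (h1 x hx).symm)
      measurableSet_Ioi
  have i2 : IntegrableOn f (Set.Iic 0) :=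
    (integrableOn_exp_mul_complex_Iic hbre 0).congr_fun (fun x hx => (h2 x hx).symm)
      measurableSet_Iic
  rw [← intervalIntegral.integral_Iic_add_Ioi i2 i1, setIntegral_congr_fun measurableSet_Ioi h1,
    setIntegral_congr_fun measurableSet_Iic h2, integral_exp_mul_complex_Ioi hare,
    integral_exp_mul_complex_Iic hbre]
  have hA : (σ + w * I : ℂ) ≠ 0 := fun h => by
    have := congrArg Complex.re h; simp at this; exact hσ.ne' this
  have hB : (σ - w * I : ℂ) ≠ 0 := fun h => by
    have := congrArg Complex.re h; simp at this; exact hσ.ne' this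
  have hpiC : (Real.pi : ℂ) ≠ 0 := by exact_mod_cast hpi.ne'
  have hAB : ((σ : ℂ) ^ 2 + w ^ 2) = (σ + w * I) * (σ - w * I) := by
    linear_combination (w : ℂ) ^ 2 * I_sq
  simp only [ofReal_zero, mul_zero, Complex.exp_zero, ha, hb]
  push_cast
  rw [hAB]
  field_simp
  ring

lemma integrable_cauchy {σ : ℝ} (hσ : 0 < σ) :
    MeasureTheory.Integrable fun t : ℝ => (σ ^ 2 + t ^ 2)⁻¹ := by
  have h := (integrable_inv_one_add_sq.comp_div hσ.ne').const_mul (σ ^ 2)⁻¹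
  refine h.congr (Filter.Eventually.of_forall fun t => ?_)
  simp only
  rw [← mul_inv]
  congr 1
  field_simp

open MeasureTheory Complex in
/-- `∫ e^{iut} / (σ² + t²) dt = (π/σ) e^{-σ|u|}`. -/
lemma integral_kernel {σ : ℝ} (hσ : 0 < σ) (u : ℝ) :
    ∫ t : ℝ, cexp ((u * t : ℝ) * I) * (((σ ^ 2 + t ^ 2)⁻¹ : ℝ) : ℂ) =
      ((Real.pi / σ * Real.exp (-(σ * |u|)) : ℝ) : ℂ) := by
  have hpi := Real.pi_pos
  set f : ℝ → ℂ := fun x : ℝ => ((Real.exp (-(2 * Real.pi * σ * |x|)) : ℝ) : ℂ) with hf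
  have hF : FourierTransform.fourier f =
      fun w : ℝ => ((σ / Real.pi * (σ ^ 2 + w ^ 2)⁻¹ : ℝ) : ℂ) :=
    funext fun w => fourier_exp_neg_abs hσ w
  have hfc : Continuous f := by fun_prop
  have hfi : Integrable f := by
    have h1 : IntegrableOn (fun x => Real.exp (-(2 * Real.pi * σ * |x|))) (Set.Ioi 0) :=
      (integrableOn_exp_mul_Ioi (a := -(2 * Real.pi * σ)) (by
        rw [neg_lt_zero]; positivity) 0).congr_fun (fun x hx => by
        simp only; rw [abs_of_pos hx]; ring_nf) measurableSet_Ioi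
    have h2 : IntegrableOn (fun x => Real.exp (-(2 * Real.pi * σ * |x|))) (Set.Iic 0) :=
      (integrableOn_exp_mul_Iic (a := (2 * Real.pi * σ)) (by positivity) 0).congr_fun
      (fun x hx => by
        simp only; rw [abs_of_nonpos hx]; ring_nf) measurableSet_Iic
    have h3 := h2.union h1
    rw [Set.Iic_union_Ioi, integrableOn_univ] at h3
    exact h3.ofReal
  have hFi : Integrable (FourierTransform.fourier f) := by
    rw [hF]
    exact ((integrable_cauchy hσ).const_mul _).ofReal
  have h := congrFun (hfc.fourierInv_fourier_eq hfi hFi) (u / (2 * Real.pi))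
  rw [Real.fourierInv_eq', hF] at h
  have e : ∀ t : ℝ, cexp (↑(2 * Real.pi * inner ℝ t (u / (2 * Real.pi))) * I) •
      ((σ / Real.pi * (σ ^ 2 + t ^ 2)⁻¹ : ℝ) : ℂ) = ((σ / Real.pi : ℝ) : ℂ) *
      (cexp ((u * t : ℝ) * I) * (((σ ^ 2 + t ^ 2)⁻¹ : ℝ) : ℂ)) := by
    intro t
    have : 2 * Real.pi * inner ℝ t (u / (2 * Real.pi)) = u * t := by
      simp only [RCLike.inner_apply, conj_trivial]; field_simp
    rw [this, smul_eq_mul, ofReal_mul (σ / Real.pi)]; ring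
  simp_rw [e] at h
  rw [integral_const_mul] at h
  have hne : ((σ / Real.pi : ℝ) : ℂ) ≠ 0 := by
    exact_mod_cast (div_pos hσ hpi).ne'
  have habs : 2 * Real.pi * σ * |u / (2 * Real.pi)| = σ * |u| := by
    rw [abs_div, abs_of_pos (by positivity : 0 < 2 * Real.pi)]; field_simp
  simp only [hf, habs] at h
  apply mul_left_cancel₀ hne
  rw [h, ← ofReal_mul]
  congr 1
  field_simp

/-- The point `σ + it`. -/
noncomputable def pt (σ t : ℝ) : ℂ := (σ : ℂ) + t * Complex.I

@[simp] lemma pt_re (σ t : ℝ) : (pt σ t).re = σ := by simp [pt]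

/-- The Dirichlet series `∑ α(n) n^{-σ-it}`. -/
noncomputable def D (α : ℕ → ℝ) (σ t : ℝ) : ℂ := ∑' n : ℕ, (α n : ℂ) * (n : ℂ) ^ (-(pt σ t))

open Complex in
lemma cpow_pt {n : ℕ} (hn : n ≠ 0) (σ t : ℝ) :
    (n : ℂ) ^ (-(pt σ t)) = (((n : ℝ) ^ (-σ) : ℝ) : ℂ) * cexp ((-(t * Real.log n) : ℝ) * I) := by
  have hn' : (n : ℂ) ≠ 0 := by exact_mod_cast hn
  have hn0 : (0 : ℝ) < n := by positivity
  rw [cpow_def_of_ne_zero hn', ← natCast_log, Real.rpow_def_of_pos hn0, ofReal_exp,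
    ← Complex.exp_add, pt]
  congr 1; push_cast; ring

lemma norm_coeff_cpow_le {α : ℕ → ℝ} (hα : ∀ n, |α n| ≤ 1) (hα0 : α 0 = 0) (σ t : ℝ)
    (n : ℕ) : ‖(α n : ℂ) * (n : ℂ) ^ (-(pt σ t))‖ ≤ (n : ℝ) ^ (-σ) := by
  rcases eq_or_ne n 0 with rfl | hn
  · simp only [hα0, Complex.ofReal_zero, zero_mul, norm_zero]; positivity
  · rw [norm_mul, cpow_pt hn, norm_mul, Complex.norm_exp_ofReal_mul_I, mul_one, Complex.norm_real,
      Complex.norm_real, Real.norm_of_nonneg (by positivity : 0 ≤ (n : ℝ) ^ (-σ)),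
      Real.norm_eq_abs]
    exact mul_le_of_le_one_left (by positivity) (hα n)

lemma summable_rpow_neg {σ : ℝ} (hσ : 1 < σ) : Summable fun n : ℕ => (n : ℝ) ^ (-σ) :=
  Real.summable_nat_rpow.mpr (by linarith)

lemma summable_D {α : ℕ → ℝ} (hα : ∀ n, |α n| ≤ 1) (hα0 : α 0 = 0) {σ : ℝ} (hσ : 1 < σ) (t : ℝ) :
    Summable fun n : ℕ => ‖(α n : ℂ) * (n : ℂ) ^ (-(pt σ t))‖ :=
  Summable.of_nonneg_of_le (fun _ => norm_nonneg _) (norm_coeff_cpow_le hα hα0 σ t)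
    (summable_rpow_neg hσ)

lemma continuous_coeff {α : ℕ → ℝ} (hα0 : α 0 = 0) (σ : ℝ) (n : ℕ) :
    Continuous fun t : ℝ => (α n : ℂ) * (n : ℂ) ^ (-(pt σ t)) := by
  rcases eq_or_ne n 0 with rfl | hn
  · simp only [hα0, Complex.ofReal_zero, zero_mul]; exact continuous_const
  · simp_rw [cpow_pt hn]; fun_prop

lemma continuous_D {α : ℕ → ℝ} (hα : ∀ n, |α n| ≤ 1) (hα0 : α 0 = 0) {σ : ℝ} (hσ : 1 < σ) :
    Continuous (D α σ) :=
  continuous_tsum (continuous_coeff hα0 σ) (summable_rpow_neg hσ)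
    (fun n t => norm_coeff_cpow_le hα hα0 σ t n)

/-- The summand `α(n₀) β(n₁) max(n₀c, n₁d)^{-w}` of the smoothed double sum. -/
noncomputable def tm (α β : ℕ → ℝ) (c d : ℕ) (w : ℝ) (p : ℕ × ℕ) : ℝ :=
  α p.1 * β p.2 * ((max (p.1 * c) (p.2 * d) : ℕ) : ℝ) ^ (-w)

/-- The integrand `D_α(s) c^{-s} · conj(D_β(s) d^{-s}) / |s|²` at `s = σ + it`. -/
noncomputable def In (α β : ℕ → ℝ) (c d : ℕ) (σ t : ℝ) : ℂ :=
  (D α σ t * (c : ℂ) ^ (-(pt σ t))) * (starRingEnd ℂ) (D β σ t * (d : ℂ) ^ (-(pt σ t))) *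
    (((σ ^ 2 + t ^ 2)⁻¹ : ℝ) : ℂ)

open MeasureTheory Complex in
/-- Mellin–Plancherel: the smoothed double sum is an integral of a product of Dirichlet series. -/
lemma hasSum_tm {α β : ℕ → ℝ} (hα : ∀ n, |α n| ≤ 1) (hα0 : α 0 = 0) (hβ : ∀ n, |β n| ≤ 1)
    (hβ0 : β 0 = 0) {c d : ℕ} (hc : c ≠ 0) (hd : d ≠ 0) {σ : ℝ} (hσ : 1 < σ) :
    HasSum (fun p => ((Real.pi / σ * tm α β c d (2 * σ) p : ℝ) : ℂ)) (∫ t, In α β c d σ t) := by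
  have hσ0 : 0 < σ := by linarith
  set Fp : ℕ × ℕ → ℝ → ℂ := fun p t =>
    (((α p.1 : ℂ) * (p.1 : ℂ) ^ (-(pt σ t))) * (c : ℂ) ^ (-(pt σ t))) *
    (starRingEnd ℂ) (((β p.2 : ℂ) * (p.2 : ℂ) ^ (-(pt σ t))) * (d : ℂ) ^ (-(pt σ t))) *
    (((σ ^ 2 + t ^ 2)⁻¹ : ℝ) : ℂ) with hFp
  have hnc : ∀ (c : ℕ), c ≠ 0 → ∀ t, ‖(c : ℂ) ^ (-(pt σ t))‖ ≤ 1 := by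
    intro c hc t
    rw [cpow_pt hc, norm_mul, norm_exp_ofReal_mul_I, mul_one, norm_real,
      Real.norm_of_nonneg (by positivity)]
    exact Real.rpow_le_one_of_one_le_of_nonpos (by exact_mod_cast Nat.one_le_iff_ne_zero.mpr hc)
      (by linarith)
  have hcc : ∀ (c : ℕ), c ≠ 0 → Continuous fun t : ℝ => (c : ℂ) ^ (-(pt σ t)) := by
    intro c hc
    simp_rw [cpow_pt hc]; fun_prop
  have hinv : Continuous fun t : ℝ => (σ ^ 2 + t ^ 2)⁻¹ :=
    Continuous.inv₀ (by fun_prop) fun t => by positivity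
  have hcont : ∀ p, Continuous (Fp p) := by
    intro p
    refine Continuous.mul (Continuous.mul ((continuous_coeff hα0 σ p.1).mul (hcc c hc))
      (continuous_conj.comp ((continuous_coeff hβ0 σ p.2).mul (hcc d hd))))
      (continuous_ofReal.comp hinv)
  have hbd : ∀ p t, ‖Fp p t‖ ≤ ((p.1 : ℝ) ^ (-σ) * (p.2 : ℝ) ^ (-σ)) * (σ ^ 2 + t ^ 2)⁻¹ := by
    intro p t
    simp only [hFp]
    rw [norm_mul, norm_mul, norm_mul _ ((c : ℂ) ^ _), RCLike.norm_conj, norm_mul _ ((d : ℂ) ^ _),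
      norm_real, Real.norm_of_nonneg (by positivity : 0 ≤ (σ ^ 2 + t ^ 2)⁻¹)]
    have h1 := norm_coeff_cpow_le hα hα0 σ t p.1
    have h2 := norm_coeff_cpow_le hβ hβ0 σ t p.2
    have h3 := mul_le_mul h1 (hnc c hc t) (norm_nonneg _) (by positivity)
    have h4 := mul_le_mul h2 (hnc d hd t) (norm_nonneg _) (by positivity)
    rw [mul_one] at h3 h4
    gcongr
  have hinteg : ∀ p, Integrable (Fp p) := fun p =>
    ((integrable_cauchy hσ0).const_mul ((p.1 : ℝ) ^ (-σ) * (p.2 : ℝ) ^ (-σ))).mono'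
      (hcont p).aestronglyMeasurable (Filter.Eventually.of_forall (hbd p))
  have hs2 : Summable fun p : ℕ × ℕ => (p.1 : ℝ) ^ (-σ) * (p.2 : ℝ) ^ (-σ) :=
    (summable_rpow_neg hσ).mul_of_nonneg (summable_rpow_neg hσ)
      (fun n => by positivity) (fun n => by positivity)
  have hsum : Summable fun p => ∫ t, ‖Fp p t‖ := by
    refine Summable.of_nonneg_of_le (fun p => integral_nonneg fun t => norm_nonneg _) (fun p => ?_)
      (hs2.mul_right (∫ t : ℝ, (σ ^ 2 + t ^ 2)⁻¹))
    rw [← integral_const_mul]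
    exact integral_mono (hinteg p).norm ((integrable_cauchy hσ0).const_mul _) (hbd p)
  have h := hasSum_integral_of_summable_integral_norm hinteg hsum
  have e1 : ∀ t, ∑' p, Fp p t = In α β c d σ t := by
    intro t
    have hA := summable_D hα hα0 hσ t
    have hB := summable_D hβ hβ0 hσ t
    have hA' : Summable fun n : ℕ => ‖((α n : ℂ) * (n : ℂ) ^ (-(pt σ t))) *
        (c : ℂ) ^ (-(pt σ t))‖ :=
      (hA.mul_right ‖(c : ℂ) ^ (-(pt σ t))‖).congr fun n => (norm_mul _ _).symm
    have hB' : Summable fun n : ℕ => ‖(starRingEnd ℂ) (((β n : ℂ) * (n : ℂ) ^ (-(pt σ t))) *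
        (d : ℂ) ^ (-(pt σ t)))‖ :=
      (hB.mul_right ‖(d : ℂ) ^ (-(pt σ t))‖).congr fun n => by
        rw [RCLike.norm_conj]; exact (norm_mul _ _).symm
    simp only [hFp, In]
    rw [tsum_mul_right, ← tsum_mul_tsum_of_summable_norm hA' hB', tsum_mul_right, ← conj_tsum,
      tsum_mul_right]
    rfl
  simp_rw [e1] at h
  suffices e4 : ∀ p, ((Real.pi / σ * tm α β c d (2 * σ) p : ℝ) : ℂ) = ∫ t, Fp p t by
    rw [funext e4]; exact h
  intro p
  rcases eq_or_ne p.1 0 with h0 | h0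
  · simp [hFp, h0, hα0, tm]
  rcases eq_or_ne p.2 0 with h0' | h0'
  · simp [hFp, h0', hβ0, tm]
  set x : ℕ := p.1 * c with hx
  set y : ℕ := p.2 * d with hy
  have hx0 : x ≠ 0 := mul_ne_zero h0 hc
  have hy0 : y ≠ 0 := mul_ne_zero h0' hd
  have hxp : (0 : ℝ) < x := by positivity
  have hyp : (0 : ℝ) < y := by positivity
  have e2 : ∀ t, Fp p t = ((α p.1 * β p.2 * ((x : ℝ) ^ (-σ) * (y : ℝ) ^ (-σ)) : ℝ) : ℂ) *
      (cexp (((Real.log y - Real.log x) * t : ℝ) * I) * (((σ ^ 2 + t ^ 2)⁻¹ : ℝ) : ℂ)) := by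
    intro t
    have hX : (p.1 : ℂ) ^ (-(pt σ t)) * (c : ℂ) ^ (-(pt σ t)) = (x : ℂ) ^ (-(pt σ t)) := by
      rw [hx, Nat.cast_mul, natCast_mul_natCast_cpow]
    have hY : (p.2 : ℂ) ^ (-(pt σ t)) * (d : ℂ) ^ (-(pt σ t)) = (y : ℂ) ^ (-(pt σ t)) := by
      rw [hy, Nat.cast_mul, natCast_mul_natCast_cpow]
    simp only [hFp]
    rw [mul_assoc (α p.1 : ℂ), mul_assoc (β p.2 : ℂ), hX, hY, cpow_pt hx0, cpow_pt hy0]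
    simp only [map_mul, conj_ofReal, ← exp_conj, conj_I]
    rw [show ((((Real.log y - Real.log x) * t : ℝ) : ℂ) * I) =
      ((-(t * Real.log x) : ℝ) : ℂ) * I + ((-(t * Real.log y) : ℝ) : ℂ) * -I by push_cast; ring,
      Complex.exp_add]
    push_cast
    ring
  simp_rw [e2]
  rw [integral_const_mul, integral_kernel hσ0, ← ofReal_mul]
  congr 1
  rw [tm]
  have e3 : (x : ℝ) ^ (-σ) * (y : ℝ) ^ (-σ) * Real.exp (-(σ * |Real.log y - Real.log x|)) =
      ((max x y : ℕ) : ℝ) ^ (-(2 * σ)) := by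
    rw [Real.rpow_def_of_pos hxp, Real.rpow_def_of_pos hyp, ← Real.exp_add, ← Real.exp_add]
    rcases le_total x y with hxy | hxy
    · have : Real.log x ≤ Real.log y := Real.log_le_log hxp (by exact_mod_cast hxy)
      rw [max_eq_right hxy, Real.rpow_def_of_pos hyp, abs_of_nonneg (by linarith)]
      congr 1; ring
    · have : Real.log y ≤ Real.log x := Real.log_le_log hyp (by exact_mod_cast hxy)
      rw [max_eq_left hxy, Real.rpow_def_of_pos hxp, abs_of_nonpos (by linarith)]
      congr 1; ring
  rw [← e3]
  ring

/-! ### Detecting the residue class by characters -/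

/-- The coefficient `1_{(n,r)=1, n ≡ q (8)} / τ(n)`. -/
noncomputable def al (q : (ZMod 8)ˣ) (r n : ℕ) : ℝ :=
  if n.Coprime r ∧ (n : ZMod 8) = (q : ZMod 8) then 1 / (n.divisors.card : ℝ) else 0

lemma al_nonneg (q : (ZMod 8)ˣ) (r n : ℕ) : 0 ≤ al q r n := by
  unfold al; split_ifs <;> positivity

lemma abs_al_le (q : (ZMod 8)ˣ) (r n : ℕ) : |al q r n| ≤ 1 := by
  rw [abs_of_nonneg (al_nonneg q r n)]
  unfold al
  split_ifs
  · rcases Nat.eq_zero_or_pos n.divisors.card with h | h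
    · simp [h]
    · have : (1 : ℝ) ≤ n.divisors.card := by exact_mod_cast h
      exact (div_le_one (by linarith)).mpr this
  · exact zero_le_one

lemma al_zero (q : (ZMod 8)ˣ) (r : ℕ) : al q r 0 = 0 := by simp [al]

lemma totient_eight : Nat.totient 8 = 4 := by decide

lemma al_eq (q : (ZMod 8)ˣ) (r n : ℕ) :
    (al q r n : ℂ) = 4⁻¹ * ∑ χ : DirichletCharacter ℂ 8, χ ((q : ZMod 8)⁻¹) * cf χ r n := by
  have h := DirichletCharacter.sum_char_inv_mul_char_eq ℂ (a := (q : ZMod 8)) q.isUnit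
    (n : ZMod 8)
  by_cases hc : n.Coprime r
  · have e : ∑ χ : DirichletCharacter ℂ 8, χ ((q : ZMod 8)⁻¹) * cf χ r n =
        (∑ χ : DirichletCharacter ℂ 8, χ ((q : ZMod 8)⁻¹) * χ (n : ZMod 8)) /
          (n.divisors.card : ℂ) := by
      rw [sum_div]
      refine sum_congr rfl fun χ _ => ?_
      rw [cf, if_pos hc, mul_div_assoc]
    rw [e, h, totient_eight]
    by_cases hq : (n : ZMod 8) = (q : ZMod 8)
    · rw [al, if_pos ⟨hc, hq⟩, if_pos hq.symm]; push_cast; ring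
    · rw [al, if_neg (fun h => hq h.2), if_neg (fun h => hq h.symm)]; simp
  · rw [al, if_neg (fun h => hc h.1)]
    simp [cf, hc]

lemma D_al_eq (q : (ZMod 8)ˣ) (r : ℕ) {σ : ℝ} (hσ : 1 < σ) (t : ℝ) :
    D (al q r) σ t =
      4⁻¹ * ∑ χ : DirichletCharacter ℂ 8, χ ((q : ZMod 8)⁻¹) * P χ r (pt σ t) := by
  have hs : ∀ χ : DirichletCharacter ℂ 8,
      Summable fun n : ℕ => χ ((q : ZMod 8)⁻¹) * (cf χ r n * (n : ℂ) ^ (-(pt σ t))) := fun χ =>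
    ((summable_cf χ r (by simpa using hσ)).of_norm).mul_left _
  rw [D]
  simp_rw [al_eq, P, ← tsum_mul_left]
  rw [← Summable.tsum_finsetSum fun χ _ => hs χ, ← tsum_mul_left]
  refine tsum_congr fun n => ?_
  rw [mul_assoc, sum_mul]
  congr 1
  exact sum_congr rfl fun χ _ => mul_assoc _ _ _

lemma card_char : Fintype.card (DirichletCharacter ℂ 8) = 4 := by
  rw [← Nat.card_eq_fintype_card,
    DirichletCharacter.card_eq_totient_of_hasEnoughRootsOfUnity ℂ 8, totient_eight]

/-- `|D|² ≤ W τ(r) (CL √|s| + 1/|s-1|)`, in square-root form. -/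
lemma norm_D_le (q : (ZMod 8)ˣ) {r : ℕ} (hr : r ≠ 0) {σ : ℝ} (hσ : 1 < σ) (t : ℝ) {B : ℝ}
    (hB : CL * √‖pt σ t‖ + 1 / ‖pt σ t - 1‖ ≤ B) :
    ‖D (al q r) σ t‖ ≤ √(W * r.divisors.card * B) := by
  have hs : 1 < (pt σ t).re := by simpa using hσ
  rw [D_al_eq q r hσ, norm_mul]
  have h : ∀ χ ∈ (univ : Finset (DirichletCharacter ℂ 8)),
      ‖χ ((q : ZMod 8)⁻¹) * P χ r (pt σ t)‖ ≤ √(W * r.divisors.card * B) := by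
    intro χ _
    rw [norm_mul]
    refine (mul_le_of_le_one_left (norm_nonneg _) (DirichletCharacter.norm_le_one χ _)).trans ?_
    apply Real.le_sqrt_of_sq_le
    refine (norm_P_sq_le χ hr hs).trans ?_
    have := W_pos
    gcongr
    exact (norm_LSeries_le hs χ).trans hB
  have h2 := (norm_sum_le _ _).trans (sum_le_card_nsmul _ _ _ h)
  rw [card_univ, card_char, nsmul_eq_mul] at h2
  have h4 : ‖(4⁻¹ : ℂ)‖ = 4⁻¹ := by simp
  rw [h4]
  push_cast at h2
  linarith

lemma norm_P_one_le {r : ℕ} (hr : r ≠ 0) {σ : ℝ} (hσ : 1 < σ) (t : ℝ) {B : ℝ}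
    (hB : CL * √‖pt σ t‖ + 1 / ‖pt σ t - 1‖ ≤ B) :
    ‖P (1 : DirichletCharacter ℂ 8) r (pt σ t)‖ ≤ √(W * r.divisors.card * B) := by
  have hs : 1 < (pt σ t).re := by simpa using hσ
  apply Real.le_sqrt_of_sq_le
  refine (norm_P_sq_le 1 hr hs).trans ?_
  have := W_pos
  gcongr
  exact (norm_LSeries_le hs 1).trans hB

/-- The nonprincipal characters contribute at most `(W τ(r) CL √|s|)^{1/2}`: their `L`-series have no
pole at `s = 1`. -/
lemma norm_D_sub_le (q : (ZMod 8)ˣ) {r : ℕ} (hr : r ≠ 0) {σ : ℝ} (hσ : 1 < σ) (t : ℝ) {B : ℝ}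
    (hB : CL * √‖pt σ t‖ ≤ B) :
    ‖D (al q r) σ t - 4⁻¹ * P (1 : DirichletCharacter ℂ 8) r (pt σ t)‖ ≤
      √(W * r.divisors.card * B) := by
  classical
  have hs : 1 < (pt σ t).re := by simpa using hσ
  have hq1 : (1 : DirichletCharacter ℂ 8) ((q : ZMod 8)⁻¹) = 1 := by
    apply MulChar.one_apply
    rw [ZMod.inv_coe_unit]
    exact Units.isUnit _
  rw [D_al_eq q r hσ, ← mul_sub, norm_mul, ← add_sum_erase univ _ (mem_univ 1), hq1, one_mul,
    add_sub_cancel_left]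
  have h : ∀ χ ∈ (univ : Finset (DirichletCharacter ℂ 8)).erase 1,
      ‖χ ((q : ZMod 8)⁻¹) * P χ r (pt σ t)‖ ≤ √(W * r.divisors.card * B) := by
    intro χ hχ
    rw [norm_mul]
    refine (mul_le_of_le_one_left (norm_nonneg _) (DirichletCharacter.norm_le_one χ _)).trans ?_
    apply Real.le_sqrt_of_sq_le
    refine (norm_P_sq_le χ hr hs).trans ?_
    have := W_pos
    gcongr
    exact (norm_LSeries_le_of_ne_one hs χ (ne_of_mem_erase hχ)).trans hB
  have h2 := (norm_sum_le _ _).trans (sum_le_card_nsmul _ _ _ h)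
  rw [card_erase_of_mem (mem_univ _), card_univ, card_char, nsmul_eq_mul] at h2
  have h4 : ‖(4⁻¹ : ℂ)‖ = 4⁻¹ := by simp
  rw [h4]
  rw [show 4 - 1 = 3 from rfl, Nat.cast_ofNat] at h2
  have := Real.sqrt_nonneg (W * r.divisors.card * B)
  linarith

/-! ### Pointwise bounds for the integrand -/

/-- The weight `c^{1-s} · conj(d^{1-s}) · σ / |s|²` at `s = σ + it`. -/
noncomputable def wt (c d : ℕ) (σ t : ℝ) : ℂ :=
  (c : ℂ) ^ (-(pt σ t - 1)) * (starRingEnd ℂ) ((d : ℂ) ^ (-(pt σ t - 1))) *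
    ((σ * (σ ^ 2 + t ^ 2)⁻¹ : ℝ) : ℂ)

lemma mul_In_eq (α β : ℕ → ℝ) {c d : ℕ} (hc : c ≠ 0) (hd : d ≠ 0) (σ t : ℝ) :
    ((c * d * σ : ℝ) : ℂ) * In α β c d σ t =
      D α σ t * (starRingEnd ℂ) (D β σ t) * wt c d σ t := by
  have h : ∀ c : ℕ, c ≠ 0 → (c : ℂ) ^ (-(pt σ t - 1)) = c * (c : ℂ) ^ (-(pt σ t)) := by
    intro c hc
    have hc' : (c : ℂ) ≠ 0 := by exact_mod_cast hc
    rw [show -(pt σ t - 1) = 1 + -(pt σ t) by ring, Complex.cpow_add _ _ hc', Complex.cpow_one]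
  rw [In, wt, h c hc, h d hd]
  simp only [map_mul, Complex.conj_natCast]
  push_cast
  ring

lemma norm_cpow_le_one {c : ℕ} (hc : c ≠ 0) {σ : ℝ} (hσ : 1 < σ) (t : ℝ) :
    ‖(c : ℂ) ^ (-(pt σ t - 1))‖ ≤ 1 := by
  rw [Complex.norm_natCast_cpow_of_pos (Nat.pos_of_ne_zero hc)]
  apply Real.rpow_le_one_of_one_le_of_nonpos
  · exact_mod_cast Nat.one_le_iff_ne_zero.mpr hc
  · simp only [Complex.neg_re, Complex.sub_re, pt_re, Complex.one_re]; linarith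

lemma norm_wt_le {c d : ℕ} (hc : c ≠ 0) (hd : d ≠ 0) {σ : ℝ} (hσ : 1 < σ) (t : ℝ) :
    ‖wt c d σ t‖ ≤ σ * (σ ^ 2 + t ^ 2)⁻¹ := by
  have h0 : 0 ≤ σ * (σ ^ 2 + t ^ 2)⁻¹ := by positivity
  rw [wt, norm_mul, norm_mul, RCLike.norm_conj, Complex.norm_real, Real.norm_of_nonneg h0]
  exact mul_le_of_le_one_left h0 (mul_le_one₀ (norm_cpow_le_one hc hσ t) (norm_nonneg _)
    (norm_cpow_le_one hd hσ t))

lemma frac_le_one {σ : ℝ} (hσ : 1 < σ) (t : ℝ) : σ * (σ ^ 2 + t ^ 2)⁻¹ ≤ 1 := by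
  rw [← div_eq_mul_inv, div_le_one (by positivity)]
  nlinarith [sq_nonneg t]

lemma abs_le_norm_pt_sub (σ t : ℝ) : |t| ≤ ‖pt σ t - 1‖ := by
  have := Complex.abs_im_le_norm (pt σ t - 1)
  simpa [pt] using this

lemma sub_le_norm_pt_sub (σ t : ℝ) : σ - 1 ≤ ‖pt σ t - 1‖ := by
  have := Complex.re_le_norm (pt σ t - 1)
  simpa [pt] using this

lemma norm_pt_le {σ : ℝ} (hσ : 0 ≤ σ) (t : ℝ) : ‖pt σ t‖ ≤ σ + |t| := by
  refine (norm_add_le _ _).trans ?_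
  rw [norm_mul, Complex.norm_I, mul_one, Complex.norm_real, Complex.norm_real, Real.norm_eq_abs,
    Real.norm_eq_abs, abs_of_nonneg hσ]

lemma norm_pt_sub_le {σ : ℝ} (hσ : 1 ≤ σ) (t : ℝ) : ‖pt σ t - 1‖ ≤ σ - 1 + |t| := by
  have : pt σ t - 1 = pt (σ - 1) t := by simp [pt]; ring
  rw [this]
  exact norm_pt_le (by linarith) t

lemma norm_pt_sub_eq (ε t : ℝ) : ‖pt (1 + ε) t - 1‖ = √(ε ^ 2 + t ^ 2) := by
  have : pt (1 + ε) t - 1 = (ε : ℂ) + t * Complex.I := by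
    simp only [pt]; push_cast; ring
  rw [this, Complex.norm_add_mul_I]

lemma norm_wt_sub_one_le {c d : ℕ} (hc : c ≠ 0) (hd : d ≠ 0) {σ : ℝ} (hσ : 1 < σ)
    {t : ℝ} (ht : |t| ≤ 1) {Λ : ℝ} (hcΛ : Real.log c ≤ Λ) (hdΛ : Real.log d ≤ Λ) :
    ‖wt c d σ t - 1‖ ≤ ‖pt σ t - 1‖ * (2 * Λ + 2) := by
  set ρ := ‖pt σ t - 1‖ with hρ
  have hs : 0 ≤ (pt σ t - 1).re := by simp only [Complex.sub_re, pt_re, Complex.one_re]; linarith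
  have hle : ∀ c : ℕ, c ≠ 0 → Real.log c ≤ Λ → ‖(c : ℂ) ^ (-(pt σ t - 1)) - 1‖ ≤ ρ * Λ := by
    intro c hc h
    have h1 : (1 : ℝ) ≤ c := by exact_mod_cast Nat.one_le_iff_ne_zero.mpr hc
    have := norm_cpow_neg_sub_one_le h1 hs
    rw [Complex.ofReal_natCast] at this
    exact this.trans (by gcongr)
  have h1 : ‖(c : ℂ) ^ (-(pt σ t - 1)) * (starRingEnd ℂ) ((d : ℂ) ^ (-(pt σ t - 1))) - 1 * 1‖ ≤
      ρ * Λ * 1 + 1 * (ρ * Λ) := by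
    refine norm_mul_sub_mul_le (by simp) ?_ (hle c hc hcΛ) ?_
    · rw [RCLike.norm_conj]; exact norm_cpow_le_one hd hσ t
    · have := hle d hd hdΛ
      rwa [← RCLike.norm_conj, map_sub, map_one] at this
  have hfr : ‖((σ * (σ ^ 2 + t ^ 2)⁻¹ : ℝ) : ℂ) - 1‖ ≤ 2 * ρ := by
    have e : ((σ * (σ ^ 2 + t ^ 2)⁻¹ : ℝ) : ℂ) - 1 = ((σ * (σ ^ 2 + t ^ 2)⁻¹ - 1 : ℝ) : ℂ) := by
      push_cast; ring
    rw [e, Complex.norm_real, Real.norm_eq_abs, abs_sub_comm,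
      abs_of_nonneg (by linarith [frac_le_one hσ t])]
    have hA := abs_le_norm_pt_sub σ t
    have hB := sub_le_norm_pt_sub σ t
    have ht2 : t ^ 2 ≤ |t| := by rw [← sq_abs]; nlinarith [abs_nonneg t]
    have hpos : 0 < σ ^ 2 + t ^ 2 := by positivity
    rw [← div_eq_mul_inv, one_sub_div hpos.ne', div_le_iff₀ hpos]
    have hρ0 : 0 ≤ ρ := norm_nonneg _
    have h3 : σ ^ 2 + t ^ 2 - σ ≤ σ * ρ + ρ := by
      have : σ * (σ - 1) ≤ σ * ρ := by gcongr
      linarith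
    have h4 : σ + 1 ≤ 2 * (σ ^ 2 + t ^ 2) := by nlinarith [sq_nonneg t]
    nlinarith
  have h2 := norm_mul_sub_mul_le (a := (c : ℂ) ^ (-(pt σ t - 1)) *
    (starRingEnd ℂ) ((d : ℂ) ^ (-(pt σ t - 1)))) (a₁ := 1 * 1)
    (b := ((σ * (σ ^ 2 + t ^ 2)⁻¹ : ℝ) : ℂ)) (b₁ := 1) (A := 1) (B := 1) (by simp) (by
      rw [Complex.norm_real, Real.norm_of_nonneg (by positivity)]
      exact frac_le_one hσ t) h1 hfr
  rw [wt]
  simp only [mul_one, one_mul] at h2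
  refine h2.trans (le_of_eq ?_)
  ring

lemma mul_le_of_le_sqrt {a b u v M : ℝ} (hb : 0 ≤ b) (ha : a ≤ √u) (hbv : b ≤ √v)
    (hu : 0 ≤ u) (hM : 0 ≤ M) (huv : u * v ≤ M ^ 2) : a * b ≤ M := by
  calc a * b ≤ √u * √v := mul_le_mul ha hbv hb (Real.sqrt_nonneg _)
    _ = √(u * v) := (Real.sqrt_mul hu v).symm
    _ ≤ √(M ^ 2) := Real.sqrt_le_sqrt huv
    _ = M := Real.sqrt_sq hM

/-- The constant in the pointwise bounds for the Dirichlet series. -/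
noncomputable def KD : ℝ := W * (4 * CL + 1)

lemma KD_nonneg : 0 ≤ KD := by
  have := W_pos; have := one_le_CL; unfold KD; positivity

lemma one_le_tau {r : ℕ} (hr : r ≠ 0) : (1 : ℝ) ≤ r.divisors.card := by
  exact_mod_cast Nat.one_le_iff_ne_zero.mpr (card_ne_zero.mpr ⟨1, Nat.one_mem_divisors.mpr hr⟩)

lemma near_facts {σ : ℝ} (hσ : 1 < σ) (hσ2 : σ ≤ 2) {t : ℝ} (ht : |t| ≤ 1) :
    0 < ‖pt σ t - 1‖ ∧ ‖pt σ t - 1‖ ≤ 2 ∧ CL * √‖pt σ t‖ ≤ 2 * CL ∧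
      CL * √‖pt σ t‖ + 1 / ‖pt σ t - 1‖ ≤ (4 * CL + 1) / ‖pt σ t - 1‖ := by
  have h1 := sub_le_norm_pt_sub σ t
  have h2 := norm_pt_sub_le hσ.le t
  have h3 := norm_pt_le (by linarith : 0 ≤ σ) t
  have hC := one_le_CL
  have hpos : 0 < ‖pt σ t - 1‖ := by linarith
  have h4 : √‖pt σ t‖ ≤ 2 := by
    rw [Real.sqrt_le_left (by norm_num)]; linarith
  have h5 : CL * √‖pt σ t‖ ≤ 2 * CL := by nlinarith
  refine ⟨hpos, by linarith, h5, ?_⟩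
  rw [add_div]
  gcongr
  rw [le_div_iff₀ hpos]
  nlinarith

lemma norm_DD_le_near (q₀ q₁ : (ZMod 8)ˣ) {r₀ r₁ : ℕ} (hr₀ : r₀ ≠ 0) (hr₁ : r₁ ≠ 0) {σ : ℝ}
    (hσ : 1 < σ) (hσ2 : σ ≤ 2) {t : ℝ} (ht : |t| ≤ 1) :
    ‖D (al q₀ r₀) σ t‖ * ‖D (al q₁ r₁) σ t‖ ≤
      KD * (r₀.divisors.card * r₁.divisors.card) / ‖pt σ t - 1‖ := by
  obtain ⟨hpos, -, -, hB⟩ := near_facts hσ hσ2 ht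
  have hC := one_le_CL
  have hW := W_pos
  have hT0 := one_le_tau hr₀
  have hT1 := one_le_tau hr₁
  have hK := KD_nonneg
  refine mul_le_of_le_sqrt (norm_nonneg _) (norm_D_le q₀ hr₀ hσ t hB) (norm_D_le q₁ hr₁ hσ t hB)
    (by positivity) (by positivity) ?_
  set T0 : ℝ := (r₀.divisors.card : ℝ)
  set T1 : ℝ := (r₁.divisors.card : ℝ)
  set ρ := ‖pt σ t - 1‖
  have hTT : 1 ≤ T0 * T1 := by nlinarith
  have e : W * T0 * ((4 * CL + 1) / ρ) * (W * T1 * ((4 * CL + 1) / ρ)) =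
    (KD / ρ) ^ 2 * (T0 * T1) := by unfold KD; ring
  have e2 : (KD * (T0 * T1) / ρ) ^ 2 = (KD / ρ) ^ 2 * (T0 * T1) ^ 2 := by ring
  rw [e, e2]
  gcongr
  nlinarith

lemma norm_DD_le_far (q₀ q₁ : (ZMod 8)ˣ) {r₀ r₁ : ℕ} (hr₀ : r₀ ≠ 0) (hr₁ : r₁ ≠ 0) {σ : ℝ}
    (hσ : 1 < σ) (hσ2 : σ ≤ 2) {t : ℝ} (ht : 1 ≤ |t|) :
    ‖D (al q₀ r₀) σ t‖ * ‖D (al q₁ r₁) σ t‖ ≤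
      KD * (r₀.divisors.card * r₁.divisors.card) * √|t| := by
  have h1 := abs_le_norm_pt_sub σ t
  have h3 := norm_pt_le (by linarith : 0 ≤ σ) t
  have hC := one_le_CL
  have hsq1 : 1 ≤ √|t| := Real.one_le_sqrt.mpr ht
  have hB : CL * √‖pt σ t‖ + 1 / ‖pt σ t - 1‖ ≤ (4 * CL + 1) * √|t| := by
    have h4 : √‖pt σ t‖ ≤ 2 * √|t| := by
      rw [Real.sqrt_le_left (by positivity), mul_pow, Real.sq_sqrt (abs_nonneg t)]; linarith
    have h5 : 1 / ‖pt σ t - 1‖ ≤ 1 := by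
      rw [div_le_one (by linarith)]; linarith
    nlinarith
  have hW := W_pos
  have hT0 := one_le_tau hr₀
  have hT1 := one_le_tau hr₁
  have hK := KD_nonneg
  refine mul_le_of_le_sqrt (norm_nonneg _) (norm_D_le q₀ hr₀ hσ t hB) (norm_D_le q₁ hr₁ hσ t hB)
    (by positivity) (by positivity) ?_
  set T0 : ℝ := (r₀.divisors.card : ℝ)
  set T1 : ℝ := (r₁.divisors.card : ℝ)
  have hTT : 1 ≤ T0 * T1 := by nlinarith
  have e : W * T0 * ((4 * CL + 1) * √|t|) * (W * T1 * ((4 * CL + 1) * √|t|)) =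
    (KD * √|t|) ^ 2 * (T0 * T1) := by unfold KD; ring
  have e2 : (KD * (T0 * T1) * √|t|) ^ 2 = (KD * √|t|) ^ 2 * (T0 * T1) ^ 2 := by ring
  rw [e, e2]
  gcongr
  nlinarith

/-- Replacing both Dirichlet series by their principal-character parts. -/
lemma norm_DD_sub_le (q₀ q₁ : (ZMod 8)ˣ) {r₀ r₁ : ℕ} (hr₀ : r₀ ≠ 0) (hr₁ : r₁ ≠ 0) {σ : ℝ}
    (hσ : 1 < σ) (hσ2 : σ ≤ 2) {t : ℝ} (ht : |t| ≤ 1) :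
    ‖D (al q₀ r₀) σ t * (starRingEnd ℂ) (D (al q₁ r₁) σ t) -
      4⁻¹ * P (1 : DirichletCharacter ℂ 8) r₀ (pt σ t) *
      (starRingEnd ℂ) (4⁻¹ * P (1 : DirichletCharacter ℂ 8) r₁ (pt σ t))‖ ≤
      2 * KD * (r₀.divisors.card * r₁.divisors.card) / √‖pt σ t - 1‖ := by
  obtain ⟨hpos, -, hA, hB⟩ := near_facts hσ hσ2 ht
  have hC := one_le_CL
  have hW := W_pos
  have hT0 := one_le_tau hr₀
  have hT1 := one_le_tau hr₁
  have hK := KD_nonneg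
  have hP : ‖4⁻¹ * P (1 : DirichletCharacter ℂ 8) r₀ (pt σ t)‖ ≤
      √(W * r₀.divisors.card * ((4 * CL + 1) / ‖pt σ t - 1‖)) := by
    refine le_trans ?_ (norm_P_one_le hr₀ hσ t hB)
    rw [norm_mul]
    exact mul_le_of_le_one_left (norm_nonneg _) (by norm_num)
  have hE1 := norm_D_sub_le q₁ hr₁ hσ t hA
  rw [← RCLike.norm_conj, map_sub] at hE1
  have hD1 := norm_D_le q₁ hr₁ hσ t hB
  rw [← RCLike.norm_conj] at hD1
  refine (norm_mul_sub_mul_le hP hD1 (norm_D_sub_le q₀ hr₀ hσ t hA) hE1).trans ?_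
  set T0 : ℝ := (r₀.divisors.card : ℝ)
  set T1 : ℝ := (r₁.divisors.card : ℝ)
  set ρ := ‖pt σ t - 1‖
  have hTT : 1 ≤ T0 * T1 := by nlinarith
  have e2 : (KD * (T0 * T1) / √ρ) ^ 2 = W ^ 2 / ρ * ((4 * CL + 1) ^ 2 * (T0 * T1) ^ 2) := by
    rw [div_pow, Real.sq_sqrt hpos.le, KD]; ring
  have hfin : W ^ 2 / ρ * (2 * CL * (4 * CL + 1) * (T0 * T1)) ≤ (KD * (T0 * T1) / √ρ) ^ 2 := by
    rw [e2]
    have : T0 * T1 ≤ (T0 * T1) ^ 2 := by nlinarith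
    gcongr
    nlinarith
  have hX : √(W * T0 * (2 * CL)) * √(W * T1 * ((4 * CL + 1) / ρ)) ≤ KD * (T0 * T1) / √ρ := by
    refine mul_le_of_le_sqrt (Real.sqrt_nonneg _) le_rfl le_rfl (by positivity) (by positivity) ?_
    refine le_trans (le_of_eq ?_) hfin
    ring
  have hY : √(W * T0 * ((4 * CL + 1) / ρ)) * √(W * T1 * (2 * CL)) ≤ KD * (T0 * T1) / √ρ := by
    refine mul_le_of_le_sqrt (Real.sqrt_nonneg _) le_rfl le_rfl (by positivity) (by positivity) ?_
    refine le_trans (le_of_eq ?_) hfin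
    ring
  calc _ ≤ KD * (T0 * T1) / √ρ + KD * (T0 * T1) / √ρ := add_le_add hX hY
    _ = _ := by ring

/-- The constant in the expansion of `|Q(s)|²` at `s = 1`. -/
noncomputable def KQ : ℝ := 2 * CL * (Real.pi * f0 ^ 2 + 2 * CH) + CH

lemma KQ_nonneg : 0 ≤ KQ := by
  have := CH_nonneg; have := one_le_CL; have := Real.pi_pos; unfold KQ; positivity

/-- `|Q(s)|² = π f₀²/|s-1| + O(1)` near `s = 1`, where `π f₀² = ∏_p |k(1/p)|`. -/
lemma abs_Q_sq_sub_le {σ : ℝ} (hσ : 1 < σ) (hσ2 : σ ≤ 2) {t : ℝ} (ht : |t| ≤ 1) :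
    |‖Q (pt σ t)‖ ^ 2 - Real.pi * f0 ^ 2 / ‖pt σ t - 1‖| ≤ KQ := by
  obtain ⟨hpos, h2, hA, -⟩ := near_facts hσ hσ2 ht
  have hs : 1 < (pt σ t).re := by simpa using hσ
  have hC := one_le_CL
  have hH := abs_H_sub_le hs
  have hz : ‖riemannZeta (pt σ t)‖ ≠ 0 := by
    rw [norm_ne_zero_iff]; exact riemannZeta_ne_zero_of_one_lt_re hs
  have hzeta := (abs_norm_sub_norm_le _ _).trans ((norm_zeta_sub_le hs).trans hA)
  rw [norm_div, norm_one] at hzeta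
  set ρ := ‖pt σ t - 1‖
  set ζ := ‖riemannZeta (pt σ t)‖
  set H := ‖Q (pt σ t)‖ ^ 2 / ζ with hHdef
  have hCH := CH_nonneg
  have e : ‖Q (pt σ t)‖ ^ 2 = ζ * H := by rw [hHdef]; field_simp
  have hHn : ‖H‖ ≤ Real.pi * f0 ^ 2 + 2 * CH := by
    have h3 : ‖H‖ ≤ ‖H - Real.pi * f0 ^ 2‖ + ‖Real.pi * f0 ^ 2‖ := by
      have := norm_add_le (H - Real.pi * f0 ^ 2) (Real.pi * f0 ^ 2)
      rwa [sub_add_cancel] at this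
    have h4 : ‖Real.pi * f0 ^ 2‖ = Real.pi * f0 ^ 2 :=
      Real.norm_of_nonneg (by have := Real.pi_pos; positivity)
    rw [h4, Real.norm_eq_abs (H - _)] at h3
    nlinarith
  have h := norm_mul_sub_mul_le (a := ζ) (a₁ := 1 / ρ) (b := H) (b₁ := Real.pi * f0 ^ 2)
    (A := 1 / ρ) (Real.norm_of_nonneg (by positivity)).le hHn hzeta hH
  rw [Real.norm_eq_abs, ← e] at h
  have e3 : 1 / ρ * (Real.pi * f0 ^ 2) = Real.pi * f0 ^ 2 / ρ := by ring
  rw [e3] at h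
  refine h.trans (le_of_eq ?_)
  rw [KQ]
  field_simp

/-- The leading coefficient `M`, for which `𝔖₁ = 2M/π`. -/
noncomputable def Mr (r₀ r₁ : ℕ) : ℝ :=
  16⁻¹ * (Real.pi * f0 ^ 2 * ((∏ p ∈ (2 * r₀).primeFactors, fP p)⁻¹ *
    (∏ p ∈ (2 * r₁).primeFactors, fP p)⁻¹))

lemma S1_eq (r₀ r₁ : ℕ) : S1 r₀ r₁ = 2 * Mr r₀ r₁ / Real.pi := by
  have h : ∀ r : ℕ, (∏ p ∈ (2 * r).primeFactors, fP p) ≠ 0 := fun r =>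
    prod_ne_zero_iff.mpr fun p _ => (zero_lt_one.trans_le one_le_fP).ne'
  have h0 := h r₀
  have h1 := h r₁
  have := Real.pi_ne_zero
  rw [S1, Mr, totient_eight]
  push_cast
  field_simp
  norm_num

lemma Mr_bounds (r₀ r₁ : ℕ) : 0 ≤ Mr r₀ r₁ ∧ Mr r₀ r₁ ≤ 16⁻¹ * (Real.pi * f0 ^ 2) := by
  have h : ∀ r : ℕ, 0 ≤ (∏ p ∈ (2 * r).primeFactors, fP p)⁻¹ ∧
      (∏ p ∈ (2 * r).primeFactors, fP p)⁻¹ ≤ 1 := by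
    intro r
    have h0 : 0 ≤ (∏ p ∈ (2 * r).primeFactors, fP p)⁻¹ :=
      inv_nonneg.mpr (prod_nonneg fun p _ => zero_le_one.trans one_le_fP)
    have h1 := norm_R_one_le r
    rw [R_one_eq, Complex.norm_real, Real.norm_of_nonneg h0] at h1
    exact ⟨h0, h1⟩
  have hpi : 0 ≤ Real.pi * f0 ^ 2 := by have := Real.pi_pos; positivity
  obtain ⟨a0, a1⟩ := h r₀
  obtain ⟨b0, b1⟩ := h r₁
  have hab : (∏ p ∈ (2 * r₀).primeFactors, fP p)⁻¹ * (∏ p ∈ (2 * r₁).primeFactors, fP p)⁻¹ ≤ 1 :=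
    mul_le_one₀ a1 b0 b1
  unfold Mr
  constructor
  · positivity
  · exact mul_le_mul_of_nonneg_left (mul_le_of_le_one_right hpi hab) (by norm_num)

/-- The constant in the local expansion of the integrand. -/
noncomputable def KI : ℝ := 2 * KD + 7 * (Real.pi * f0 ^ 2) + KQ

lemma KI_nonneg : 0 ≤ KI := by
  have := KD_nonneg; have := KQ_nonneg; have := Real.pi_pos; unfold KI; positivity

/-- The product of the two principal-character parts is `M/|s-1|` up to `O(τ(r₀) τ(r₁) Λ)`. -/
lemma norm_PP_sub_le {r₀ r₁ : ℕ} (hr₀ : r₀ ≠ 0) (hr₁ : r₁ ≠ 0) {σ : ℝ} (hσ : 1 < σ) (hσ2 : σ ≤ 2)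
    {t : ℝ} (ht : |t| ≤ 1) {Λ : ℝ} (h0 : Real.log (2 * r₀) ≤ Λ) (h1 : Real.log (2 * r₁) ≤ Λ)
    (hΛ : 1 ≤ Λ) :
    ‖4⁻¹ * P (1 : DirichletCharacter ℂ 8) r₀ (pt σ t) *
      (starRingEnd ℂ) (4⁻¹ * P (1 : DirichletCharacter ℂ 8) r₁ (pt σ t)) -
      ((Mr r₀ r₁ / ‖pt σ t - 1‖ : ℝ) : ℂ)‖ ≤
      (6 * (Real.pi * f0 ^ 2) + KQ) * (r₀.divisors.card * r₁.divisors.card) * Λ := by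
  obtain ⟨hpos, -, -, -⟩ := near_facts hσ hσ2 ht
  have hs : 1 < (pt σ t).re := by simpa using hσ
  have hT0 := one_le_tau hr₀
  have hT1 := one_le_tau hr₁
  have hR0 := norm_R_le hr₀ hs.le
  have hR1 := norm_R_le hr₁ hs.le
  have hS0 := norm_R_sub_le hr₀ hs.le
  have hS1 := norm_R_sub_le hr₁ hs.le
  rw [← RCLike.norm_conj] at hR1
  rw [← RCLike.norm_conj, map_sub] at hS1
  have hRR := norm_mul_sub_mul_le (norm_R_one_le r₀) hR1 hS0 hS1
  have hQ := abs_Q_sq_sub_le hσ hσ2 ht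
  have hKQ := KQ_nonneg
  set ρ := ‖pt σ t - 1‖
  set T0 : ℝ := (r₀.divisors.card : ℝ)
  set T1 : ℝ := (r₁.divisors.card : ℝ)
  set F : ℝ := Real.pi * f0 ^ 2 with hF
  have hF0 : 0 ≤ F := by have := Real.pi_pos; positivity
  have hTT : 1 ≤ T0 * T1 := by nlinarith
  have hRR2 : ‖R r₀ (pt σ t) * (starRingEnd ℂ) (R r₁ (pt σ t)) -
      R r₀ 1 * (starRingEnd ℂ) (R r₁ 1)‖ ≤ 96 * (T0 * T1) * (ρ * Λ) := by
    refine hRR.trans ?_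
    calc _ ≤ 2 * T0 * (16 * ρ * Λ) * (2 * T1) + 1 * (2 * T1 * (16 * ρ * Λ)) := by gcongr
      _ = 64 * (T0 * T1) * (ρ * Λ) + 32 * (1 * T1) * (ρ * Λ) := by ring
      _ ≤ 64 * (T0 * T1) * (ρ * Λ) + 32 * (T0 * T1) * (ρ * Λ) := by gcongr
      _ = _ := by ring
  have hB : ‖R r₀ (pt σ t) * (starRingEnd ℂ) (R r₁ (pt σ t))‖ ≤ 4 * (T0 * T1) := by
    rw [norm_mul]
    calc _ ≤ (2 * T0) * (2 * T1) := by gcongr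
      _ = _ := by ring
  have hQ2 : ‖((‖Q (pt σ t)‖ ^ 2 : ℝ) : ℂ) - ((F / ρ : ℝ) : ℂ)‖ ≤ KQ := by
    rw [← Complex.ofReal_sub, Complex.norm_real]; exact hQ
  have hA : ‖((F / ρ : ℝ) : ℂ)‖ ≤ F / ρ := by
    rw [Complex.norm_real, Real.norm_of_nonneg (by positivity)]
  have h := norm_mul_sub_mul_le hA hB hQ2 hRR2
  have e1 : 4⁻¹ * P (1 : DirichletCharacter ℂ 8) r₀ (pt σ t) *
      (starRingEnd ℂ) (4⁻¹ * P (1 : DirichletCharacter ℂ 8) r₁ (pt σ t)) =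
      16⁻¹ * (((‖Q (pt σ t)‖ ^ 2 : ℝ) : ℂ) * (R r₀ (pt σ t) * (starRingEnd ℂ) (R r₁ (pt σ t)))) := by
    rw [P_one_eq hr₀ hs, P_one_eq hr₁ hs]
    push_cast
    rw [← Complex.mul_conj']
    simp only [map_mul, map_inv₀, map_ofNat]
    ring
  have e2 : ((Mr r₀ r₁ / ρ : ℝ) : ℂ) =
      16⁻¹ * (((F / ρ : ℝ) : ℂ) * (R r₀ 1 * (starRingEnd ℂ) (R r₁ 1))) := by
    rw [R_one_eq, R_one_eq, Complex.conj_ofReal, Mr, ← hF]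
    push_cast
    ring
  rw [e1, e2, ← mul_sub, norm_mul]
  have h16 : ‖(16⁻¹ : ℂ)‖ = 16⁻¹ := by simp
  rw [h16]
  calc _ ≤ 16⁻¹ * (KQ * (4 * (T0 * T1)) + F / ρ * (96 * (T0 * T1) * (ρ * Λ))) := by gcongr
    _ = 4⁻¹ * KQ * (T0 * T1) * 1 + 6 * F * (T0 * T1) * Λ := by field_simp; ring
    _ ≤ 1 * KQ * (T0 * T1) * Λ + 6 * F * (T0 * T1) * Λ := by gcongr; norm_num
    _ = _ := by ring

/-- Local expansion of the integrand near `s = 1`. -/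
lemma norm_integrand_sub_le (q₀ q₁ : (ZMod 8)ˣ) {r₀ r₁ : ℕ} (hr₀ : r₀ ≠ 0) (hr₁ : r₁ ≠ 0)
    {c d : ℕ} (hc : c ≠ 0) (hd : d ≠ 0) {σ : ℝ} (hσ : 1 < σ) (hσ2 : σ ≤ 2)
    {t : ℝ} (ht : |t| ≤ 1) {Λ : ℝ} (h0 : Real.log (2 * r₀) ≤ Λ) (h1 : Real.log (2 * r₁) ≤ Λ)
    (hcΛ : Real.log c ≤ Λ) (hdΛ : Real.log d ≤ Λ) (hΛ : 1 ≤ Λ) :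
    ‖D (al q₀ r₀) σ t * (starRingEnd ℂ) (D (al q₁ r₁) σ t) * wt c d σ t -
      ((Mr r₀ r₁ / ‖pt σ t - 1‖ : ℝ) : ℂ)‖ ≤
      KI * (r₀.divisors.card * r₁.divisors.card) * (Λ + 1 / √‖pt σ t - 1‖) := by
  obtain ⟨hpos, -, -, -⟩ := near_facts hσ hσ2 ht
  have hA := norm_DD_sub_le q₀ q₁ hr₀ hr₁ hσ hσ2 ht
  have hB := norm_PP_sub_le hr₀ hr₁ hσ hσ2 ht h0 h1 hΛ
  have hw := norm_wt_sub_one_le hc hd hσ ht hcΛ hdΛ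
  have hw1 := (norm_wt_le hc hd hσ t).trans (frac_le_one hσ t)
  obtain ⟨m0, m1⟩ := Mr_bounds r₀ r₁
  have hT0 := one_le_tau hr₀
  have hT1 := one_le_tau hr₁
  have hKD := KD_nonneg
  have hKQ := KQ_nonneg
  have hAB := (norm_sub_le_norm_sub_add_norm_sub _ _ _).trans (add_le_add hA hB)
  set ρ := ‖pt σ t - 1‖
  set T0 : ℝ := (r₀.divisors.card : ℝ)
  set T1 : ℝ := (r₁.divisors.card : ℝ)
  set F : ℝ := Real.pi * f0 ^ 2 with hF
  have hF0 : 0 ≤ F := by have := Real.pi_pos; positivity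
  have hTT : 1 ≤ T0 * T1 := by nlinarith
  have hM : ‖((Mr r₀ r₁ / ρ : ℝ) : ℂ)‖ ≤ 16⁻¹ * F / ρ := by
    rw [Complex.norm_real, Real.norm_of_nonneg (by positivity)]
    gcongr
  have h := norm_mul_sub_mul_le hM hw1 hAB hw
  rw [mul_one, mul_one] at h
  refine h.trans ?_
  have e3 : 16⁻¹ * F / ρ * (ρ * (2 * Λ + 2)) = 8⁻¹ * F * (Λ + 1) := by field_simp; ring
  rw [e3]
  have h5 : 8⁻¹ * F * (Λ + 1) ≤ F * (T0 * T1) * Λ := by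
    calc 8⁻¹ * F * (Λ + 1) ≤ 8⁻¹ * F * (8 * Λ) := by gcongr; linarith
      _ = F * 1 * Λ := by ring
      _ ≤ _ := by gcongr
  have h6 : 0 ≤ (7 * F + KQ) * (T0 * T1) * (1 / √ρ) := by positivity
  have h7 : 0 ≤ 2 * KD * (T0 * T1) * Λ := by positivity
  have e4 : KI * (T0 * T1) * (Λ + 1 / √ρ) = 2 * KD * (T0 * T1) / √ρ +
    (6 * F + KQ) * (T0 * T1) * Λ + F * (T0 * T1) * Λ + (7 * F + KQ) * (T0 * T1) * (1 / √ρ) +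
    2 * KD * (T0 * T1) * Λ := by rw [KI]; ring
  rw [e4]
  linarith

/-! ### Asymptotics of the smoothed sum -/

open MeasureTheory Set in
lemma integral_indicator_comp_abs {s : Set ℝ} (hs : MeasurableSet s) (h0 : s ⊆ Ioi 0) (f : ℝ → ℝ) :
    ∫ t, s.indicator f |t| = 2 * ∫ x in s, f x := by
  rw [integral_comp_abs (f := s.indicator f), setIntegral_indicator hs, inter_eq_self_of_subset_right h0]

open MeasureTheory Set in
lemma integrable_indicator_comp_abs {s : Set ℝ} (hs : MeasurableSet s) {f : ℝ → ℝ}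
    (hf : IntegrableOn f s) : Integrable fun t : ℝ => s.indicator f |t| := by
  have h := (integrable_indicator_iff hs).mpr hf
  have h1 : IntegrableOn (fun t : ℝ => s.indicator f |t|) (Ioi 0) := by
    refine (h.integrableOn (s := Ioi 0)).congr_fun (fun x hx => ?_) measurableSet_Ioi
    simp only [abs_of_pos (mem_Ioi.mp hx)]
  have h2 : IntegrableOn (fun t : ℝ => s.indicator f |t|) (Iic 0) := by
    have h3 := (h.comp_neg).integrableOn (s := Iic 0)
    refine h3.congr_fun (fun x hx => ?_) measurableSet_Iic
    simp only [abs_of_nonpos (mem_Iic.mp hx)]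
  rw [← integrableOn_univ, ← Iic_union_Ioi (a := (0 : ℝ))]
  exact h2.union h1

open MeasureTheory Set in
/-- `∫_{0}^{θ} dx / √(ε² + x²) = arsinh (θ/ε)`. -/
lemma integral_inv_sqrt {ε θ : ℝ} (hε : 0 < ε) (hθ : 0 < θ) (M : ℝ) :
    IntegrableOn (fun x => M / √(ε ^ 2 + x ^ 2)) (Ioc 0 θ) ∧
    ∫ x in Ioc 0 θ, M / √(ε ^ 2 + x ^ 2) = M * Real.arsinh (θ / ε) := by
  have hc : Continuous fun x : ℝ => M / √(ε ^ 2 + x ^ 2) := by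
    refine Continuous.div continuous_const (by fun_prop) fun x => ?_
    exact (Real.sqrt_pos.mpr (by positivity)).ne'
  refine ⟨(hc.integrableOn_Icc).mono_set Ioc_subset_Icc_self, ?_⟩
  rw [← intervalIntegral.integral_of_le hθ.le]
  rw [intervalIntegral.integral_eq_sub_of_hasDerivAt (f := fun x => M * Real.arsinh (x / ε))]
  · simp
  · intro x _
    have h := ((Real.hasDerivAt_arsinh (x / ε)).comp x ((hasDerivAt_id x).div_const ε)).const_mul M
    refine h.congr_deriv ?_
    have e : ε ^ 2 + x ^ 2 = ε ^ 2 * (1 + (x / ε) ^ 2) := by field_simp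
    rw [e, Real.sqrt_mul (by positivity), Real.sqrt_sq hε.le]
    field_simp
  · exact hc.intervalIntegrable _ _

/-- The even majorant `B(|t|)` of the error in the integrand; `B` vanishes on `(-∞, 0]`. -/
noncomputable def Bd (Λ x : ℝ) : ℝ :=
  (Set.Ioc 0 Λ⁻¹).indicator (fun _ => Λ) x + (Set.Ioc 0 1).indicator (fun y => y ^ (-(1 / 2) : ℝ)) x +
    (Set.Ioc Λ⁻¹ 1).indicator (fun y => y⁻¹) x +
    (Set.Ioi 1).indicator (fun y => y ^ (-(3 / 2) : ℝ)) x

open MeasureTheory Set in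
lemma integral_Bd {Λ : ℝ} (hΛ : 1 ≤ Λ) :
    Integrable (fun t => Bd Λ |t|) ∧ ∫ t, Bd Λ |t| = 2 * (5 + Real.log Λ) := by
  have hΛ0 : 0 < Λ := by linarith
  have hθ : 0 < Λ⁻¹ := by positivity
  have hθ1 : Λ⁻¹ ≤ 1 := inv_le_one_of_one_le₀ hΛ
  have i1 := integrable_indicator_comp_abs (measurableSet_Ioc (a := 0) (b := Λ⁻¹))
    (f := fun _ => Λ) (by simp)
  have hi2 : IntegrableOn (fun y : ℝ => y ^ (-(1 / 2) : ℝ)) (Ioc 0 1) :=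
    (intervalIntegrable_iff_integrableOn_Ioc_of_le zero_le_one).mp
      (intervalIntegral.intervalIntegrable_rpow' (by norm_num))
  have i2 := integrable_indicator_comp_abs measurableSet_Ioc hi2
  have hi3 : IntegrableOn (fun y : ℝ => y⁻¹) (Ioc Λ⁻¹ 1) := by
    refine (ContinuousOn.integrableOn_Icc ?_).mono_set Ioc_subset_Icc_self
    exact continuousOn_inv₀.mono fun x hx => (hθ.trans_le hx.1).ne'
  have i3 := integrable_indicator_comp_abs measurableSet_Ioc hi3
  have hi4 : IntegrableOn (fun y : ℝ => y ^ (-(3 / 2) : ℝ)) (Ioi 1) :=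
    integrableOn_Ioi_rpow_of_lt (by norm_num) one_pos
  have i4 := integrable_indicator_comp_abs measurableSet_Ioi hi4
  have i12 : Integrable fun t : ℝ => (Ioc 0 Λ⁻¹).indicator (fun _ => Λ) |t| +
    (Set.Ioc 0 1).indicator (fun y => y ^ (-(1 / 2) : ℝ)) |t| := i1.add i2
  have i123 : Integrable fun t : ℝ => (Ioc 0 Λ⁻¹).indicator (fun _ => Λ) |t| +
    (Set.Ioc 0 1).indicator (fun y => y ^ (-(1 / 2) : ℝ)) |t| +
    (Ioc Λ⁻¹ 1).indicator (fun y => y⁻¹) |t| := i12.add i3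
  refine ⟨i123.add i4, ?_⟩
  unfold Bd
  rw [integral_add i123 i4, integral_add i12 i3, integral_add i1 i2,
    integral_indicator_comp_abs measurableSet_Ioc (fun x hx => hx.1),
    integral_indicator_comp_abs measurableSet_Ioc (fun x hx => hx.1),
    integral_indicator_comp_abs measurableSet_Ioc (fun x hx => hθ.trans hx.1),
    integral_indicator_comp_abs measurableSet_Ioi (fun x hx => mem_Ioi.mpr (one_pos.trans (mem_Ioi.mp hx))),
    integral_Ioi_rpow_of_lt (by norm_num) one_pos,
    ← intervalIntegral.integral_of_le hθ1, integral_inv_of_pos hθ one_pos,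
    ← intervalIntegral.integral_of_le zero_le_one, integral_rpow (Or.inl (by norm_num))]
  have e : ∫ x in Ioc 0 Λ⁻¹, Λ = 1 := by
    rw [setIntegral_const]; simp [hθ.le, hΛ0.ne']
  rw [e]
  simp
  norm_num
  ring

/-- The constant in the majorant of the integrand. -/
noncomputable def KB : ℝ := KI + 2 * KD

lemma KB_nonneg : 0 ≤ KB := by have := KI_nonneg; have := KD_nonneg; unfold KB; positivity

/-- The integrand is `M/|s-1|` for `|t| ≤ 1/Λ` and negligible elsewhere, up to the majorant `Bd`,
whose integral is `O(1 + log Λ)`. -/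
lemma norm_sub_le_Bd (q₀ q₁ : (ZMod 8)ˣ) {r₀ r₁ : ℕ} (hr₀ : r₀ ≠ 0) (hr₁ : r₁ ≠ 0)
    {c d : ℕ} (hc : c ≠ 0) (hd : d ≠ 0) {ε : ℝ} (hε : 0 < ε) (hε1 : ε ≤ 1)
    {t : ℝ} (ht : t ≠ 0) {Λ : ℝ} (h0 : Real.log (2 * r₀) ≤ Λ) (h1 : Real.log (2 * r₁) ≤ Λ)
    (hcΛ : Real.log c ≤ Λ) (hdΛ : Real.log d ≤ Λ) (hΛ : 1 ≤ Λ) :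
    ‖D (al q₀ r₀) (1 + ε) t * (starRingEnd ℂ) (D (al q₁ r₁) (1 + ε) t) * wt c d (1 + ε) t -
      (((Set.Ioc 0 Λ⁻¹).indicator (fun x => Mr r₀ r₁ / √(ε ^ 2 + x ^ 2)) |t| : ℝ) : ℂ)‖ ≤
      KB * (r₀.divisors.card * r₁.divisors.card) * Bd Λ |t| := by
  have hσ : 1 < 1 + ε := by linarith
  have hσ2 : 1 + ε ≤ 2 := by linarith
  have hx : 0 < |t| := abs_pos.mpr ht
  have hT : (0 : ℝ) ≤ r₀.divisors.card * r₁.divisors.card := by positivity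
  have hKI := KI_nonneg
  have hKD := KD_nonneg
  have hw := norm_wt_le hc hd hσ t
  have hw1 := hw.trans (frac_le_one hσ t)
  have hρ := abs_le_norm_pt_sub (1 + ε) t
  set T : ℝ := (r₀.divisors.card * r₁.divisors.card : ℝ)
  have hΛ0 : 0 < Λ := by linarith
  have hθ1 : Λ⁻¹ ≤ 1 := inv_le_one_of_one_le₀ hΛ
  rcases le_or_gt |t| Λ⁻¹ with hn | hn
  · have hxi : |t| ≤ 1 := hn.trans hθ1
    have hB : Bd Λ |t| = Λ + |t| ^ (-(1 / 2) : ℝ) := by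
      unfold Bd
      rw [Set.indicator_of_mem (Set.mem_Ioc.mpr ⟨hx, hn⟩), Set.indicator_of_mem (Set.mem_Ioc.mpr ⟨hx, hxi⟩),
        Set.indicator_of_notMem (fun h => absurd h.1 (not_lt.mpr hn)),
        Set.indicator_of_notMem (Set.notMem_Ioi.mpr hxi)]
      ring
    have h := norm_integrand_sub_le q₀ q₁ hr₀ hr₁ hc hd hσ hσ2 hxi h0 h1 hcΛ hdΛ hΛ
    rw [hB, Set.indicator_of_mem (Set.mem_Ioc.mpr ⟨hx, hn⟩), sq_abs, ← norm_pt_sub_eq]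
    refine h.trans ?_
    have e : |t| ^ (-(1 / 2) : ℝ) = 1 / √|t| := by
      rw [Real.rpow_neg hx.le, Real.sqrt_eq_rpow, one_div (|t| ^ _)]
    have hk : KI ≤ KB := by unfold KB; linarith
    have hkb := KB_nonneg
    have hs : 0 < √|t| := Real.sqrt_pos.mpr hx
    rw [e]
    gcongr
  · rw [Set.indicator_of_notMem (fun h => absurd h.2 (not_le.mpr hn)), Complex.ofReal_zero, sub_zero,
      norm_mul, norm_mul, RCLike.norm_conj]
    have hk : 2 * KD ≤ KB := by unfold KB; linarith
    rcases le_or_gt |t| 1 with hm | hm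
    · have hB : |t|⁻¹ ≤ Bd Λ |t| := by
        unfold Bd
        rw [Set.indicator_of_notMem (fun h => absurd h.2 (not_le.mpr hn)),
          Set.indicator_of_mem (Set.mem_Ioc.mpr ⟨hx, hm⟩), Set.indicator_of_mem (Set.mem_Ioc.mpr ⟨hn, hm⟩),
          Set.indicator_of_notMem (Set.notMem_Ioi.mpr hm)]
        have : 0 ≤ |t| ^ (-(1 / 2) : ℝ) := by positivity
        linarith
      have h := norm_DD_le_near q₀ q₁ hr₀ hr₁ hσ hσ2 hm
      calc _ ≤ KD * T / ‖pt (1 + ε) t - 1‖ * 1 := by gcongr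
        _ ≤ KD * T * |t|⁻¹ := by rw [mul_one, div_eq_mul_inv]; gcongr
        _ ≤ KB * T * Bd Λ |t| := by
          have hkb := KB_nonneg
          gcongr
          linarith
    · have hB : |t| ^ (-(3 / 2) : ℝ) = Bd Λ |t| := by
        unfold Bd
        rw [Set.indicator_of_notMem (fun h => absurd h.2 (not_le.mpr hn)),
          Set.indicator_of_notMem (fun h => absurd h.2 (not_le.mpr hm)),
          Set.indicator_of_notMem (fun h => absurd h.2 (not_le.mpr hm)),
          Set.indicator_of_mem (Set.mem_Ioi.mpr hm)]
        ring
      have h := norm_DD_le_far q₀ q₁ hr₀ hr₁ hσ hσ2 hm.le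
      have hfr : (1 + ε) * ((1 + ε) ^ 2 + t ^ 2)⁻¹ ≤ 2 * (|t| ^ 2)⁻¹ := by
        rw [sq_abs]
        have : 0 < t ^ 2 := by positivity
        gcongr
        nlinarith
      have e : √|t| * (|t| ^ 2)⁻¹ = |t| ^ (-(3 / 2) : ℝ) := by
        rw [Real.sqrt_eq_rpow, ← Real.rpow_natCast, ← Real.rpow_neg hx.le, ← Real.rpow_add hx]
        norm_num
      calc _ ≤ KD * T * √|t| * (2 * (|t| ^ 2)⁻¹) := by gcongr; exact hw.trans hfr
        _ = 2 * KD * T * (√|t| * (|t| ^ 2)⁻¹) := by ring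
        _ ≤ KB * T * Bd Λ |t| := by
          rw [e, hB]
          have : 0 ≤ Bd Λ |t| := by rw [← hB]; positivity
          gcongr

lemma abs_arsinh_sub_le {ε Λ : ℝ} (hε : 0 < ε) (hε1 : ε ≤ 1) (hΛ : 1 ≤ Λ) :
    |Real.arsinh (Λ⁻¹ / ε) - Real.log (1 / ε)| ≤ 2 + Real.log Λ := by
  have hΛ0 : 0 < Λ := by linarith
  have hθ : 0 < Λ⁻¹ := by positivity
  have hθ1 : Λ⁻¹ ≤ 1 := inv_le_one_of_one_le₀ hΛ
  have hl : 0 ≤ Real.log Λ := Real.log_nonneg hΛ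
  have e : Λ⁻¹ / ε + √(1 + (Λ⁻¹ / ε) ^ 2) = (1 / ε) * (Λ⁻¹ + √(ε ^ 2 + Λ⁻¹ ^ 2)) := by
    have : ε ^ 2 + Λ⁻¹ ^ 2 = ε ^ 2 * (1 + (Λ⁻¹ / ε) ^ 2) := by field_simp
    rw [this, Real.sqrt_mul (by positivity), Real.sqrt_sq hε.le]
    field_simp
  have hs : √(ε ^ 2 + Λ⁻¹ ^ 2) ≤ 2 := by
    rw [Real.sqrt_le_left (by norm_num)]; nlinarith
  have hs0 : 0 ≤ √(ε ^ 2 + Λ⁻¹ ^ 2) := Real.sqrt_nonneg _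
  have hpos : 0 < Λ⁻¹ + √(ε ^ 2 + Λ⁻¹ ^ 2) := by linarith
  rw [Real.arsinh, e, Real.log_mul (by positivity) hpos.ne', add_sub_cancel_left, abs_le]
  constructor
  · have := Real.log_le_log hθ (by linarith : Λ⁻¹ ≤ Λ⁻¹ + √(ε ^ 2 + Λ⁻¹ ^ 2))
    rw [Real.log_inv] at this
    linarith
  · have := Real.log_le_sub_one_of_pos hpos
    linarith

open MeasureTheory in
lemma continuous_integrand (q₀ q₁ : (ZMod 8)ˣ) (r₀ r₁ : ℕ) {c d : ℕ} (hc : c ≠ 0) (hd : d ≠ 0)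
    {σ : ℝ} (hσ : 1 < σ) :
    Continuous fun t => D (al q₀ r₀) σ t * (starRingEnd ℂ) (D (al q₁ r₁) σ t) * wt c d σ t := by
  have h0 := continuous_D (abs_al_le q₀ r₀) (al_zero q₀ r₀) hσ
  have h1 := continuous_D (abs_al_le q₁ r₁) (al_zero q₁ r₁) hσ
  have hw : ∀ c : ℕ, c ≠ 0 → Continuous fun t : ℝ => (c : ℂ) ^ (-(pt σ t - 1)) := by
    intro c hc
    refine Continuous.const_cpow ?_ (Or.inl (by exact_mod_cast hc))
    unfold pt; fun_prop
  have hf : Continuous fun t : ℝ => ((σ * (σ ^ 2 + t ^ 2)⁻¹ : ℝ) : ℂ) := by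
    refine Complex.continuous_ofReal.comp (continuous_const.mul (Continuous.inv₀ (by fun_prop) ?_))
    intro t; positivity
  exact (h0.mul (Complex.continuous_conj.comp h1)).mul
    (((hw c hc).mul (Complex.continuous_conj.comp (hw d hd))).mul hf)

/-- The constant in the asymptotics of the smoothed sum. -/
noncomputable def KL : ℝ := 10 * KB + 4⁻¹ * f0 ^ 2

lemma KL_nonneg : 0 ≤ KL := by have := KB_nonneg; unfold KL; positivity

lemma S1_bounds (r₀ r₁ : ℕ) : 0 ≤ S1 r₀ r₁ ∧ S1 r₀ r₁ ≤ 8⁻¹ * f0 ^ 2 := by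
  have hpi := Real.pi_pos
  obtain ⟨h0, h1⟩ := Mr_bounds r₀ r₁
  rw [S1_eq]
  refine ⟨by positivity, ?_⟩
  rw [div_le_iff₀ hpi]
  linarith

lemma summable_tm (q₀ q₁ : (ZMod 8)ˣ) (r₀ r₁ : ℕ) {c d : ℕ} (hc : c ≠ 0) (hd : d ≠ 0)
    {σ : ℝ} (hσ : 1 < σ) : Summable (tm (al q₀ r₀) (al q₁ r₁) c d (2 * σ)) := by
  have h := (hasSum_tm (abs_al_le q₀ r₀) (al_zero q₀ r₀) (abs_al_le q₁ r₁) (al_zero q₁ r₁)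
    hc hd hσ).summable
  rw [Complex.summable_ofReal] at h
  have hpi := Real.pi_pos
  exact (summable_mul_left_iff (by positivity)).mp h

open MeasureTheory in
/-- Asymptotics of the smoothed double sum as the smoothing parameter `ε` tends to `0`. -/
lemma smoothed (q₀ q₁ : (ZMod 8)ˣ) {r₀ r₁ : ℕ} (hr₀ : r₀ ≠ 0) (hr₁ : r₁ ≠ 0)
    {c d : ℕ} (hc : c ≠ 0) (hd : d ≠ 0) {ε : ℝ} (hε : 0 < ε) (hε1 : ε ≤ 1)
    {Λ : ℝ} (h0 : Real.log (2 * r₀) ≤ Λ) (h1 : Real.log (2 * r₁) ≤ Λ)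
    (hcΛ : Real.log c ≤ Λ) (hdΛ : Real.log d ≤ Λ) (hΛ : 1 ≤ Λ) :
    |c * d * ∑' p, tm (al q₀ r₀) (al q₁ r₁) c d (2 * (1 + ε)) p - S1 r₀ r₁ * Real.log (1 / ε)| ≤
      KL * (r₀.divisors.card * r₁.divisors.card) * (1 + Real.log Λ) := by
  have hσ : 1 < 1 + ε := by linarith
  have hΛ0 : 0 < Λ := by linarith
  have hθ : 0 < Λ⁻¹ := by positivity
  have hpi := Real.pi_pos
  set M := Mr r₀ r₁ with hM
  set L := ∑' p, tm (al q₀ r₀) (al q₁ r₁) c d (2 * (1 + ε)) p with hL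
  set I : ℝ → ℂ := fun t => D (al q₀ r₀) (1 + ε) t * (starRingEnd ℂ) (D (al q₁ r₁) (1 + ε) t) *
    wt c d (1 + ε) t with hI
  set m : ℝ → ℝ := fun t => (Set.Ioc 0 Λ⁻¹).indicator (fun x => M / √(ε ^ 2 + x ^ 2)) |t| with hm
  obtain ⟨hi, hv⟩ := integral_inv_sqrt hε hθ M
  have him : Integrable m := integrable_indicator_comp_abs measurableSet_Ioc hi
  have hvm : ∫ t, m t = 2 * (M * Real.arsinh (Λ⁻¹ / ε)) := by
    rw [hm, integral_indicator_comp_abs measurableSet_Ioc (fun x hx => hx.1), hv]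
  obtain ⟨hBi, hBv⟩ := integral_Bd hΛ
  have hbd : ∀ᵐ t : ℝ, ‖I t - (m t : ℂ)‖ ≤
      KB * (r₀.divisors.card * r₁.divisors.card) * Bd Λ |t| := by
    filter_upwards [Measure.ae_ne volume (0 : ℝ)] with t ht
    exact norm_sub_le_Bd q₀ q₁ hr₀ hr₁ hc hd hε hε1 ht h0 h1 hcΛ hdΛ hΛ
  have hBi2 := hBi.const_mul (KB * (r₀.divisors.card * r₁.divisors.card))
  have hdiff : Integrable fun t => I t - (m t : ℂ) :=
    hBi2.mono' ((continuous_integrand q₀ q₁ r₀ r₁ hc hd hσ).aestronglyMeasurable.sub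
      him.ofReal.aestronglyMeasurable) hbd
  have hle := norm_integral_le_of_norm_le hBi2 hbd
  have hIint : Integrable I := by
    have := hdiff.add him.ofReal
    refine this.congr (Filter.Eventually.of_forall fun t => ?_)
    simp
  have hIv : ∫ t, I t = ((Real.pi * (c * d * L) : ℝ) : ℂ) := by
    have hs := (hasSum_tm (abs_al_le q₀ r₀) (al_zero q₀ r₀) (abs_al_le q₁ r₁) (al_zero q₁ r₁)
      hc hd hσ).tsum_eq
    rw [← Complex.ofReal_tsum, tsum_mul_left, ← hL] at hs
    have : ∀ t, I t = ((c * d * (1 + ε) : ℝ) : ℂ) * In (al q₀ r₀) (al q₁ r₁) c d (1 + ε) t :=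
      fun t => (mul_In_eq _ _ hc hd _ t).symm
    simp_rw [this]
    rw [integral_const_mul, ← hs, ← Complex.ofReal_mul]
    congr 1
    field_simp
  have him2 : Integrable fun t => (m t : ℂ) := him.ofReal
  have hvm2 : ∫ t, (m t : ℂ) = ((2 * (M * Real.arsinh (Λ⁻¹ / ε)) : ℝ) : ℂ) := by
    rw [← hvm]; exact integral_ofReal
  rw [integral_sub hIint him2, hIv, hvm2, integral_const_mul, hBv, ← Complex.ofReal_sub, Complex.norm_real, Real.norm_eq_abs] at hle
  set A := Real.arsinh (Λ⁻¹ / ε)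
  have hA : |A - Real.log (1 / ε)| ≤ 2 + Real.log Λ := abs_arsinh_sub_le hε hε1 hΛ
  obtain ⟨s0, s1⟩ := S1_bounds r₀ r₁
  have hT0 := one_le_tau hr₀
  have hT1 := one_le_tau hr₁
  have hKB := KB_nonneg
  have hl : 0 ≤ Real.log Λ := Real.log_nonneg hΛ
  set T : ℝ := (r₀.divisors.card * r₁.divisors.card : ℝ)
  have hT : 1 ≤ T := one_le_mul_of_one_le_of_one_le hT0 hT1
  have e : c * d * L - S1 r₀ r₁ * Real.log (1 / ε) =
      Real.pi⁻¹ * (Real.pi * (c * d * L) - 2 * (M * A)) + S1 r₀ r₁ * (A - Real.log (1 / ε)) := by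
    rw [S1_eq, ← hM]; field_simp; ring
  rw [e]
  have hpi1 : Real.pi⁻¹ ≤ 1 := inv_le_one_of_one_le₀ (by linarith [Real.two_le_pi])
  calc _ ≤ |Real.pi⁻¹ * (Real.pi * (c * d * L) - 2 * (M * A))| +
        |S1 r₀ r₁ * (A - Real.log (1 / ε))| := abs_add_le _ _
    _ = Real.pi⁻¹ * |Real.pi * (c * d * L) - 2 * (M * A)| + S1 r₀ r₁ * |A - Real.log (1 / ε)| := by
      rw [abs_mul, abs_mul, abs_of_nonneg s0, abs_of_nonneg (by positivity : 0 ≤ Real.pi⁻¹)]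
    _ ≤ 1 * (KB * T * (2 * (5 + Real.log Λ))) + 8⁻¹ * f0 ^ 2 * (2 + Real.log Λ) := by gcongr
    _ ≤ KB * T * (10 * (1 + Real.log Λ)) + 8⁻¹ * f0 ^ 2 * (2 * (1 + Real.log Λ)) := by
      rw [one_mul]
      have a1 : 2 * (5 + Real.log Λ) ≤ 10 * (1 + Real.log Λ) := by linarith
      have a2 : 2 + Real.log Λ ≤ 2 * (1 + Real.log Λ) := by linarith
      exact add_le_add (mul_le_mul_of_nonneg_left a1 (by positivity))
        (mul_le_mul_of_nonneg_left a2 (by positivity))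
    _ = 10 * KB * T * (1 + Real.log Λ) + 4⁻¹ * f0 ^ 2 * 1 * (1 + Real.log Λ) := by ring
    _ ≤ 10 * KB * T * (1 + Real.log Λ) + 4⁻¹ * f0 ^ 2 * T * (1 + Real.log Λ) := by gcongr
    _ = _ := by rw [KL]; ring

/-! ### From the smoothed to the truncated sum -/

/-- The pairs `(n₀, n₁)` of positive integers with `max(n₀ c, n₁ d) ≤ X`. -/
noncomputable def box (c d : ℕ) (X : ℝ) : Finset (ℕ × ℕ) :=
  (Icc 1 ⌊X⌋₊ ×ˢ Icc 1 ⌊X⌋₊).filter fun p => ((max (p.1 * c) (p.2 * d) : ℕ) : ℝ) ≤ X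

open scoped Classical in
/-- The sum to be estimated, with the coprimality and congruence conditions absorbed into `al`. -/
lemma sum_eq_sum_tm (q₀ q₁ : (ZMod 8)ˣ) (r₀ r₁ c₀ c₁ : ℕ) (X : ℝ) :
    (∑ p ∈ (Finset.Icc 1 ⌊X⌋₊ ×ˢ Finset.Icc 1 ⌊X⌋₊).filter
            (fun p : ℕ × ℕ => ((max (p.1 * c₀) (p.2 * c₁) : ℕ) : ℝ) ≤ X ∧
              Nat.Coprime p.1 r₀ ∧ Nat.Coprime p.2 r₁ ∧
              (p.1 : ZMod 8) = (q₀ : ZMod 8) ∧ (p.2 : ZMod 8) = (q₁ : ZMod 8)),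
          1 / (((max (p.1 * c₀) (p.2 * c₁) : ℕ) : ℝ) ^ 2 *
            ((Nat.divisors p.1).card : ℝ) * ((Nat.divisors p.2).card : ℝ))) =
      ∑ p ∈ box c₀ c₁ X, tm (al q₀ r₀) (al q₁ r₁) c₀ c₁ 2 p := by
  rw [box, sum_filter, sum_filter]
  refine sum_congr rfl fun p _ => ?_
  have e : ((max (p.1 * c₀) (p.2 * c₁) : ℕ) : ℝ) ^ (-2 : ℝ) =
      (((max (p.1 * c₀) (p.2 * c₁) : ℕ) : ℝ) ^ 2)⁻¹ := by
    rw [Real.rpow_neg (by positivity)]; norm_cast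
  rw [tm, e]
  by_cases hX : ((max (p.1 * c₀) (p.2 * c₁) : ℕ) : ℝ) ≤ X
  · by_cases h0 : p.1.Coprime r₀ ∧ (p.1 : ZMod 8) = (q₀ : ZMod 8)
    · by_cases h1 : p.2.Coprime r₁ ∧ (p.2 : ZMod 8) = (q₁ : ZMod 8)
      · rw [if_pos ⟨hX, h0.1, h1.1, h0.2, h1.2⟩, if_pos hX, al, al, if_pos h0, if_pos h1]
        rw [one_div, mul_inv, mul_inv]
        ring
      · rw [if_neg (fun h => h1 ⟨h.2.2.1, h.2.2.2.2⟩), if_pos hX, al, al, if_neg h1]; ring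
    · rw [if_neg (fun h => h0 ⟨h.2.1, h.2.2.2.1⟩), if_pos hX, al, if_neg h0]; ring
  · rw [if_neg (fun h => hX h.1), if_neg hX]

lemma tm_nonneg (q₀ q₁ : (ZMod 8)ˣ) (r₀ r₁ c d : ℕ) (w : ℝ) (p : ℕ × ℕ) :
    0 ≤ tm (al q₀ r₀) (al q₁ r₁) c d w p := by
  have h0 := al_nonneg q₀ r₀ p.1
  have h1 := al_nonneg q₁ r₁ p.2
  unfold tm; positivity

lemma one_le_max {p : ℕ × ℕ} (hp : 1 ≤ p.1) {c d : ℕ} (hc : c ≠ 0) :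
    (1 : ℝ) ≤ ((max (p.1 * c) (p.2 * d) : ℕ) : ℝ) := by
  have h : 1 ≤ p.1 * c := Nat.mul_pos hp (Nat.pos_of_ne_zero hc)
  exact_mod_cast h.trans (le_max_left _ _)

/-- Rankin's upper bound for the sharply truncated sum. -/
lemma sum_le_rankin (q₀ q₁ : (ZMod 8)ˣ) (r₀ r₁ : ℕ) {c d : ℕ} (hc : c ≠ 0) (hd : d ≠ 0)
    {X ε : ℝ} (hX0 : 0 < X) (hε : 0 < ε) :
    ∑ p ∈ box c d X, tm (al q₀ r₀) (al q₁ r₁) c d 2 p ≤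
      X ^ (2 * ε) * ∑' p, tm (al q₀ r₀) (al q₁ r₁) c d (2 * (1 + ε)) p := by
  have hs := summable_tm q₀ q₁ r₀ r₁ hc hd (by linarith : 1 < 1 + ε)
  rw [← tsum_mul_left]
  refine le_trans (sum_le_sum fun p hp => ?_) ((hs.mul_left _).sum_le_tsum (box c d X) fun p _ => ?_)
  · rw [box, mem_filter, mem_product, mem_Icc, mem_Icc] at hp
    obtain ⟨⟨⟨h1, -⟩, -⟩, hX⟩ := hp
    have hm := one_le_max (d := d) h1 hc
    have h0 := al_nonneg q₀ r₀ p.1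
    have h1 := al_nonneg q₁ r₁ p.2
    unfold tm
    set m : ℝ := ((max (p.1 * c) (p.2 * d) : ℕ) : ℝ)
    have hm0 : 0 < m := by linarith
    have : m ^ (-2 : ℝ) = m ^ (2 * ε) * m ^ (-(2 * (1 + ε))) := by
      rw [← Real.rpow_add hm0]; congr 1; ring
    calc al q₀ r₀ p.1 * al q₁ r₁ p.2 * m ^ (-2 : ℝ)
        = m ^ (2 * ε) * (al q₀ r₀ p.1 * al q₁ r₁ p.2 * m ^ (-(2 * (1 + ε)))) := by rw [this]; ring
      _ ≤ _ := by gcongr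
  · have ht := tm_nonneg q₀ q₁ r₀ r₁ c d (2 * (1 + ε)) p
    positivity

/-- The terms outside the box contribute at most `X^{-ε}` times a less convergent sum. -/
lemma rankin_le_sum (q₀ q₁ : (ZMod 8)ˣ) (r₀ r₁ : ℕ) {c d : ℕ} (hc : c ≠ 0) (hd : d ≠ 0)
    {X ε : ℝ} (hX : 0 < X) (hε : 0 < ε) :
    ∑' p, tm (al q₀ r₀) (al q₁ r₁) c d (2 * (1 + ε)) p ≤
      ∑ p ∈ box c d X, tm (al q₀ r₀) (al q₁ r₁) c d 2 p +
      X ^ (-ε) * ∑' p, tm (al q₀ r₀) (al q₁ r₁) c d (2 * (1 + ε / 2)) p := by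
  have hs := summable_tm q₀ q₁ r₀ r₁ hc hd (by linarith : 1 < 1 + ε)
  have hs2 := summable_tm q₀ q₁ r₀ r₁ hc hd (by linarith : 1 < 1 + ε / 2)
  have hfin : HasSum (fun p => if p ∈ box c d X then tm (al q₀ r₀) (al q₁ r₁) c d 2 p else 0)
      (∑ p ∈ box c d X, tm (al q₀ r₀) (al q₁ r₁) c d 2 p) := by
    have h : ∑ p ∈ box c d X, tm (al q₀ r₀) (al q₁ r₁) c d 2 p =
        ∑ p ∈ box c d X, if p ∈ box c d X then tm (al q₀ r₀) (al q₁ r₁) c d 2 p else 0 :=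
      sum_congr rfl fun p hp => (if_pos hp).symm
    rw [h]
    exact hasSum_sum_of_ne_finset_zero fun p hp => if_neg hp
  rw [← tsum_mul_left]
  refine hasSum_le (fun p => ?_) hs.hasSum (hfin.add (hs2.mul_left _).hasSum)
  have t2 := tm_nonneg q₀ q₁ r₀ r₁ c d 2 p
  have t3 := tm_nonneg q₀ q₁ r₀ r₁ c d (2 * (1 + ε / 2)) p
  have hpos : 0 ≤ (if p ∈ box c d X then tm (al q₀ r₀) (al q₁ r₁) c d 2 p else 0) +
      X ^ (-ε) * tm (al q₀ r₀) (al q₁ r₁) c d (2 * (1 + ε / 2)) p := by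
    refine add_nonneg ?_ (by positivity)
    split_ifs
    · exact t2
    · exact le_rfl
  rcases Nat.eq_zero_or_pos p.1 with h1 | h1
  · refine le_trans (le_of_eq ?_) hpos
    rw [tm, h1, al_zero]; ring
  rcases Nat.eq_zero_or_pos p.2 with h2 | h2
  · refine le_trans (le_of_eq ?_) hpos
    rw [tm, h2, al_zero]; ring
  have hm := one_le_max (d := d) h1 hc
  have h0 := al_nonneg q₀ r₀ p.1
  have h1' := al_nonneg q₁ r₁ p.2
  split_ifs with hp
  · have : tm (al q₀ r₀) (al q₁ r₁) c d (2 * (1 + ε)) p ≤ tm (al q₀ r₀) (al q₁ r₁) c d 2 p := by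
      unfold tm
      have := Real.rpow_le_rpow_of_exponent_le hm (by linarith : -(2 * (1 + ε)) ≤ -2)
      gcongr
    have h5 : 0 ≤ X ^ (-ε) * tm (al q₀ r₀) (al q₁ r₁) c d (2 * (1 + ε / 2)) p := by positivity
    linarith
  · have hlt : X < ((max (p.1 * c) (p.2 * d) : ℕ) : ℝ) := by
      by_contra hle
      rw [not_lt] at hle
      refine hp ?_
      rw [box, mem_filter, mem_product, mem_Icc, mem_Icc]
      have hle2 : max (p.1 * c) (p.2 * d) ≤ ⌊X⌋₊ := Nat.le_floor hle
      refine ⟨⟨⟨h1, ?_⟩, ⟨h2, ?_⟩⟩, hle⟩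
      · exact (Nat.le_mul_of_pos_right _ (Nat.pos_of_ne_zero hc)).trans
          ((le_max_left _ _).trans hle2)
      · exact (Nat.le_mul_of_pos_right _ (Nat.pos_of_ne_zero hd)).trans
          ((le_max_right _ _).trans hle2)
    rw [zero_add]
    unfold tm
    set m : ℝ := ((max (p.1 * c) (p.2 * d) : ℕ) : ℝ)
    have hm0 : 0 < m := by linarith
    have e : m ^ (-(2 * (1 + ε))) = m ^ (-ε) * m ^ (-(2 * (1 + ε / 2))) := by
      rw [← Real.rpow_add hm0]; congr 1; ring
    have hle : m ^ (-ε) ≤ X ^ (-ε) := Real.rpow_le_rpow_of_nonpos hX hlt.le (by linarith)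
    calc al q₀ r₀ p.1 * al q₁ r₁ p.2 * m ^ (-(2 * (1 + ε)))
        = m ^ (-ε) * (al q₀ r₀ p.1 * al q₁ r₁ p.2 * m ^ (-(2 * (1 + ε / 2)))) := by rw [e]; ring
      _ ≤ _ := by gcongr

lemma KL_ge (r₀ r₁ : ℕ) : S1 r₀ r₁ ≤ KL := by
  have := KB_nonneg
  have := (S1_bounds r₀ r₁).2
  unfold KL
  nlinarith [sq_nonneg f0]

/-- Passage from the smoothed sum to the sharply truncated one, with all dependencies on the
parameters collected in `Λ`. -/
lemma truncated (q₀ q₁ : (ZMod 8)ˣ) {r₀ r₁ : ℕ} (hr₀ : r₀ ≠ 0) (hr₁ : r₁ ≠ 0)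
    {c d : ℕ} (hc : c ≠ 0) (hd : d ≠ 0) {X : ℝ} (hX : 1 < Real.log X) (hX0 : 0 < X)
    {Λ : ℝ} (h0 : Real.log (2 * r₀) ≤ Λ) (h1 : Real.log (2 * r₁) ≤ Λ)
    (hcΛ : Real.log c ≤ Λ) (hdΛ : Real.log d ≤ Λ) (hΛ : 1 + Real.log (Real.log X) ≤ Λ) :
    |c * d * ∑ p ∈ box c d X, tm (al q₀ r₀) (al q₁ r₁) c d 2 p -
      S1 r₀ r₁ * Real.log (Real.log X)| ≤
      45 * (KL * (r₀.divisors.card * r₁.divisors.card) * (1 + Real.log Λ)) := by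
  set S := ∑ p ∈ box c d X, tm (al q₀ r₀) (al q₁ r₁) c d 2 p
  set l := Real.log X with hl
  set y := Real.log l with hy
  have hl0 : 0 < l := by linarith
  have hy0 : 0 < y := Real.log_pos hX
  have hyl : 1 + y ≤ l := by linarith [Real.log_le_sub_one_of_pos hl0]
  set Y := 1 + y with hY
  have hY1 : 1 < Y := by linarith
  have hY0 : 0 < Y := by linarith
  have hΛ1 : 1 ≤ Λ := by linarith
  have hlY : Real.log Y ≤ Real.log Λ := Real.log_le_log hY0 hΛ
  have hlY0 : 0 < Real.log Y := Real.log_pos hY1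
  have hlYY : Real.log Y ≤ Y := by linarith [Real.log_le_sub_one_of_pos hY0]
  obtain ⟨s0, -⟩ := S1_bounds r₀ r₁
  have hT0 := one_le_tau hr₀
  have hT1 := one_le_tau hr₁
  have hKL := KL_nonneg
  have hsm := fun {ε : ℝ} (a : 0 < ε) (b : ε ≤ 1) =>
    smoothed q₀ q₁ hr₀ hr₁ hc hd a b h0 h1 hcΛ hdΛ hΛ1
  set T : ℝ := (r₀.divisors.card * r₁.divisors.card : ℝ)
  have hT : 1 ≤ T := one_le_mul_of_one_le_of_one_le hT0 hT1
  set E := KL * T * (1 + Real.log Λ) with hE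
  have hSE : S1 r₀ r₁ * (1 + Real.log Λ) ≤ E := by
    have : S1 r₀ r₁ ≤ KL * T := by nlinarith [KL_ge r₀ r₁]
    rw [hE]
    gcongr
    linarith
  have hSY : S1 r₀ r₁ * Real.log Y ≤ S1 r₀ r₁ * Real.log Λ := by gcongr
  have hSΛ : 0 ≤ S1 r₀ r₁ * Real.log Λ := mul_nonneg s0 (hlY0.le.trans hlY)
  have hSE2 : S1 r₀ r₁ + S1 r₀ r₁ * Real.log Λ ≤ E := by linarith [mul_add (S1 r₀ r₁) 1 (Real.log Λ)]
  have hE0 : 0 ≤ E := by linarith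
  have hcd : (0 : ℝ) < c * d := by positivity
  have hXr : ∀ a : ℝ, X ^ a = Real.exp (l * a) := fun a => by rw [Real.rpow_def_of_pos hX0]
  rw [abs_le]
  constructor
  -- here `ε = Y / log X`, so that `X ^ (-ε) = exp (-Y)`
  · have hε0 : 0 < Y / l := by positivity
    have hε1 : Y / l ≤ 1 := (div_le_one hl0).mpr hyl
    have hr := rankin_le_sum q₀ q₁ r₀ r₁ hc hd hX0 hε0
    have a1 := (abs_le.mp (hsm hε0 hε1)).1
    have a2 := (abs_le.mp (hsm (half_pos hε0) (by linarith))).2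
    have e1 : Real.log (1 / (Y / l)) = y - Real.log Y := by
      rw [one_div_div, Real.log_div hl0.ne' hY0.ne']
    have e2 : Real.log (1 / (Y / l / 2)) ≤ Y := by
      have : 1 / (Y / l / 2) = 2 * (l / Y) := by field_simp
      rw [this, Real.log_mul two_ne_zero (by positivity), Real.log_div hl0.ne' hY0.ne']
      have := Real.log_le_sub_one_of_pos (two_pos : (0 : ℝ) < 2)
      linarith
    have e3 : X ^ (-(Y / l)) * Y ≤ 1 := by
      rw [hXr, show l * -(Y / l) = -Y by field_simp, Real.exp_neg, inv_mul_le_one₀ (Real.exp_pos _)]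
      linarith [Real.add_one_le_exp Y]
    rw [e1] at a1
    set L1 := ∑' p, tm (al q₀ r₀) (al q₁ r₁) c d (2 * (1 + Y / l)) p
    set L2 := ∑' p, tm (al q₀ r₀) (al q₁ r₁) c d (2 * (1 + Y / l / 2)) p
    have hx0 : 0 < X ^ (-(Y / l)) := by positivity
    set x := X ^ (-(Y / l))
    have hx1 : x ≤ 1 := (le_mul_of_one_le_right hx0.le hY1.le).trans e3
    have b1 : c * d * L2 ≤ S1 r₀ r₁ * Y + E := by
      have := mul_le_mul_of_nonneg_left e2 s0
      linarith
    have b2 : x * (c * d * L2) ≤ S1 r₀ r₁ + E := by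
      calc x * (c * d * L2) ≤ x * (S1 r₀ r₁ * Y + E) := by gcongr
        _ = S1 r₀ r₁ * (x * Y) + x * E := by ring
        _ ≤ S1 r₀ r₁ * 1 + 1 * E := by gcongr
        _ = _ := by ring
    have b3 : c * d * L1 ≤ c * d * S + x * (c * d * L2) := by
      calc c * d * L1 ≤ c * d * (S + x * L2) := by gcongr
        _ = _ := by ring
    rw [mul_sub] at a1
    linarith
  -- here `ε = 1 / (Y log X)`, so that `X ^ (2 ε) = exp (2 / Y)`
  · have hε0 : 0 < 1 / (Y * l) := by positivity
    have hε1 : 1 / (Y * l) ≤ 1 := by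
      rw [div_le_one (by positivity)]; nlinarith
    have hr := sum_le_rankin q₀ q₁ r₀ r₁ hc hd hX0 hε0
    have a1 := (abs_le.mp (hsm hε0 hε1)).2
    have e1 : Real.log (1 / (1 / (Y * l))) = Real.log Y + y := by
      rw [one_div_one_div, Real.log_mul hY0.ne' hl0.ne']
    rw [e1] at a1
    rw [hXr, show l * (2 * (1 / (Y * l))) = 2 / Y by field_simp] at hr
    set L1 := ∑' p, tm (al q₀ r₀) (al q₁ r₁) c d (2 * (1 + 1 / (Y * l))) p
    have h2Y : 2 / Y ≤ 2 := by rw [div_le_iff₀ hY0]; linarith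
    have hx9 : Real.exp (2 / Y) ≤ 9 := by
      have h3 : Real.exp 1 ≤ 3 := by linarith [Real.exp_one_lt_d9]
      calc Real.exp (2 / Y) ≤ Real.exp (1 + 1) := Real.exp_le_exp.mpr (by linarith)
        _ = Real.exp 1 * Real.exp 1 := Real.exp_add 1 1
        _ ≤ 3 * 3 := by gcongr
        _ = 9 := by norm_num
    have hxY : (Real.exp (2 / Y) - 1) * Y ≤ 18 := by
      -- `exp u - 1 ≤ u exp u`
      have h3 := Real.add_one_le_exp (-(2 / Y))
      have h4 : Real.exp (2 / Y) * Real.exp (-(2 / Y)) = 1 := by rw [← Real.exp_add]; simp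
      have h5 : Real.exp (2 / Y) - 1 ≤ Real.exp (2 / Y) * (2 / Y) := by
        nlinarith [Real.exp_pos (2 / Y)]
      calc (Real.exp (2 / Y) - 1) * Y ≤ (9 * (2 / Y)) * Y := by
            gcongr; exact h5.trans (by gcongr)
        _ = 18 := by field_simp; norm_num
    have hx1 : 1 ≤ Real.exp (2 / Y) := Real.one_le_exp (by positivity)
    set x := Real.exp (2 / Y)
    have b1 : c * d * S ≤ x * (S1 r₀ r₁ * (Real.log Y + y) + E) := by
      calc c * d * S ≤ c * d * (x * L1) := by gcongr
        _ = x * (c * d * L1) := by ring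
        _ ≤ _ := by gcongr; linarith
    have b2 : (x - 1) * (Real.log Y + y) ≤ 36 := by
      calc (x - 1) * (Real.log Y + y) ≤ (x - 1) * (2 * Y) := by
            gcongr
            linarith
        _ ≤ 36 := by linarith
    have b3 : S1 r₀ r₁ * ((x - 1) * (Real.log Y + y)) ≤ S1 r₀ r₁ * 36 := by gcongr
    have b4 : x * E ≤ 9 * E := by gcongr
    have b5 : x * (S1 r₀ r₁ * (Real.log Y + y) + E) = S1 r₀ r₁ * ((x - 1) * (Real.log Y + y)) +
      S1 r₀ r₁ * Real.log Y + S1 r₀ r₁ * y + x * E := by ring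
    linarith

end Sum9

open scoped Classical in
theorem statement9 (C₁ C₂ : ℝ) (h₁ : 0 < C₁) (h₂ : 0 < C₂) :
    ∃ C : ℝ, ∀ X : ℝ, 3 ≤ X → ∀ q₀ q₁ : (ZMod 8)ˣ,
      ∀ r₀ r₁ : ℕ, Odd r₀ → Odd r₁ → 1 ≤ r₀ → 1 ≤ r₁ →
        (r₀ : ℝ) ≤ (Real.log X) ^ C₁ → (r₁ : ℝ) ≤ (Real.log X) ^ C₁ →
      ∀ c₀ c₁ : ℕ, 1 ≤ c₀ → 1 ≤ c₁ →
        (c₀ : ℝ) ≤ (Real.log X) ^ C₂ → (c₁ : ℝ) ≤ (Real.log X) ^ C₂ →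
      |(∑ p ∈ (Finset.Icc 1 ⌊X⌋₊ ×ˢ Finset.Icc 1 ⌊X⌋₊).filter
            (fun p : ℕ × ℕ => ((max (p.1 * c₀) (p.2 * c₁) : ℕ) : ℝ) ≤ X ∧
              Nat.Coprime p.1 r₀ ∧ Nat.Coprime p.2 r₁ ∧
              (p.1 : ZMod 8) = (q₀ : ZMod 8) ∧ (p.2 : ZMod 8) = (q₁ : ZMod 8)),
          1 / (((max (p.1 * c₀) (p.2 * c₁) : ℕ) : ℝ) ^ 2 *
            ((Nat.divisors p.1).card : ℝ) * ((Nat.divisors p.2).card : ℝ)))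
        - S1 r₀ r₁ * Real.log (Real.log X) / ((c₀ : ℝ) * (c₁ : ℝ))| ≤
        C * ((Nat.divisors r₀).card : ℝ) * ((Nat.divisors r₁).card : ℝ) *
          Real.sqrt (Real.log (Real.log X)) / ((c₀ : ℝ) * (c₁ : ℝ)) := by
  have hlog3 : 1 < Real.log 3 := by
    rw [Real.lt_log_iff_exp_lt (by norm_num)]
    linarith [Real.exp_one_lt_d9]
  set y₀ := Real.log (Real.log 3) with hy₀
  have hy₀0 : 0 < y₀ := Real.log_pos hlog3
  set A := 1 + C₁ + C₂ with hA
  refine ⟨45 * Sum9.KL * (A / √y₀ + 2), ?_⟩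
  intro X hX q₀ q₁ r₀ r₁ _ _ hr₀ hr₁ hrl₀ hrl₁ c₀ c₁ hc₀ hc₁ hcl₀ hcl₁
  have hX0 : 0 < X := by linarith
  have hl3 : Real.log 3 ≤ Real.log X := Real.log_le_log (by norm_num) hX
  have hl1 : 1 < Real.log X := hlog3.trans_le hl3
  have hyy : y₀ ≤ Real.log (Real.log X) := Real.log_le_log (by linarith) hl3
  set y := Real.log (Real.log X) with hy
  have hy0 : 0 < y := hy₀0.trans_le hyy
  have hlogle : ∀ (n : ℕ) (B : ℝ), 1 ≤ n → (n : ℝ) ≤ (Real.log X) ^ B → Real.log n ≤ B * y := by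
    intro n B hn h
    rw [hy, ← Real.log_rpow (by linarith)]
    exact Real.log_le_log (by exact_mod_cast hn) h
  have hlog2 : ∀ n : ℕ, 1 ≤ n → (n : ℝ) ≤ (Real.log X) ^ C₁ →
      Real.log (2 * n) ≤ A * (1 + y) := by
    intro n hn h
    have hn0 : (n : ℝ) ≠ 0 := by exact_mod_cast (Nat.one_le_iff_ne_zero.mp hn)
    rw [Real.log_mul two_ne_zero hn0]
    have := Real.log_le_sub_one_of_pos (two_pos : (0 : ℝ) < 2)
    have := hlogle n C₁ hn h
    nlinarith [mul_pos h₂ hy0]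
  have hlogc : ∀ n : ℕ, 1 ≤ n → (n : ℝ) ≤ (Real.log X) ^ C₂ → Real.log n ≤ A * (1 + y) := by
    intro n hn h
    have := hlogle n C₂ hn h
    nlinarith [mul_pos h₁ hy0]
  have hmain := Sum9.truncated q₀ q₁ (Nat.one_le_iff_ne_zero.mp hr₀) (Nat.one_le_iff_ne_zero.mp hr₁)
    (Nat.one_le_iff_ne_zero.mp hc₀) (Nat.one_le_iff_ne_zero.mp hc₁) hl1 hX0
    (hlog2 r₀ hr₀ hrl₀) (hlog2 r₁ hr₁ hrl₁) (hlogc c₀ hc₀ hcl₀) (hlogc c₁ hc₁ hcl₁)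
    (by nlinarith : 1 + y ≤ A * (1 + y))
  rw [Sum9.sum_eq_sum_tm]
  have hc0 : (0 : ℝ) < c₀ := by exact_mod_cast hc₀
  have hc1 : (0 : ℝ) < c₁ := by exact_mod_cast hc₁
  -- `log (1 + y) = 2 log √(1 + y) ≤ 2 (√(1 + y) - 1) ≤ 2 √y`
  have hlogY : Real.log (1 + y) ≤ 2 * √y := by
    have h3 := Real.log_le_sub_one_of_pos (Real.sqrt_pos.mpr (by linarith : 0 < 1 + y))
    rw [Real.log_sqrt (by linarith)] at h3
    have h4 : √(1 + y) ≤ 1 + √y := by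
      rw [Real.sqrt_le_left (by positivity)]
      nlinarith [Real.sq_sqrt hy0.le, Real.sqrt_nonneg y]
    linarith
  have hA0 : 0 < A := by linarith
  have hfin : 1 + Real.log (A * (1 + y)) ≤ (A / √y₀ + 2) * √y := by
    rw [Real.log_mul hA0.ne' (by linarith)]
    have h5 := Real.log_le_sub_one_of_pos hA0
    have h6 : A ≤ A / √y₀ * √y := by
      rw [div_mul_eq_mul_div, le_div_iff₀ (Real.sqrt_pos.mpr hy₀0)]
      gcongr
    linarith
  have hKL := Sum9.KL_nonneg
  set S := ∑ p ∈ Sum9.box c₀ c₁ X, Sum9.tm (Sum9.al q₀ r₀) (Sum9.al q₁ r₁) c₀ c₁ 2 p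
  have e : S - S1 r₀ r₁ * y / (c₀ * c₁) = (c₀ * c₁ * S - S1 r₀ r₁ * y) / (c₀ * c₁) := by
    field_simp
  rw [e, abs_div, abs_of_pos (mul_pos hc0 hc1)]
  gcongr
  refine hmain.trans ?_
  calc 45 * (Sum9.KL * (r₀.divisors.card * r₁.divisors.card) * (1 + Real.log (A * (1 + y))))
      ≤ 45 * (Sum9.KL * (r₀.divisors.card * r₁.divisors.card) * ((A / √y₀ + 2) * √y)) := by gcongr
    _ = _ := by ring
end

section
/- Let C₁, C₂ > 0. There is a constant C = C(C₁, C₂) such that for all X ≥ 3, all integers 1 ≤ c₀, c₁ ≤ (log X)^{C₁}, and all positive integers d₀, d₁: ∑∑_{n₀, n₁ ≥ 1, ‖n₀c₀, n₁c₁‖ ≤ X, ‖n₀d₀, n₁d₁‖ > (log X)^{C₂}} (log ‖n₀c₀, n₁c₁‖) / (‖n₀c₀, n₁c₁‖² τ(n₀) τ(n₁)) ≤ C · (log X)/(c₀ c₁). -/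
open Finset

/-!
Write `f n = 1 / τ(n)`. All summands are nonnegative, so the condition involving `d₀, d₁` may be
dropped, and by symmetry it suffices to bound the part of the sum where `n₁ c₁ ≤ n₀ c₀ =: m`.

* `sum_invTau_div_sq_le`: since `τ(ab) ≤ τ(a) τ(b)`, the Dirichlet convolution satisfies `f * f ≤ 1`,
  hence `(∑_{n ≤ N} f(n)/n)² ≤ ∑_{k ≤ N²} 1/k ≤ 1 + 2 log N`. No Mertens-type estimate is needed.
* `sum_invTau_mul_sqrt_log_le`: writing `log x = log (x/n) + ∑_{d ∣ n} Λ(d)` and using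
  `f(dm) ≤ f(m)` with Chebyshev's bound `ψ(y) ≪ y` gives
  `log x · ∑_{n ≤ x} f(n) ≪ x ∑_{n ≤ x} f(n)/n`, hence `∑_{n ≤ x} f(n) ≪ x / √(log x)`.
* `log_mul_sum_invTau_le`: for `m ≤ X` and `c ≤ (log X)^{C₁}` this yields
  `log m · ∑_{n ≤ m/c} f(n) ≪ √(log X) · m/c`. If `m ≥ c²` then `log (m/c) ≥ (log m)/2`; if
  `m < c²` then `log m ≤ 2 log c ≪ √(log X)` and the trivial bound suffices.

Summing the inner variable `n₁ ≤ m/c₁` with the last bound leaves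
`√(log X)/(c₀ c₁) · ∑_{n₀ ≤ X} f(n₀)/n₀`, which is `≪ log X/(c₀ c₁)` by the first one.
-/

/-! ### The function `1/τ` and its logarithmic mean -/

/-- The arithmetic function `n ↦ 1 / τ(n)`, where `τ` counts divisors; its value at `0` is `0`. -/
noncomputable def invTau : ArithmeticFunction ℝ :=
  ⟨fun n => ((Nat.divisors n).card : ℝ)⁻¹, by simp⟩

lemma invTau_apply (n : ℕ) : invTau n = ((Nat.divisors n).card : ℝ)⁻¹ := rfl

lemma invTau_nonneg (n : ℕ) : 0 ≤ invTau n := by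
  rw [invTau_apply]; positivity

lemma invTau_le_one (n : ℕ) : invTau n ≤ 1 := by
  rw [invTau_apply]
  exact Nat.cast_inv_le_one _

lemma invTau_le_of_dvd {m n : ℕ} (hn : n ≠ 0) (h : m ∣ n) : invTau n ≤ invTau m := by
  rw [invTau_apply, invTau_apply]
  have hm : m ≠ 0 := fun h0 => hn (by simpa [h0] using h)
  have hpos : 0 < (Nat.divisors m).card := Finset.card_pos.mpr ⟨1, by simp [hm]⟩
  gcongr

lemma invTau_mul_le (a b : ℕ) : invTau a * invTau b ≤ invTau (a * b) := by
  rcases eq_or_ne (a * b) 0 with h | h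
  · rcases Nat.mul_eq_zero.mp h with rfl | rfl <;> simp
  rw [invTau_apply, invTau_apply, invTau_apply, ← mul_inv]
  have hpos : 0 < (Nat.divisors (a * b)).card := Finset.card_pos.mpr ⟨1, by simpa using h⟩
  have hle : (Nat.divisors (a * b)).card ≤ (Nat.divisors a).card * (Nat.divisors b).card := by
    rw [Nat.divisors_mul]
    exact Finset.card_mul_le
  have hpos' : (0 : ℝ) < ((Nat.divisors (a * b)).card : ℝ) := by exact_mod_cast hpos
  apply inv_anti₀ hpos'
  exact_mod_cast hle

/-- The Dirichlet convolution `f * f` is at most `1`: it has `τ(n)` terms, each at most `1/τ(n)`. -/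
lemma conv_invTau_le_one (n : ℕ) :
    ∑ p ∈ n.divisorsAntidiagonal, invTau p.1 * invTau p.2 ≤ 1 := by
  have h1 : ∑ p ∈ n.divisorsAntidiagonal, invTau p.1 * invTau p.2
      ≤ ∑ _p ∈ n.divisorsAntidiagonal, invTau n := by
    refine sum_le_sum fun p hp => ?_
    rw [← (Nat.mem_divisorsAntidiagonal.mp hp).1]
    exact invTau_mul_le _ _
  refine h1.trans ?_
  have hcard : (n.divisorsAntidiagonal).card = (Nat.divisors n).card := by
    rw [← Nat.map_div_right_divisors, Finset.card_map]
  rw [sum_const, nsmul_eq_mul, hcard, invTau_apply]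
  exact mul_inv_le_one

lemma sum_invTau_div_sq_le (N : ℕ) :
    (∑ n ∈ Ioc 0 N, invTau n / n) ^ 2 ≤ 1 + 2 * Real.log N := by
  have hmaps : ∀ p ∈ Ioc 0 N ×ˢ Ioc 0 N, p.1 * p.2 ∈ Icc 1 (N ^ 2) := by
    intro p hp
    simp only [mem_product, mem_Ioc, mem_Icc] at hp ⊢
    exact ⟨Nat.mul_pos hp.1.1 hp.2.1, by rw [sq]; exact Nat.mul_le_mul hp.1.2 hp.2.2⟩
  have h1 : (∑ n ∈ Ioc 0 N, invTau n / n) ^ 2 ≤ ∑ k ∈ Icc 1 (N ^ 2), (k : ℝ)⁻¹ := by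
    rw [sq, sum_mul_sum, ← sum_product', ← sum_fiberwise_of_maps_to hmaps]
    refine sum_le_sum fun k hk => ?_
    have hk0 : k ≠ 0 := by have := (mem_Icc.mp hk).1; omega
    calc ∑ p ∈ Ioc 0 N ×ˢ Ioc 0 N with p.1 * p.2 = k, invTau p.1 / p.1 * (invTau p.2 / p.2)
        = ∑ p ∈ Ioc 0 N ×ˢ Ioc 0 N with p.1 * p.2 = k,
            (k : ℝ)⁻¹ * (invTau p.1 * invTau p.2) := by
          refine sum_congr rfl fun p hp => ?_
          rw [← (mem_filter.mp hp).2]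
          push_cast
          rw [mul_inv]
          ring
      _ = (k : ℝ)⁻¹ * ∑ p ∈ Ioc 0 N ×ˢ Ioc 0 N with p.1 * p.2 = k,
            invTau p.1 * invTau p.2 := by rw [mul_sum]
      _ ≤ (k : ℝ)⁻¹ * 1 := by
          gcongr
          refine le_trans ?_ (conv_invTau_le_one k)
          refine sum_le_sum_of_subset_of_nonneg ?_ ?_
          · intro p hp
            rw [Nat.mem_divisorsAntidiagonal]
            exact ⟨(mem_filter.mp hp).2, hk0⟩
          · intro p _ _
            exact mul_nonneg (invTau_nonneg _) (invTau_nonneg _)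
      _ = (k : ℝ)⁻¹ := mul_one _
  have h2 := harmonic_le_one_add_log (N ^ 2)
  rw [harmonic_eq_sum_Icc] at h2
  push_cast at h2
  rw [Real.log_pow] at h2
  push_cast at h2
  exact h1.trans h2

/-- The logarithmic mean `∑_{n ≤ x} f(n)/n` is `O(√(log x))`, in a form valid up to `x = 1`. -/
lemma sum_invTau_div_le {x : ℝ} (hx : 1 ≤ x) :
    ∑ n ∈ Ioc 0 ⌊x⌋₊, invTau n / n ≤ √(1 + 2 * Real.log x) := by
  have hN : 1 ≤ ⌊x⌋₊ := Nat.one_le_floor_iff x |>.mpr hx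
  apply Real.le_sqrt_of_sq_le
  refine (sum_invTau_div_sq_le _).trans ?_
  have : Real.log (⌊x⌋₊ : ℝ) ≤ Real.log x :=
    Real.log_le_log (by exact_mod_cast hN) (Nat.floor_le (by linarith))
  linarith

/-! ### The mean value of `1/τ` -/

lemma sum_invTau_le {x : ℝ} (hx : 0 ≤ x) : ∑ n ∈ Ioc 0 ⌊x⌋₊, invTau n ≤ x := by
  calc ∑ n ∈ Ioc 0 ⌊x⌋₊, invTau n ≤ ∑ _n ∈ Ioc 0 ⌊x⌋₊, (1 : ℝ) :=
        sum_le_sum fun n _ => invTau_le_one n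
    _ = (⌊x⌋₊ : ℝ) := by simp
    _ ≤ x := Nat.floor_le hx

/-- Chebyshev's bound for `ψ` enters here, through `log n = ∑_{d ∣ n} Λ(d)`. -/
lemma sum_invTau_mul_log_le (N : ℕ) :
    ∑ n ∈ Ioc 0 N, invTau n * Real.log n
      ≤ (Real.log 4 + 4) * N * ∑ n ∈ Ioc 0 N, invTau n / n := by
  calc ∑ n ∈ Ioc 0 N, invTau n * Real.log n
      ≤ ∑ n ∈ Ioc 0 N, (invTau * ArithmeticFunction.vonMangoldt) n := by
        refine sum_le_sum fun n hn => ?_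
        have hn0 : n ≠ 0 := by have := (mem_Ioc.mp hn).1; omega
        rw [ArithmeticFunction.mul_apply, ← ArithmeticFunction.vonMangoldt_sum,
          ← Nat.sum_divisorsAntidiagonal' (fun _ b => ArithmeticFunction.vonMangoldt b), mul_sum]
        refine sum_le_sum fun p hp => ?_
        have hp1 := (Nat.mem_divisorsAntidiagonal.mp hp).1
        exact mul_le_mul_of_nonneg_right (invTau_le_of_dvd hn0 ⟨p.2, hp1.symm⟩)
          ArithmeticFunction.vonMangoldt_nonneg
    _ = ∑ n ∈ Ioc 0 N, invTau n * ∑ m ∈ Ioc 0 (N / n), ArithmeticFunction.vonMangoldt m :=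
        ArithmeticFunction.sum_Ioc_mul_eq_sum_sum _ _ _
    _ ≤ ∑ n ∈ Ioc 0 N, invTau n * ((Real.log 4 + 4) * ((N : ℝ) / n)) := by
        refine sum_le_sum fun n _ => ?_
        refine mul_le_mul_of_nonneg_left ?_ (invTau_nonneg n)
        have h := Chebyshev.psi_le_const_mul_self (x := (N : ℝ) / n) (by positivity)
        rw [Chebyshev.psi, Nat.floor_div_eq_div] at h
        exact h
    _ = (Real.log 4 + 4) * N * ∑ n ∈ Ioc 0 N, invTau n / n := by
        rw [mul_sum]
        exact sum_congr rfl fun n _ => by ring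

lemma log_mul_sum_invTau_le_mul {x : ℝ} (hx : 1 ≤ x) :
    Real.log x * ∑ n ∈ Ioc 0 ⌊x⌋₊, invTau n
      ≤ (Real.log 4 + 5) * x * ∑ n ∈ Ioc 0 ⌊x⌋₊, invTau n / n := by
  have hF : 0 ≤ ∑ n ∈ Ioc 0 ⌊x⌋₊, invTau n / n :=
    sum_nonneg fun n _ => div_nonneg (invTau_nonneg n) (by positivity)
  have h1 : Real.log x * ∑ n ∈ Ioc 0 ⌊x⌋₊, invTau n
      ≤ x * (∑ n ∈ Ioc 0 ⌊x⌋₊, invTau n / n) + ∑ n ∈ Ioc 0 ⌊x⌋₊, invTau n * Real.log n := by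
    rw [mul_sum, mul_sum, ← sum_add_distrib]
    refine sum_le_sum fun n hn => ?_
    have hn0 : (0 : ℝ) < n := by exact_mod_cast (mem_Ioc.mp hn).1
    have hlog : Real.log x ≤ x / n + Real.log n := by
      have := Real.log_le_self (x := x / n) (by positivity)
      rw [Real.log_div (by linarith) hn0.ne'] at this
      linarith
    calc Real.log x * invTau n ≤ (x / n + Real.log n) * invTau n :=
          mul_le_mul_of_nonneg_right hlog (invTau_nonneg n)
      _ = x * (invTau n / n) + invTau n * Real.log n := by ring
  have h2 := sum_invTau_mul_log_le ⌊x⌋₊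
  have hl4 : 0 ≤ Real.log 4 := Real.log_nonneg (by norm_num)
  have h3 : (Real.log 4 + 4) * (⌊x⌋₊ : ℝ) * ∑ n ∈ Ioc 0 ⌊x⌋₊, invTau n / n
      ≤ (Real.log 4 + 4) * x * ∑ n ∈ Ioc 0 ⌊x⌋₊, invTau n / n := by
    gcongr
    exact Nat.floor_le (by linarith)
  linarith

lemma sum_invTau_mul_sqrt_log_le {x : ℝ} (hx : 1 ≤ x) :
    √(Real.log x) * ∑ n ∈ Ioc 0 ⌊x⌋₊, invTau n ≤ 2 * (Real.log 4 + 5) * x := by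
  have hl4 : 0 ≤ Real.log 4 := Real.log_nonneg (by norm_num)
  have hl : 0 ≤ Real.log x := Real.log_nonneg hx
  have hS : 0 ≤ ∑ n ∈ Ioc 0 ⌊x⌋₊, invTau n := sum_nonneg fun n _ => invTau_nonneg n
  rcases le_total (Real.log x) 1 with h | h
  · have hs : √(Real.log x) ≤ 1 := Real.sqrt_le_one.mpr h
    calc √(Real.log x) * ∑ n ∈ Ioc 0 ⌊x⌋₊, invTau n ≤ 1 * x :=
          mul_le_mul hs (sum_invTau_le (by linarith)) hS zero_le_one
      _ ≤ 2 * (Real.log 4 + 5) * x := by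
          gcongr
          linarith
  · have hspos : 0 < √(Real.log x) := Real.sqrt_pos.mpr (by linarith)
    have hF : ∑ n ∈ Ioc 0 ⌊x⌋₊, invTau n / n ≤ 2 * √(Real.log x) := by
      refine (sum_invTau_div_le hx).trans ?_
      rw [Real.sqrt_le_left (by positivity), mul_pow, Real.sq_sqrt hl]
      linarith
    have hmain := log_mul_sum_invTau_le_mul hx
    have h2 : √(Real.log x) * (√(Real.log x) * ∑ n ∈ Ioc 0 ⌊x⌋₊, invTau n)
        ≤ √(Real.log x) * (2 * (Real.log 4 + 5) * x) := by
      calc √(Real.log x) * (√(Real.log x) * ∑ n ∈ Ioc 0 ⌊x⌋₊, invTau n)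
          = Real.log x * ∑ n ∈ Ioc 0 ⌊x⌋₊, invTau n := by
            rw [← mul_assoc, Real.mul_self_sqrt hl]
        _ ≤ (Real.log 4 + 5) * x * ∑ n ∈ Ioc 0 ⌊x⌋₊, invTau n / n := hmain
        _ ≤ (Real.log 4 + 5) * x * (2 * √(Real.log x)) := by gcongr
        _ = √(Real.log x) * (2 * (Real.log 4 + 5) * x) := by ring
    exact le_of_mul_le_mul_left h2 hspos

/-! ### The double sum -/

/-- The bound for the inner sum, uniform in `c ≤ (log X)^{C₁}` and without a lower bound on `m`. -/
lemma log_mul_sum_invTau_le {C₁ X : ℝ} (h₁ : 0 < C₁) (hX : 1 ≤ Real.log X) {m c : ℕ}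
    (hm : 1 ≤ m) (hc : 1 ≤ c) (hmX : (m : ℝ) ≤ X) (hcX : (c : ℝ) ≤ Real.log X ^ C₁) :
    Real.log m * ∑ n ∈ Ioc 0 (m / c), invTau n
      ≤ (4 * (Real.log 4 + 5) + 4 * C₁) * √(Real.log X) * ((m : ℝ) / c) := by
  have hl4 : 0 ≤ Real.log 4 := Real.log_nonneg (by norm_num)
  have hm' : (1 : ℝ) ≤ m := by exact_mod_cast hm
  have hc' : (1 : ℝ) ≤ c := by exact_mod_cast hc
  have hL : 0 ≤ Real.log m := Real.log_nonneg hm'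
  have hLc : 0 ≤ Real.log c := Real.log_nonneg hc'
  have hLX : Real.log m ≤ Real.log X := Real.log_le_log (by linarith) hmX
  have hfl : m / c = ⌊(m : ℝ) / c⌋₊ := (Nat.floor_div_eq_div m c).symm
  have hS : 0 ≤ ∑ n ∈ Ioc 0 (m / c), invTau n := sum_nonneg fun n _ => invTau_nonneg n
  have hs0 : 0 ≤ √(Real.log X) := Real.sqrt_nonneg _
  have hx0 : 0 ≤ (m : ℝ) / c := by positivity
  rcases le_total (2 * Real.log c) (Real.log m) with h | h
  · have hlx : Real.log ((m : ℝ) / c) = Real.log m - Real.log c :=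
      Real.log_div (by linarith) (by linarith)
    have hx1 : 1 ≤ (m : ℝ) / c := by
      rw [one_le_div (by linarith)]
      exact (Real.log_le_log_iff (by linarith) (by linarith)).mp (by linarith)
    have hmain := sum_invTau_mul_sqrt_log_le hx1
    rw [← hfl] at hmain
    have h2 : Real.log m ≤ √(Real.log X) * (2 * √(Real.log ((m : ℝ) / c))) := by
      calc Real.log m = √(Real.log m) * √(Real.log m) := (Real.mul_self_sqrt hL).symm
        _ ≤ √(Real.log X) * (2 * √(Real.log ((m : ℝ) / c))) := by
          gcongr
          rw [Real.sqrt_le_left (by positivity), mul_pow, Real.sq_sqrt (by linarith)]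
          linarith
    calc Real.log m * ∑ n ∈ Ioc 0 (m / c), invTau n
        ≤ √(Real.log X) * (2 * √(Real.log ((m : ℝ) / c))) * ∑ n ∈ Ioc 0 (m / c), invTau n := by
          gcongr
      _ = 2 * √(Real.log X) * (√(Real.log ((m : ℝ) / c)) * ∑ n ∈ Ioc 0 (m / c), invTau n) := by
          ring
      _ ≤ 2 * √(Real.log X) * (2 * (Real.log 4 + 5) * ((m : ℝ) / c)) := by gcongr
      _ = (4 * (Real.log 4 + 5)) * √(Real.log X) * ((m : ℝ) / c) := by ring
      _ ≤ (4 * (Real.log 4 + 5) + 4 * C₁) * √(Real.log X) * ((m : ℝ) / c) := by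
          gcongr
          linarith
  · have hlc : Real.log c ≤ 2 * C₁ * √(Real.log X) := by
      -- `log t ≤ t ^ ε / ε` with `ε = 1 / (2 C₁)`, so that `((log X) ^ C₁) ^ ε = √(log X)`.
      have h3 := Real.log_le_rpow_div (x := (c : ℝ)) (by linarith)
        (ε := 1 / (2 * C₁)) (by positivity)
      have h4 : (c : ℝ) ^ (1 / (2 * C₁)) ≤ √(Real.log X) := by
        calc (c : ℝ) ^ (1 / (2 * C₁)) ≤ (Real.log X ^ C₁) ^ (1 / (2 * C₁)) := by gcongr
          _ = √(Real.log X) := by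
            rw [← Real.rpow_mul (by linarith), Real.sqrt_eq_rpow]
            congr 1
            field_simp
      calc Real.log c ≤ (c : ℝ) ^ (1 / (2 * C₁)) / (1 / (2 * C₁)) := h3
        _ ≤ √(Real.log X) / (1 / (2 * C₁)) := by gcongr
        _ = 2 * C₁ * √(Real.log X) := by rw [div_div_eq_mul_div]; ring
    have hS2 := sum_invTau_le hx0
    rw [← hfl] at hS2
    calc Real.log m * ∑ n ∈ Ioc 0 (m / c), invTau n
        ≤ (4 * C₁ * √(Real.log X)) * ((m : ℝ) / c) := by
          refine mul_le_mul (by linarith) hS2 hS (by positivity)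
      _ ≤ (4 * (Real.log 4 + 5) + 4 * C₁) * √(Real.log X) * ((m : ℝ) / c) := by
          gcongr
          linarith

/-- The part of the double sum where the first coordinate `n a` attains the maximum. -/
lemma half_sum_le {C₁ X : ℝ} (h₁ : 0 < C₁) (hX3 : 3 ≤ X) (hX : 1 ≤ Real.log X) {a b : ℕ}
    (ha : 1 ≤ a) (hb : 1 ≤ b) (hbX : (b : ℝ) ≤ Real.log X ^ C₁) :
    ∑ n ∈ Ioc 0 ⌊X⌋₊, ∑ k ∈ Ioc 0 ⌊X⌋₊,
      (if ((n * a : ℕ) : ℝ) ≤ X ∧ k * b ≤ n * a then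
        Real.log ((n * a : ℕ) : ℝ) / ((n * a : ℕ) : ℝ) ^ 2 * invTau n * invTau k else 0)
      ≤ 2 * (4 * (Real.log 4 + 5) + 4 * C₁) * Real.log X / ((a : ℝ) * b) := by
  have hl4 : 0 ≤ Real.log 4 := Real.log_nonneg (by norm_num)
  have ha' : (1 : ℝ) ≤ a := by exact_mod_cast ha
  have hb' : (1 : ℝ) ≤ b := by exact_mod_cast hb
  set K : ℝ := 4 * (Real.log 4 + 5) + 4 * C₁ with hK
  have hK0 : 0 ≤ K := by positivity
  have hF : ∑ n ∈ Ioc 0 ⌊X⌋₊, invTau n / n ≤ 2 * √(Real.log X) := by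
    refine (sum_invTau_div_le (by linarith)).trans ?_
    rw [Real.sqrt_le_left (by positivity), mul_pow, Real.sq_sqrt (by linarith)]
    linarith
  calc _ ≤ ∑ n ∈ Ioc 0 ⌊X⌋₊, K * √(Real.log X) / ((a : ℝ) * b) * (invTau n / n) := by
        refine sum_le_sum fun n hn => ?_
        have hn1 : 1 ≤ n := (mem_Ioc.mp hn).1
        have hn' : (1 : ℝ) ≤ n := by exact_mod_cast hn1
        have hm1 : 1 ≤ n * a := Nat.mul_pos hn1 ha
        have hm' : (1 : ℝ) ≤ ((n * a : ℕ) : ℝ) := by exact_mod_cast hm1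
        have hL : 0 ≤ Real.log ((n * a : ℕ) : ℝ) := Real.log_nonneg hm'
        have hfn := invTau_nonneg n
        by_cases hmX : ((n * a : ℕ) : ℝ) ≤ X
        · have hin := log_mul_sum_invTau_le h₁ hX hm1 hb hmX hbX
          rw [← hK] at hin
          calc _ ≤ ∑ k ∈ Ioc 0 (n * a / b),
                Real.log ((n * a : ℕ) : ℝ) / ((n * a : ℕ) : ℝ) ^ 2 * invTau n * invTau k := by
                rw [← sum_filter]
                refine sum_le_sum_of_subset_of_nonneg ?_ ?_
                · intro k hk
                  simp only [mem_filter, mem_Ioc] at hk ⊢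
                  exact ⟨hk.1.1, (Nat.le_div_iff_mul_le hb).mpr hk.2.2⟩
                · intro k _ _
                  have := invTau_nonneg k
                  positivity
            _ = (invTau n / ((n * a : ℕ) : ℝ) ^ 2) *
                  (Real.log ((n * a : ℕ) : ℝ) * ∑ k ∈ Ioc 0 (n * a / b), invTau k) := by
                rw [← mul_sum]; ring
            _ ≤ (invTau n / ((n * a : ℕ) : ℝ) ^ 2) *
                  (K * √(Real.log X) * (((n * a : ℕ) : ℝ) / b)) := by gcongr
            _ = K * √(Real.log X) / ((a : ℝ) * b) * (invTau n / n) := by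
                push_cast
                field_simp
        · simp only [hmX, false_and, if_false, sum_const_zero]
          positivity
    _ = K * √(Real.log X) / ((a : ℝ) * b) * ∑ n ∈ Ioc 0 ⌊X⌋₊, invTau n / n := by rw [mul_sum]
    _ ≤ K * √(Real.log X) / ((a : ℝ) * b) * (2 * √(Real.log X)) := by gcongr
    _ = 2 * K * (√(Real.log X) * √(Real.log X)) / ((a : ℝ) * b) := by ring
    _ = 2 * K * Real.log X / ((a : ℝ) * b) := by rw [Real.mul_self_sqrt (by linarith)]

open scoped Classical in
theorem statement10 (C₁ C₂ : ℝ) (h₁ : 0 < C₁) (h₂ : 0 < C₂) :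
    ∃ C : ℝ, ∀ X : ℝ, 3 ≤ X →
      ∀ c₀ c₁ : ℕ, 1 ≤ c₀ → 1 ≤ c₁ →
        (c₀ : ℝ) ≤ (Real.log X) ^ C₁ → (c₁ : ℝ) ≤ (Real.log X) ^ C₁ →
      ∀ d₀ d₁ : ℕ, 0 < d₀ → 0 < d₁ →
      (∑ p ∈ (Finset.Icc 1 ⌊X⌋₊ ×ˢ Finset.Icc 1 ⌊X⌋₊).filter
            (fun p : ℕ × ℕ => ((max (p.1 * c₀) (p.2 * c₁) : ℕ) : ℝ) ≤ X ∧
              (Real.log X) ^ C₂ < ((max (p.1 * d₀) (p.2 * d₁) : ℕ) : ℝ)),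
          Real.log ((max (p.1 * c₀) (p.2 * c₁) : ℕ) : ℝ) /
            (((max (p.1 * c₀) (p.2 * c₁) : ℕ) : ℝ) ^ 2 *
              ((Nat.divisors p.1).card : ℝ) * ((Nat.divisors p.2).card : ℝ)))
        ≤ C * Real.log X / ((c₀ : ℝ) * (c₁ : ℝ)) := by
  refine ⟨2 * (2 * (4 * (Real.log 4 + 5) + 4 * C₁)), ?_⟩
  intro X hX3 c₀ c₁ hc₀ hc₁ hc₀X hc₁X d₀ d₁ _ _
  have hX : 1 ≤ Real.log X := by
    rw [Real.le_log_iff_exp_le (by linarith)]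
    linarith [Real.exp_one_lt_d9]
  have hA := half_sum_le h₁ hX3 hX hc₀ hc₁ hc₁X
  have hB := half_sum_le h₁ hX3 hX hc₁ hc₀ hc₀X
  rw [sum_comm] at hB
  have hIcc : Finset.Icc 1 ⌊X⌋₊ = Finset.Ioc 0 ⌊X⌋₊ := by
    ext n; simp only [mem_Icc, mem_Ioc]; omega
  have hnn : ∀ (P : Prop) [Decidable P] (m n k : ℕ),
      0 ≤ (if P then Real.log (m : ℝ) / (m : ℝ) ^ 2 * invTau n * invTau k else 0) := by
    intro P _ m n k
    have h1 := invTau_nonneg n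
    have h2 := invTau_nonneg k
    have h3 := Real.log_natCast_nonneg m
    split_ifs <;> positivity
  rw [hIcc]
  -- The two halves overlap on `n₀ c₀ = n₁ c₁`, which only costs an inequality.
  refine (?_ : _ ≤ ∑ p ∈ Ioc 0 ⌊X⌋₊ ×ˢ Ioc 0 ⌊X⌋₊,
    ((if ((p.1 * c₀ : ℕ) : ℝ) ≤ X ∧ p.2 * c₁ ≤ p.1 * c₀ then
        Real.log ((p.1 * c₀ : ℕ) : ℝ) / ((p.1 * c₀ : ℕ) : ℝ) ^ 2 * invTau p.1 * invTau p.2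
        else 0) +
      (if ((p.2 * c₁ : ℕ) : ℝ) ≤ X ∧ p.1 * c₀ ≤ p.2 * c₁ then
        Real.log ((p.2 * c₁ : ℕ) : ℝ) / ((p.2 * c₁ : ℕ) : ℝ) ^ 2 * invTau p.2 * invTau p.1
        else 0))).trans ?_
  · refine (sum_le_sum fun p hp => ?_).trans (sum_le_sum_of_subset_of_nonneg
      (filter_subset _ _) fun p _ _ => add_nonneg (hnn _ _ _ _) (hnn _ _ _ _))
    have hmX := (mem_filter.mp hp).2.1
    rcases le_total (p.2 * c₁) (p.1 * c₀) with hle | hle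
    · rw [max_eq_left hle] at hmX ⊢
      refine le_trans (le_of_eq ?_) (le_add_of_nonneg_right (hnn _ _ _ _))
      rw [if_pos ⟨hmX, hle⟩, invTau_apply, invTau_apply]
      simp only [div_eq_mul_inv, mul_inv, mul_assoc]
    · rw [max_eq_right hle] at hmX ⊢
      refine le_trans (le_of_eq ?_) (le_add_of_nonneg_left (hnn _ _ _ _))
      rw [if_pos ⟨hmX, hle⟩, invTau_apply, invTau_apply]
      simp only [div_eq_mul_inv, mul_inv]
      ring
  · rw [sum_add_distrib, sum_product, sum_product]
    refine (add_le_add hA hB).trans (le_of_eq ?_)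
    rw [mul_comm (c₁ : ℝ) (c₀ : ℝ)]
    ring
end
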